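/- arXiv:math/0304462 — 2 statements merged into one kernel-verified Lean document; each statement's English description precedes it below -/
import Mathlib

section
/- For every d ≥ 2 and every i with 0 ≤ i ≤ d-1, there exist constants c_1, c_2 > 0 depending only on d such that for all sufficiently large r, c_1 · r^{d(d-1)/(d+1)} ≤ f_i(I(rB^d)) ≤ c_2 · r^{d(d-1)/(d+1)}. -/
open MeasureTheory Set Filter
noncomputable section

/-- Euclidean space `ℝ^d`. -/
abbrev E (d : ℕ) := EuclideanSpace ℝ (Fin d)

/-- The integer lattice `ℤ^d` viewed inside `ℝ^d`. -/
def intPoints (d : ℕ) : Set (E d) := {v | ∀ i, ∃ z : ℤ, v i = z}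

/-- The integer convex hull `I(K) = conv(ℤ^d ∩ K)`. -/
def integerHull (d : ℕ) (K : Set (E d)) : Set (E d) := convexHull ℝ (intPoints d ∩ K)

/-- `f₀(P)`: the number of vertices (extreme points) of `P`. -/
def numVertices (d : ℕ) (P : Set (E d)) : ℕ := (Set.extremePoints ℝ P).ncard

/-- `f_i(P)`: the number of `i`-dimensional (exposed) faces of `P`. -/
def numFaces (d i : ℕ) (P : Set (E d)) : ℕ :=
  Set.ncard {F : Set (E d) | F.Nonempty ∧ IsExposed ℝ P F ∧
    Module.finrank ℝ (vectorSpan ℝ F) = i}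

/-!
Faces are counted through the polar body of the integer points of the ball.  A facet with outer
normal `u` contains `d` linearly independent integer points, the rows of an integer matrix `A`
with `A u = (1, …, 1)`.

*Upper bound.*  The number of `i`-faces is at most the number of facets of the configuration of
sums of `2 (i + 1)` integer points of the ball that do not all lie on a common `i`-face.  The cones
over these facets, spanned by the rows of `A`, have disjoint interiors, so the images `t A` of a
small cube are disjoint subsets of a cube of side `2 R`, which bounds `∑ |det A|`.  Since
`det A • u` is an integer vector, the facets with small `det A` are few as well.

*Lower bound.*  By the flatness theorem, either the thin cap of the ball in a direction `ω`
contains an integer point or `ω` is nearly orthogonal to a short integer vector.  The second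
alternative fails for at least half of the directions of a well-separated family of rational
directions, and near each of the remaining ones there is a face of the integer hull.
-/

section ExposedFaces

variable {F : Type*} [AddCommGroup F] [Module ℝ F]

lemma vectorSpan_convexHull (W : Set F) : vectorSpan ℝ (convexHull ℝ W) = vectorSpan ℝ W := by
  rw [← direction_affineSpan, affineSpan_convexHull, direction_affineSpan]

lemma exists_affineSpan_range_eq {W : Set F} {i : ℕ} (hW : W.Finite) (hne : W.Nonempty)
    (hi : Module.finrank ℝ (vectorSpan ℝ W) = i) :
    ∃ a : Fin (i + 1) → F, (∀ k, a k ∈ W) ∧ affineSpan ℝ (range a) = affineSpan ℝ W := by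
  obtain ⟨t, htW, hspan, hind⟩ := exists_affineIndependent ℝ F W
  have : Fintype t := (hW.subset htW).fintype
  have htne : t.Nonempty := (affineSpan_nonempty ℝ).1 (hspan ▸ (affineSpan_nonempty ℝ).2 hne)
  have hcard : Fintype.card t = i + 1 := by
    have : Nonempty t := htne.to_subtype
    have h := hind.finrank_vectorSpan_add_one
    rw [Subtype.range_coe, ← direction_affineSpan, hspan, direction_affineSpan, hi] at h
    exact h.symm
  let e : Fin (i + 1) ≃ t := (Fintype.equivFinOfCardEq hcard).symm
  refine ⟨fun k ↦ e k, fun k ↦ htW (e k).2, ?_⟩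
  have hrange : range (fun k ↦ (e k : F)) = t := by
    rw [← Function.comp_def Subtype.val e, e.surjective.range_comp, Subtype.range_coe]
  rw [hrange, hspan]

variable [TopologicalSpace F]

/-- The nonempty exposed faces of dimension `i` of a set `P`. The set need not be convex: for a
point set `V` these are the traces on `V` of the `i`-faces of `convexHull ℝ V`, see
`ncard_exposedFaces_convexHull`. -/
def exposedFaces (P : Set F) (i : ℕ) : Set (Set F) :=
  {W | W.Nonempty ∧ IsExposed ℝ P W ∧ Module.finrank ℝ (vectorSpan ℝ W) = i}

lemma finite_exposedFaces {V : Set F} (hV : V.Finite) (i : ℕ) : (exposedFaces V i).Finite :=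
  hV.finite_subsets.subset fun _ hW ↦ hW.2.1.subset

lemma toExposed_convexHull (l : StrongDual ℝ F) (V : Set F) :
    l.toExposed (convexHull ℝ V) = convexHull ℝ (l.toExposed V) := by
  refine Subset.antisymm ?_ fun x hx ↦ ?_
  · rintro x ⟨hxV, hmax⟩
    obtain ⟨ι, t, w, z, hw, hw1, hz, rfl⟩ := (convexHull_eq V).subset hxV
    let x := t.centerMass w z
    have hle (i) (hi : i ∈ t) : l (z i) ≤ l x := hmax _ (subset_convexHull ℝ V (hz i hi))
    have hdeficit : ∑ i ∈ t, w i * (l x - l (z i)) = 0 := by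
      have hlx : l x = ∑ i ∈ t, w i * l (z i) := by
        simp [x, Finset.centerMass_eq_of_sum_1 t z hw1]
      simp [mul_sub, ← Finset.sum_mul, hw1, ← hlx]
    have hsupport (i) (hi : i ∈ t) (hwi : w i ≠ 0) : z i ∈ l.toExposed V := by
      have h := (Finset.sum_eq_zero_iff_of_nonneg fun j hj ↦
        mul_nonneg (hw j hj) (sub_nonneg.2 (hle j hj))).1 hdeficit i hi
      have hmaxi : l x = l (z i) := sub_eq_zero.1 ((mul_eq_zero.1 h).resolve_left hwi)
      exact ⟨hz i hi, fun y hy ↦ hmaxi ▸ hmax y (subset_convexHull ℝ V hy)⟩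
    change t.centerMass w z ∈ _
    rw [← Finset.centerMass_filter_ne_zero z]
    refine Finset.centerMass_mem_convexHull _ (fun i hi ↦ hw i (Finset.mem_filter.1 hi).1) ?_
      fun i hi ↦ hsupport i (Finset.mem_filter.1 hi).1 (Finset.mem_filter.1 hi).2
    rw [Finset.sum_filter_ne_zero, hw1]
    exact one_pos
  · obtain ⟨z, hzV, hz⟩ := convexHull_nonempty_iff.1 ⟨x, hx⟩
    have hlx : l x = l z :=
      convexHull_min (fun y hy ↦ (hz y hy.1).antisymm (hy.2 z hzV))
        (convex_hyperplane l.toLinearMap.isLinear (l z)) hx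
    refine ⟨convexHull_mono (fun _ hy ↦ hy.1) hx, fun y hy ↦ ?_⟩
    rw [hlx]
    exact convexHull_min hz (convex_halfSpace_le l.toLinearMap.isLinear (l z)) hy

lemma inter_affineSpan_of_isExposed {V W : Set F} (hW : IsExposed ℝ V W) (hne : W.Nonempty) :
    V ∩ affineSpan ℝ W = W := by
  refine Subset.antisymm ?_ fun x hx ↦ ⟨hW.subset hx, subset_affineSpan ℝ W hx⟩
  obtain ⟨l, hl⟩ := hW hne
  obtain ⟨w, hw⟩ := hne
  have hconst : vectorSpan ℝ W ≤ LinearMap.ker l.toLinearMap := by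
    refine Submodule.span_le.2 ?_
    rintro _ ⟨x, hx, y, hy, rfl⟩
    rw [hl] at hx hy
    simpa [sub_eq_zero] using (hy.2 x hx.1).antisymm (hx.2 y hy.1)
  rintro x ⟨hxV, hx⟩
  have hlx : l x = l w := by
    have := hconst (AffineSubspace.vsub_mem_direction hx (subset_affineSpan ℝ W hw)
      |> (direction_affineSpan ℝ W).le)
    simpa [sub_eq_zero] using this
  rw [hl] at hw ⊢
  exact ⟨hxV, fun y hy ↦ hlx ▸ hw.2 y hy⟩

lemma eq_of_affineSpan_eq_of_isExposed {V W W' : Set F} (hW : IsExposed ℝ V W)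
    (hne : W.Nonempty) (hW' : IsExposed ℝ V W') (hne' : W'.Nonempty)
    (h : affineSpan ℝ W = affineSpan ℝ W') : W = W' := by
  rw [← inter_affineSpan_of_isExposed hW hne, h, inter_affineSpan_of_isExposed hW' hne']

lemma exposedFaces_convexHull (V : Set F) (i : ℕ) :
    exposedFaces (convexHull ℝ V) i = convexHull ℝ '' exposedFaces V i := by
  ext W
  constructor
  · rintro ⟨hne, hW, hi⟩
    obtain ⟨l, rfl⟩ : ∃ l : StrongDual ℝ F, W = l.toExposed (convexHull ℝ V) := hW hne
    rw [toExposed_convexHull] at hne hi ⊢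
    rw [vectorSpan_convexHull] at hi
    exact ⟨_, ⟨convexHull_nonempty_iff.1 hne, ContinuousLinearMap.toExposed.isExposed, hi⟩, rfl⟩
  · rintro ⟨W, ⟨hne, hW, hi⟩, rfl⟩
    obtain ⟨l, rfl⟩ : ∃ l : StrongDual ℝ F, W = l.toExposed V := hW hne
    refine ⟨hne.convexHull, ?_, by rwa [vectorSpan_convexHull]⟩
    rw [← toExposed_convexHull]
    exact ContinuousLinearMap.toExposed.isExposed

lemma ncard_exposedFaces_convexHull (V : Set F) (i : ℕ) :
    (exposedFaces (convexHull ℝ V) i).ncard = (exposedFaces V i).ncard := by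
  rw [exposedFaces_convexHull]
  refine InjOn.ncard_image fun W hW W' hW' h ↦ ?_
  refine eq_of_affineSpan_eq_of_isExposed hW.2.1 hW.1 hW'.2.1 hW'.1 ?_
  rw [← affineSpan_convexHull W, ← affineSpan_convexHull W', show convexHull ℝ W = _ from h]

/-- The functional exposing `W` in `V`, tilted slightly by the one exposing `U` in `W`, exposes `U`
in `V`. -/
lemma isExposed_trans_of_finite {V W U : Set F} (hV : V.Finite) (hW : IsExposed ℝ V W)
    (hU : IsExposed ℝ W U) : IsExposed ℝ V U := by
  rintro ⟨u, hu⟩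
  obtain ⟨l, rfl⟩ : ∃ l : StrongDual ℝ F, W = l.toExposed V := hW ⟨u, hU.subset hu⟩
  obtain ⟨g, rfl⟩ : ∃ g : StrongDual ℝ F, U = g.toExposed (l.toExposed V) := hU ⟨u, hu⟩
  obtain ⟨⟨huV, hlu⟩, -⟩ := hu
  have hsmall : ∀ y ∈ V, ∀ᶠ s : ℝ in nhdsWithin 0 (Ioi 0),
      l y < l u → (l + s • g) y < (l + s • g) u := by
    intro y _
    by_cases hy : l y < l u
    · have hcont (x : F) : Continuous fun s : ℝ ↦ (l + s • g) x := by
        simp only [add_apply, smul_apply]; fun_prop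
      refine ((hcont y).continuousWithinAt.eventually_lt (hcont u).continuousWithinAt ?_).mono
        fun s hs _ ↦ hs
      simpa using hy
    · exact .of_forall fun s h ↦ absurd h hy
  obtain ⟨s, hs, hs0 : 0 < s⟩ :=
    (((eventually_all_finite hV).2 hsmall).and self_mem_nhdsWithin).exists
  refine ⟨l + s • g, Subset.antisymm ?_ ?_⟩
  · rintro x ⟨hx, hgx⟩
    refine ⟨hx.1, fun y hy ↦ ?_⟩
    have hux : (l + s • g) u ≤ (l + s • g) x :=
      add_le_add (hx.2 u huV) (mul_le_mul_of_nonneg_left (hgx u ⟨huV, hlu⟩) hs0.le)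
    rcases (hlu y hy).lt_or_eq with hlt | heq
    · exact (hs y hy hlt).le.trans hux
    · have hyW : y ∈ l.toExposed V := ⟨hy, heq ▸ hlu⟩
      exact add_le_add (hx.2 y hy) (mul_le_mul_of_nonneg_left (hgx y hyW) hs0.le)
  · rintro x ⟨hxV, hx⟩
    have hlx : l x = l u :=
      (hlu x hxV).eq_of_not_lt fun hlt ↦ (hs x hxV hlt).not_ge (hx u huV)
    refine ⟨⟨hxV, hlx ▸ hlu⟩, fun y hy ↦ ?_⟩
    have hly : l y = l x := hlx ▸ (hlu y hy.1).antisymm (hy.2 u huV)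
    have := hx y hy.1
    simp only [add_apply, smul_apply, hly, smul_eq_mul,
      add_le_add_iff_left] at this
    exact le_of_mul_le_mul_left this hs0

end ExposedFaces

section Polar

open scoped RealInnerProductSpace

variable {H : Type*} [NormedAddCommGroup H] [InnerProductSpace ℝ H]

/-- The one-sided polar of a set `X`; unlike `LinearMap.polar`, it takes no absolute values. -/
def polarSet (X : Set H) : Set H := {u | ∀ x ∈ X, ⟪u, x⟫ ≤ 1}

/-- The points of `X` on the hyperplane `⟪u, ·⟫ = 1`. -/
def contact (X : Set H) (u : H) : Set H := {x ∈ X | ⟪u, x⟫ = 1}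

/-- The normals of the facets of `convexHull ℝ X` not passing through the origin, scaled so that the
facet lies on `⟪u, ·⟫ = 1`. For finite `X` these are the vertices of `polarSet X`. -/
def facetNormals (X : Set H) : Set H :=
  {u ∈ polarSet X | Submodule.span ℝ (contact X u) = ⊤}

lemma polarSet_anti {X Y : Set H} (h : X ⊆ Y) : polarSet Y ⊆ polarSet X :=
  fun _ hu x hx ↦ hu x (h hx)

lemma zero_mem_polarSet (X : Set H) : (0 : H) ∈ polarSet X := fun x _ ↦ by simp

lemma polarSet_eq_biInter (X : Set H) : polarSet X = ⋂ x ∈ X, {u | ⟪u, x⟫ ≤ 1} := by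
  ext u; simp [polarSet]

lemma convex_polarSet (X : Set H) : Convex ℝ (polarSet X) := by
  rw [polarSet_eq_biInter]
  exact convex_iInter₂ fun x _ ↦
    convex_halfSpace_le ⟨fun a b ↦ inner_add_left a b x, fun c a ↦ real_inner_smul_left a x c⟩ 1

lemma isClosed_polarSet (X : Set H) : IsClosed (polarSet X) := by
  rw [polarSet_eq_biInter]
  exact isClosed_biInter fun x _ ↦ isClosed_le (by fun_prop) continuous_const

lemma isBounded_of_abs_inner_le [CompleteSpace H] {U Y : Set H}
    (hY : Submodule.span ℝ Y = ⊤) (h : ∀ y ∈ Y, ∃ C, ∀ u ∈ U, |⟪u, y⟫| ≤ C) :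
    Bornology.IsBounded U := by
  have hpointwise (y : H) : ∃ C, ∀ u : U, ‖innerSL ℝ (u : H) y‖ ≤ C := by
    simp only [innerSL_apply_apply, Real.norm_eq_abs, Subtype.forall]
    have hy : y ∈ Submodule.span ℝ Y := hY ▸ Submodule.mem_top
    induction hy using Submodule.span_induction with
    | mem y hy => exact h y hy
    | zero => exact ⟨0, by simp⟩
    | add y z _ _ ihy ihz =>
      obtain ⟨C, hC⟩ := ihy
      obtain ⟨D, hD⟩ := ihz
      refine ⟨C + D, fun u hu ↦ ?_⟩
      rw [inner_add_right]
      exact (abs_add_le _ _).trans (add_le_add (hC u hu) (hD u hu))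
    | smul t y _ ih =>
      obtain ⟨C, hC⟩ := ih
      refine ⟨|t| * C, fun u hu ↦ ?_⟩
      rw [real_inner_smul_right, abs_mul]
      exact mul_le_mul_of_nonneg_left (hC u hu) (abs_nonneg t)
  obtain ⟨C, hC⟩ := banach_steinhaus hpointwise
  exact isBounded_iff_forall_norm_le.2
    ⟨C, fun u hu ↦ by simpa only [innerSL_apply_norm] using hC ⟨u, hu⟩⟩

lemma isBounded_polarSet_of_neg_mem [CompleteSpace H] {X : Set H} (hneg : ∀ x ∈ X, -x ∈ X)
    (hX : Submodule.span ℝ X = ⊤) : Bornology.IsBounded (polarSet X) := by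
  refine isBounded_of_abs_inner_le hX fun x hx ↦ ⟨1, fun u hu ↦ abs_le.2 ⟨?_, hu x hx⟩⟩
  have := hu (-x) (hneg x hx)
  rw [inner_neg_right] at this
  linarith

lemma isBounded_polarSet_range_of_sum_eq_zero [CompleteSpace H] {ι : Type*} [Fintype ι]
    {x : ι → H} (hsum : ∑ i, x i = 0) (hx : Submodule.span ℝ (range x) = ⊤) :
    Bornology.IsBounded (polarSet (range x)) := by
  refine isBounded_of_abs_inner_le hx ?_
  rintro _ ⟨i, rfl⟩
  refine ⟨Fintype.card ι, fun u hu ↦ ?_⟩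
  have hle (j : ι) : ⟪u, x j⟫ ≤ 1 := hu _ (mem_range_self j)
  have hslack : 1 - ⟪u, x i⟫ ≤ Fintype.card ι := by
    calc 1 - ⟪u, x i⟫ ≤ ∑ j, (1 - ⟪u, x j⟫) :=
          Finset.single_le_sum (f := fun j ↦ 1 - ⟪u, x j⟫) (fun j _ ↦ sub_nonneg.2 (hle j))
            (Finset.mem_univ i)
      _ = Fintype.card ι := by simp [← inner_sum, hsum]
  have hcard : (1 : ℝ) ≤ Fintype.card ι := by exact_mod_cast Fintype.card_pos_iff.2 ⟨i⟩
  exact abs_le.2 ⟨by linarith, (hle i).trans hcard⟩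

lemma ext_inner_of_span_eq_top {Y : Set H} (hY : Submodule.span ℝ Y = ⊤) {u v : H}
    (h : ∀ y ∈ Y, ⟪u, y⟫ = ⟪v, y⟫) : u = v := by
  have : innerSL ℝ u = innerSL ℝ v :=
    ContinuousLinearMap.ext_on (by rw [hY]; exact dense_univ) fun y hy ↦ by simpa using h y hy
  exact (innerSL_inj (𝕜 := ℝ)).1 this

lemma finite_facetNormals {X : Set H} (hX : X.Finite) : (facetNormals X).Finite := by
  refine Finite.of_finite_image (f := contact X)
    (hX.finite_subsets.subset ?_) fun u hu v _ huv ↦ ?_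
  · rintro _ ⟨u, -, rfl⟩
    exact fun x hx ↦ hx.1
  · refine ext_inner_of_span_eq_top hu.2 fun x hx ↦ hx.2.trans (Eq.symm ?_)
    exact (huv ▸ hx : x ∈ contact X v).2

lemma extremePoints_polarSet_subset [FiniteDimensional ℝ H] {X : Set H} (hX : X.Finite) :
    (polarSet X).extremePoints ℝ ⊆ facetNormals X := by
  rintro u ⟨hu, hext⟩
  refine ⟨hu, Submodule.orthogonal_eq_bot_iff.1 ((Submodule.eq_bot_iff _).2 fun v hv ↦ ?_)⟩
  have hmem (ε : ℝ) : ∀ᶠ s : ℝ in nhdsWithin 0 (Ioi 0), u + (s * ε) • v ∈ polarSet X := by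
    refine (eventually_all_finite hX).2 fun x hx ↦ ?_
    rcases (hu x hx).lt_or_eq with hlt | heq
    · have hcont : Continuous fun s : ℝ ↦ ⟪u + (s * ε) • v, x⟫ := by fun_prop
      exact (hcont.continuousWithinAt.eventually_lt_const (u := 1) (by simpa using hlt)).mono
        fun _ h ↦ h.le
    · have hvx : ⟪v, x⟫ = 0 :=
        Submodule.inner_left_of_mem_orthogonal
          (Submodule.subset_span (s := contact X u) ⟨hx, heq⟩) hv
      exact .of_forall fun s ↦ by simp [inner_add_left, real_inner_smul_left, hvx, heq]
  obtain ⟨s, ⟨hplus, hminus⟩, hs : 0 < s⟩ :=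
    (((hmem 1).and (hmem (-1))).and self_mem_nhdsWithin).exists
  have : u + (s * 1) • v = u :=
    hext hplus hminus ⟨1 / 2, 1 / 2, by norm_num, by norm_num, by norm_num, by module⟩
  simpa [hs.ne'] using this

lemma exists_facetNormal [FiniteDimensional ℝ H] {X : Set H} (hX : X.Finite)
    (hb : Bornology.IsBounded (polarSet X)) {w : H} (hw : w ∈ polarSet X) (y : H) :
    ∃ u ∈ facetNormals X, ⟪w, y⟫ ≤ ⟪u, y⟫ := by
  have hcpt : IsCompact (polarSet X) :=
    Metric.isCompact_of_isClosed_isBounded (isClosed_polarSet X) hb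
  set M := (innerSL ℝ y).toExposed (polarSet X)
  have hM : IsExposed ℝ (polarSet X) M := ContinuousLinearMap.toExposed.isExposed
  have hne : M.Nonempty := by
    obtain ⟨u, hu, hmax⟩ := hcpt.exists_isMaxOn ⟨w, hw⟩ (innerSL ℝ y).continuous.continuousOn
    exact ⟨u, hu, fun z hz ↦ hmax hz⟩
  obtain ⟨u, hu⟩ := (hM.isCompact hcpt).extremePoints_nonempty hne
  refine ⟨u, extremePoints_polarSet_subset hX
    (hM.isExtreme.extremePoints_subset_extremePoints hu), ?_⟩
  simpa [real_inner_comm y] using (extremePoints_subset hu).2 w hw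

lemma contact_eq_toExposed {X : Set H} {u : H} (hu : u ∈ polarSet X)
    (hne : (contact X u).Nonempty) : contact X u = (innerSL ℝ u).toExposed X := by
  obtain ⟨x₀, hx₀, hux₀⟩ := hne
  ext x
  refine ⟨fun hx ↦ ⟨hx.1, fun y hy ↦ ?_⟩, fun hx ↦ ⟨hx.1, (hu x hx.1).antisymm ?_⟩⟩
  · simpa [hx.2] using hu y hy
  · simpa [hux₀] using hx.2 x₀ hx₀

lemma vectorSpan_eq_orthogonal_of_inner_eq_one {W : Set H} {u : H} (hW : ∀ x ∈ W, ⟪u, x⟫ = 1)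
    (hne : W.Nonempty) (hspan : Submodule.span ℝ W = ⊤) : vectorSpan ℝ W = (ℝ ∙ u)ᗮ := by
  obtain ⟨x₀, hx₀⟩ := hne
  refine le_antisymm (Submodule.span_le.2 ?_) fun x hx ↦ ?_
  · rintro _ ⟨x, hx, y, hy, rfl⟩
    simp [Submodule.mem_orthogonal_singleton_iff_inner_right, inner_sub_right, hW x hx, hW y hy]
  · have hproj : ∀ z ∈ Submodule.span ℝ W, z - ⟪u, z⟫ • x₀ ∈ vectorSpan ℝ W := fun z hz ↦ by
      induction hz using Submodule.span_induction with
      | mem z hz => simpa [hW z hz] using vsub_mem_vectorSpan ℝ hz hx₀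
      | zero => simp
      | add y z _ _ ihy ihz =>
        convert add_mem ihy ihz using 1
        rw [inner_add_right]
        module
      | smul t z _ ih =>
        convert Submodule.smul_mem _ t ih using 1
        rw [real_inner_smul_right]
        module
    simpa [Submodule.mem_orthogonal_singleton_iff_inner_right.1 hx] using
      hproj x (hspan ▸ Submodule.mem_top)

lemma contact_mem_exposedFaces {X : Set H} {n : ℕ}
    (hn : Module.finrank ℝ H = n + 1) {u : H} (hu : u ∈ facetNormals X) :
    contact X u ∈ exposedFaces X n := by
  have : Nontrivial H := Module.nontrivial_of_finrank_pos (R := ℝ) (by lia)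
  have hne : (contact X u).Nonempty := nonempty_iff_ne_empty.2 fun h ↦ by
    simpa [h] using hu.2
  have hu0 : u ≠ 0 := by
    rintro rfl
    obtain ⟨x, hx⟩ := hne
    simpa using hx.2
  refine ⟨hne, ?_, ?_⟩
  · rw [contact_eq_toExposed hu.1 hne]
    exact ContinuousLinearMap.toExposed.isExposed
  · rw [vectorSpan_eq_orthogonal_of_inner_eq_one (fun x hx ↦ hx.2) hne hu.2]
    have : Fact (Module.finrank ℝ H = n + 1) := ⟨hn⟩
    exact Submodule.finrank_orthogonal_span_singleton hu0

lemma image_add_const_mem_exposedFaces {S : Submodule ℝ H} [S.HasOrthogonalProjection] (c : H)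
    {X U : Set S} {k : ℕ} (hU : U ∈ exposedFaces X k) :
    (fun s : S ↦ (s : H) + c) '' U ∈ exposedFaces ((fun s : S ↦ (s : H) + c) '' X) k := by
  obtain ⟨hne, hexp, hk⟩ := hU
  refine ⟨hne.image _, ?_, ?_⟩
  · obtain ⟨l, rfl⟩ : ∃ l : StrongDual ℝ S, U = l.toExposed X := hexp hne
    refine fun _ ↦ ⟨l.comp S.orthogonalProjectionOnto, ?_⟩
    ext z
    constructor
    · rintro ⟨s, ⟨hs, hmax⟩, rfl⟩
      refine ⟨⟨s, hs, rfl⟩, ?_⟩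
      rintro _ ⟨t, ht, rfl⟩
      simpa using hmax t ht
    · rintro ⟨⟨s, hs, rfl⟩, hmax⟩
      exact ⟨s, ⟨hs, fun t ht ↦ by simpa using hmax _ ⟨t, ht, rfl⟩⟩, rfl⟩
  · let f : S →ᵃ[ℝ] H := S.subtype.toAffineMap + AffineMap.const ℝ S c
    have hlinear : f.linear = S.subtype := by simp [f]
    change Module.finrank ℝ (vectorSpan ℝ (f '' U)) = k
    rw [← AffineMap.map_vectorSpan, hlinear, Submodule.finrank_map_subtype_eq, hk]

lemma exists_sub_mem_vectorSpan_sum_eq_zero (W : Set H) [Fintype W] [Nonempty W] :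
    ∃ c : H, (∀ w : W, (w : H) - c ∈ vectorSpan ℝ W) ∧ ∑ w : W, ((w : H) - c) = 0 := by
  have hcard : (Fintype.card W : ℝ) ≠ 0 := by exact_mod_cast Fintype.card_ne_zero
  refine ⟨(Fintype.card W : ℝ)⁻¹ • ∑ w : W, (w : H), fun w ↦ ?_, ?_⟩
  · have : (w : H) - (Fintype.card W : ℝ)⁻¹ • ∑ y : W, (y : H) =
        (Fintype.card W : ℝ)⁻¹ • ∑ y : W, ((w : H) - y) := by
      rw [Finset.sum_sub_distrib, Finset.sum_const, Finset.card_univ, smul_sub,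
        ← Nat.cast_smul_eq_nsmul ℝ, inv_smul_smul₀ hcard]
    rw [this]
    exact Submodule.smul_mem _ _ (sum_mem fun y _ ↦ vsub_mem_vectorSpan ℝ w.2 y.2)
  · rw [Finset.sum_sub_distrib, Finset.sum_const, Finset.card_univ, ← Nat.cast_smul_eq_nsmul ℝ,
      smul_inv_smul₀ hcard, sub_self]

/-- Translated to its centroid, `W` spans its direction space and has a bounded polar there; the
contact set of any facet normal in that space will do. -/
lemma exposedFaces_nonempty_of_finrank_eq_succ [FiniteDimensional ℝ H] {W : Set H}
    (hW : W.Finite) {k : ℕ} (hk : Module.finrank ℝ (vectorSpan ℝ W) = k + 1) :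
    (exposedFaces W k).Nonempty := by
  have : Fintype W := hW.fintype
  have : Nonempty W := nonempty_iff_ne_empty'.2 fun h ↦ by
    rw [h, vectorSpan_empty, finrank_bot] at hk
    lia
  obtain ⟨c, hmem, hsum⟩ := exists_sub_mem_vectorSpan_sum_eq_zero W
  set S := vectorSpan ℝ W
  let x (w : W) : S := ⟨w - c, hmem w⟩
  have hspan : Submodule.span ℝ (range x) = ⊤ := by
    refine Submodule.map_injective_of_injective S.subtype_injective
      (le_antisymm (Submodule.map_mono le_top) ?_)
    rw [Submodule.map_subtype_top]
    refine Submodule.span_le.2 ?_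
    rintro _ ⟨a, ha, b, hb, rfl⟩
    refine ⟨x ⟨a, ha⟩ - x ⟨b, hb⟩, sub_mem ?_ ?_, by simp [x]⟩ <;>
      exact Submodule.subset_span (mem_range_self _)
  have hx0 : ∑ w, x w = 0 := Subtype.ext ((S.coe_sum x _).trans hsum)
  obtain ⟨u, hu, -⟩ := exists_facetNormal (finite_range x)
    (isBounded_polarSet_range_of_sum_eq_zero hx0 hspan) (zero_mem_polarSet _) 0
  have himage : (fun s : S ↦ (s : H) + c) '' range x = W := by
    rw [← range_comp]
    simp [Function.comp_def, x]
  exact ⟨_, himage ▸ image_add_const_mem_exposedFaces c (contact_mem_exposedFaces hk hu)⟩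

lemma exists_exposedFace_subset [FiniteDimensional ℝ H] {V : Set H} (hV : V.Finite) {k i : ℕ}
    {W : Set H} (hW : W ∈ exposedFaces V k) (hi : i ≤ k) : ∃ W' ∈ exposedFaces V i, W' ⊆ W := by
  induction k, hi using Nat.le_induction generalizing W with
  | base => exact ⟨W, hW, subset_rfl⟩
  | succ k _ ih =>
    obtain ⟨U, hne, hU, hk⟩ :=
      exposedFaces_nonempty_of_finrank_eq_succ (hV.subset hW.2.1.subset) hW.2.2
    obtain ⟨W', hW', hsub⟩ := ih ⟨hne, isExposed_trans_of_finite hV hW.2.1 hU, hk⟩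
    exact ⟨W', hW', hsub.trans hU.subset⟩

end Polar

section Counting

open scoped RealInnerProductSpace Matrix

lemma card_le_of_injOn_of_abs_le {ι n : Type*} [Fintype n] {S : Finset ι} {f : ι → n → ℤ}
    (hf : InjOn f S) {N : ℝ} (hN : 0 ≤ N) (hbound : ∀ i ∈ S, ∀ k, |(f i k : ℝ)| ≤ N) :
    (S.card : ℝ) ≤ (2 * N + 1) ^ Fintype.card n := by
  classical
  have hcard : S.card ≤ (Fintype.piFinset fun _ : n ↦ Finset.Icc (-⌊N⌋) ⌊N⌋).card := by
    refine Finset.card_le_card_of_injOn f (fun i hi ↦ Finset.mem_coe.2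
      (Fintype.mem_piFinset.2 fun k ↦ Finset.mem_Icc.2 (abs_le.1 (Int.le_floor.2 ?_)))) hf
    exact_mod_cast hbound i hi k
  have hIcc : ((Finset.Icc (-⌊N⌋) ⌊N⌋).card : ℝ) = 2 * ⌊N⌋ + 1 := by
    have hnonneg : 0 ≤ ⌊N⌋ := Int.floor_nonneg.2 hN
    have : ((Finset.Icc (-⌊N⌋) ⌊N⌋).card : ℤ) = 2 * ⌊N⌋ + 1 := by rw [Int.card_Icc]; lia
    exact_mod_cast this
  calc (S.card : ℝ)
      ≤ ((Fintype.piFinset fun _ : n ↦ Finset.Icc (-⌊N⌋) ⌊N⌋).card : ℝ) := by exact_mod_cast hcard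
    _ = (2 * ⌊N⌋ + 1 : ℝ) ^ Fintype.card n := by simp [Fintype.card_piFinset, ← hIcc]
    _ ≤ (2 * N + 1) ^ Fintype.card n := by
      have : (0 : ℝ) ≤ ⌊N⌋ := by exact_mod_cast Int.floor_nonneg.2 hN
      gcongr
      exact Int.floor_le N

section Cones

variable {n : Type*} [Fintype n]

lemma abs_vecMul_apply_le {t : n → ℝ} {A : Matrix n n ℝ} {c R : ℝ} (ht : ∀ j, |t j| ≤ c)
    (hA : ∀ j k, |A j k| ≤ R) (k : n) : |(t ᵥ* A) k| ≤ Fintype.card n * (c * R) := by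
  calc |∑ j, t j * A j k| ≤ ∑ j, |t j * A j k| := Finset.abs_sum_le_sum_abs _ _
    _ ≤ ∑ _ : n, c * R := Finset.sum_le_sum fun j _ ↦ by
      rw [abs_mul]
      exact mul_le_mul (ht j) (hA j k) (abs_nonneg _) ((abs_nonneg _).trans (ht j))
    _ = Fintype.card n * (c * R) := by simp

variable [DecidableEq n]

lemma volume_image_vecMul (A : Matrix n n ℝ) (B : Set (n → ℝ)) :
    volume ((· ᵥ* A) '' B) = ENNReal.ofReal |A.det| * volume B := by
  have : (· ᵥ* A) = Matrix.toLin' Aᵀ := by ext t; simp [Matrix.mulVec_transpose]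
  rw [this, Measure.addHaar_image_linearMap, LinearMap.det_toLin', Matrix.det_transpose]

lemma isOpen_image_vecMul {A : Matrix n n ℝ} (hA : A.det ≠ 0) {B : Set (n → ℝ)} (hB : IsOpen B) :
    IsOpen ((· ᵥ* A) '' B) := by
  have hsurj : Function.Surjective A.vecMulLinear :=
    Matrix.vecMul_surjective_iff_isUnit.2 ((Matrix.isUnit_iff_isUnit_det A).2 hA.isUnit)
  exact A.vecMulLinear.isOpenMap_of_finiteDimensional hsurj B hB

/-- The images of the cube `(0, 1 / d) ^ d` under the matrices are disjoint and lie in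
`[-R, R] ^ d`. -/
lemma sum_abs_det_le_of_disjoint_cones {ι : Type*} [Nonempty n] {S : Finset ι}
    {A : ι → Matrix n n ℝ} {R : ℝ} (hR : 0 ≤ R) (hdet : ∀ i ∈ S, (A i).det ≠ 0)
    (hentry : ∀ i ∈ S, ∀ j k, |A i j k| ≤ R)
    (hdisj : ∀ i ∈ S, ∀ j ∈ S, ∀ t t' : n → ℝ, (∀ k, 0 < t k) → (∀ k, 0 < t' k) →
      t ᵥ* A i = t' ᵥ* A j → i = j) :
    ∑ i ∈ S, |(A i).det| ≤ (2 * R * Fintype.card n) ^ Fintype.card n := by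
  set d := Fintype.card n
  have hd : (0 : ℝ) < d := by exact_mod_cast Fintype.card_pos
  let B : Set (n → ℝ) := univ.pi fun _ ↦ Ioo 0 (d : ℝ)⁻¹
  have hBvol : volume B = ENNReal.ofReal ((d : ℝ)⁻¹ ^ d) := by
    rw [Real.volume_pi_Ioo, ENNReal.ofReal_pow (by positivity)]
    simp [d]
  have hBopen : IsOpen B := isOpen_set_pi finite_univ fun _ _ ↦ isOpen_Ioo
  have hpairwise : (S : Set ι).PairwiseDisjoint fun i ↦ (· ᵥ* A i) '' B := by
    refine fun i hi j hj hij ↦ disjoint_left.2 ?_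
    rintro _ ⟨t, ht, rfl⟩ ⟨t', ht', heq⟩
    exact hij (hdisj i hi j hj t t' (fun k ↦ (ht k trivial).1) (fun k ↦ (ht' k trivial).1)
      heq.symm)
  have hsub : (⋃ i ∈ S, (· ᵥ* A i) '' B) ⊆ Icc (fun _ ↦ -R) fun _ ↦ R := by
    refine iUnion₂_subset fun i hi ↦ ?_
    rintro _ ⟨t, ht, rfl⟩
    have hcoord (k : n) : |(t ᵥ* A i) k| ≤ R := by
      have := abs_vecMul_apply_le (t := t) (c := (d : ℝ)⁻¹) (A := A i)
        (fun j ↦ abs_le.2 ⟨?_, (ht j trivial).2.le⟩) (hentry i hi) k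
      · rwa [mul_inv_cancel_left₀ hd.ne'] at this
      · linarith [(ht j trivial).1, inv_pos.2 hd]
    exact ⟨fun k ↦ (abs_le.1 (hcoord k)).1, fun k ↦ (abs_le.1 (hcoord k)).2⟩
  have hvolume : ENNReal.ofReal ((∑ i ∈ S, |(A i).det|) * (d : ℝ)⁻¹ ^ d) ≤
      ENNReal.ofReal ((2 * R) ^ d) := by
    calc ENNReal.ofReal ((∑ i ∈ S, |(A i).det|) * (d : ℝ)⁻¹ ^ d)
        = ∑ i ∈ S, volume ((· ᵥ* A i) '' B) := by
          simp_rw [volume_image_vecMul, hBvol, ← Finset.sum_mul]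
          rw [ENNReal.ofReal_mul (Finset.sum_nonneg fun _ _ ↦ abs_nonneg _),
            ENNReal.ofReal_sum_of_nonneg fun _ _ ↦ abs_nonneg _]
      _ = volume (⋃ i ∈ S, (· ᵥ* A i) '' B) := (measure_biUnion_finset hpairwise fun i hi ↦
          (isOpen_image_vecMul (hdet i hi) hBopen).measurableSet).symm
      _ ≤ volume (Icc (fun _ : n ↦ -R) fun _ ↦ R) := measure_mono hsub
      _ = ENNReal.ofReal ((2 * R) ^ d) := by
          rw [Real.volume_Icc_pi, ENNReal.ofReal_pow (by positivity)]
          simp [d, two_mul]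
  rw [ENNReal.ofReal_le_ofReal_iff (by positivity), inv_pow, ← div_eq_mul_inv,
    div_le_iff₀ (by positivity), ← mul_pow] at hvolume
  exact hvolume

lemma exists_int_eq_abs_det_mul {A : Matrix n n ℤ} {u : n → ℝ}
    (h : A.map (Int.cast : ℤ → ℝ) *ᵥ u = 1) :
    ∃ z : n → ℤ, ∀ k, (z k : ℝ) = |(A.det : ℝ)| * u k := by
  have hcramer : (A.det : ℝ) • u = A.adjugate.map (Int.cast : ℤ → ℝ) *ᵥ 1 := by
    have hadj : A.adjugate.map (Int.cast : ℤ → ℝ) = (A.map (Int.cast : ℤ → ℝ)).adjugate :=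
      (Int.castRingHom ℝ).map_adjugate A
    rw [← h, hadj, Matrix.mulVec_mulVec, Matrix.adjugate_mul, Matrix.smul_mulVec,
      Matrix.one_mulVec, Int.cast_det]
  have hz (k : n) : ((A.adjugate *ᵥ 1) k : ℝ) = A.det * u k := by
    simpa [Matrix.mulVec, dotProduct] using (congrFun hcramer k).symm
  rcases abs_choice (A.det : ℝ) with habs | habs
  · exact ⟨A.adjugate *ᵥ 1, fun k ↦ by rw [habs, hz]⟩
  · exact ⟨-(A.adjugate *ᵥ 1), fun k ↦ by rw [habs, Pi.neg_apply, Int.cast_neg, hz, neg_mul]⟩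

end Cones

variable {d : ℕ}

/-- The embedding of `ℤ^d` into `E d`, with image `intPoints d`. -/
def intVec (d : ℕ) : (Fin d → ℤ) →+ E d where
  toFun z := WithLp.toLp 2 fun k ↦ (z k : ℝ)
  map_zero' := by ext; simp
  map_add' _ _ := by ext; simp

@[simp] lemma intVec_apply (z : Fin d → ℤ) (k : Fin d) : intVec d z k = z k := rfl

lemma intVec_mem_intPoints (z : Fin d → ℤ) : intVec d z ∈ intPoints d := fun k ↦ ⟨z k, rfl⟩

lemma intPoints_eq_range : intPoints d = range (intVec d) := by
  refine Subset.antisymm (fun x hx ↦ ?_) ?_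
  · choose z hz using hx
    exact ⟨z, by ext k; simp [hz k]⟩
  · rintro _ ⟨z, rfl⟩
    exact intVec_mem_intPoints z

lemma inner_intVec (u : E d) (z : Fin d → ℤ) : ⟪u, intVec d z⟫ = ∑ k, z k * u k := by
  simp [PiLp.inner_apply]

/-- The rows of the integer matrix `A` form a basis of `E d` made of points of `contact X u`. -/
def IsContactMatrix (X : Set (E d)) (u : E d) (A : Matrix (Fin d) (Fin d) ℤ) : Prop :=
  A.det ≠ 0 ∧ ∀ j, intVec d (A j) ∈ contact X u

lemma exists_isContactMatrix {X : Set (E d)} (hX : X ⊆ intPoints d) {u : E d}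
    (hu : u ∈ facetNormals X) : ∃ A, IsContactMatrix X u A := by
  let b₀ := Module.Basis.ofSpan hu.2.ge
  let b := b₀.indexEquiv (EuclideanSpace.basisFun (Fin d) ℝ).toBasis |> b₀.reindex
  have hb (j) : b j ∈ contact X u := by
    refine Module.Basis.ofSpan_subset hu.2.ge ?_
    rw [← b₀.range_reindex]
    exact mem_range_self j
  choose A hA using fun j ↦ intPoints_eq_range.subset (hX (hb j).1)
  refine ⟨Matrix.of A, fun hdet ↦ ?_, fun j ↦ (hA j).symm ▸ hb j⟩
  have hli : LinearIndependent ℝ fun j ↦ WithLp.ofLp (b j) :=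
    b.linearIndependent.map' (WithLp.linearEquiv 2 ℝ (Fin d → ℝ)).toLinearMap (LinearEquiv.ker _)
  have hrow : ((Matrix.of A).map (Int.cast : ℤ → ℝ)).row = fun j ↦ WithLp.ofLp (b j) := by
    ext j k
    simp [← hA j, Matrix.row]
  rw [← hrow, Matrix.linearIndependent_rows_iff_isUnit, Matrix.isUnit_iff_isUnit_det,
    ← Int.cast_det, hdet] at hli
  simp at hli

namespace IsContactMatrix

variable {X : Set (E d)} {u v : E d} {A B : Matrix (Fin d) (Fin d) ℤ}

lemma mulVec_apply (A : Matrix (Fin d) (Fin d) ℤ) (v : E d) (j : Fin d) :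
    (A.map (Int.cast : ℤ → ℝ) *ᵥ v) j = ⟪v, intVec d (A j)⟫ :=
  (inner_intVec v (A j)).symm

lemma det_ne_zero (hA : IsContactMatrix X u A) : (A.map (Int.cast : ℤ → ℝ)).det ≠ 0 := by
  rw [← Int.cast_det]
  exact_mod_cast hA.1

lemma mulVec_eq_one (hA : IsContactMatrix X u A) : A.map (Int.cast : ℤ → ℝ) *ᵥ u = 1 := by
  ext j
  exact (mulVec_apply A u j).trans (hA.2 j).2

lemma mulVec_le_one (hA : IsContactMatrix X u A) (hv : v ∈ polarSet X) :
    A.map (Int.cast : ℤ → ℝ) *ᵥ v ≤ 1 := fun j ↦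
  (mulVec_apply A v j).trans_le (hv _ (hA.2 j).1)

lemma eq_of_mulVec_eq_one (hA : IsContactMatrix X u A)
    (hv : A.map (Int.cast : ℤ → ℝ) *ᵥ v = 1) : v = u := by
  have hinj := Matrix.mulVec_injective_of_isUnit
    ((Matrix.isUnit_iff_isUnit_det _).2 hA.det_ne_zero.isUnit)
  exact WithLp.ofLp_injective 2 (hinj (hv.trans hA.mulVec_eq_one.symm))

/-- On the cone spanned by the rows of `A` the maximum over the polar is attained only at `u`. -/
lemma eq_of_vecMul_eq (hA : IsContactMatrix X u A) (hB : IsContactMatrix X v B)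
    (hu : u ∈ polarSet X) (hv : v ∈ polarSet X) {t t' : Fin d → ℝ} (ht : ∀ k, 0 < t k)
    (ht' : ∀ k, 0 < t' k)
    (h : t ᵥ* A.map (Int.cast : ℤ → ℝ) = t' ᵥ* B.map (Int.cast : ℤ → ℝ)) : v = u := by
  have hle : t' ⬝ᵥ (B.map (Int.cast : ℤ → ℝ) *ᵥ u) ≤ t' ⬝ᵥ 1 :=
    dotProduct_le_dotProduct_of_nonneg_left (hB.mulVec_le_one hu) fun k ↦ (ht' k).le
  have htone : t ⬝ᵥ 1 = (t' ᵥ* B.map (Int.cast : ℤ → ℝ)) ⬝ᵥ u := by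
    rw [← h, ← Matrix.dotProduct_mulVec, hA.mulVec_eq_one]
  have ht'one : t' ⬝ᵥ 1 = (t' ᵥ* B.map (Int.cast : ℤ → ℝ)) ⬝ᵥ v := by
    rw [← Matrix.dotProduct_mulVec, hB.mulVec_eq_one]
  have hdeficit : ∑ j, t j * (1 - (A.map (Int.cast : ℤ → ℝ) *ᵥ v) j) ≤ 0 := by
    calc ∑ j, t j * (1 - (A.map (Int.cast : ℤ → ℝ) *ᵥ v) j)
        = t ⬝ᵥ 1 - t ⬝ᵥ (A.map (Int.cast : ℤ → ℝ) *ᵥ v) := by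
          simp [dotProduct, mul_sub]
      _ = t' ⬝ᵥ (B.map (Int.cast : ℤ → ℝ) *ᵥ u) - t' ⬝ᵥ 1 := by
          rw [htone, ht'one, Matrix.dotProduct_mulVec, Matrix.dotProduct_mulVec, h]
      _ ≤ 0 := sub_nonpos.2 hle
  have hnonneg : ∀ j ∈ Finset.univ, 0 ≤ t j * (1 - (A.map (Int.cast : ℤ → ℝ) *ᵥ v) j) :=
    fun j _ ↦ mul_nonneg (ht j).le (sub_nonneg.2 (hA.mulVec_le_one hv j))
  have hzero := (Finset.sum_eq_zero_iff_of_nonneg hnonneg).1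
    (hdeficit.antisymm (Finset.sum_nonneg hnonneg))
  refine hA.eq_of_mulVec_eq_one (funext fun j ↦ ?_)
  exact (sub_eq_zero.1 ((mul_eq_zero.1 (hzero j (Finset.mem_univ j))).resolve_left (ht j).ne')).symm

end IsContactMatrix

lemma eq_of_smul_eq_smul_of_mem_facetNormals {H : Type*} [NormedAddCommGroup H]
    [InnerProductSpace ℝ H] [Nontrivial H] {X : Set H} {u v : H} (hu : u ∈ facetNormals X)
    (hv : v ∈ facetNormals X) {b c : ℝ} (hb : 0 < b) (hc : 0 < c) (h : b • u = c • v) : u = v := by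
  have hle {u v : H} {b c : ℝ} (hu : u ∈ facetNormals X) (hv : v ∈ polarSet X) (hc : 0 < c)
      (h : b • u = c • v) : b ≤ c := by
    obtain ⟨x, hx, hux⟩ : (contact X u).Nonempty := nonempty_iff_ne_empty.2 fun hempty ↦ by
      simpa [hempty] using hu.2
    calc b = ⟪b • u, x⟫ := by rw [real_inner_smul_left, hux, mul_one]
      _ = c * ⟪v, x⟫ := by rw [h, real_inner_smul_left]
      _ ≤ c := mul_le_of_le_one_right hc.le (hv x hx)
  obtain rfl : b = c := (hle hu hv.1 hc h).antisymm (hle hv hu.1 hb h.symm)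
  exact smul_right_injective H hb.ne' h

section FacetNormalCount

variable [NeZero d] {X : Set (E d)} {S : Finset (E d)} {A : E d → Matrix (Fin d) (Fin d) ℤ}

lemma card_facetNormals_le_of_abs_det_le (hS : ∀ u ∈ S, u ∈ facetNormals X)
    (hA : ∀ u ∈ S, IsContactMatrix X u (A u)) {T B : ℝ} (hT : 0 ≤ T)
    (hdet : ∀ u ∈ S, |((A u).det : ℝ)| ≤ T) (hB : ∀ u ∈ polarSet X, ∀ j, |u j| ≤ B) :
    (S.card : ℝ) ≤ (2 * (T * B) + 1) ^ d := by
  have hB0 : 0 ≤ B := (abs_nonneg _).trans (hB 0 (zero_mem_polarSet X) 0)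
  have hz (u) (hu : u ∈ S) := exists_int_eq_abs_det_mul (hA u hu).mulVec_eq_one
  choose! z hz using hz
  have hdet0 (u) (hu : u ∈ S) : 0 < |((A u).det : ℝ)| :=
    abs_pos.2 (by exact_mod_cast (hA u hu).1)
  have hinj : InjOn z S := fun u hu v hv huv ↦ by
    refine eq_of_smul_eq_smul_of_mem_facetNormals (hS u hu) (hS v hv) (hdet0 u hu) (hdet0 v hv) ?_
    ext k
    simp [← hz u hu, ← hz v hv, huv]
  simpa using card_le_of_injOn_of_abs_le hinj (mul_nonneg hT hB0) fun u hu k ↦ by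
    rw [hz u hu, abs_mul, abs_abs]
    exact mul_le_mul (hdet u hu) (hB u (hS u hu).1 k) (abs_nonneg _) hT

lemma sum_abs_det_contactMatrix_le (hS : ∀ u ∈ S, u ∈ facetNormals X)
    (hA : ∀ u ∈ S, IsContactMatrix X u (A u)) {R : ℝ} (hR : 0 ≤ R) (hXR : ∀ x ∈ X, ‖x‖ ≤ R) :
    ∑ u ∈ S, |((A u).det : ℝ)| ≤ (2 * R * d) ^ d := by
  simpa [Int.cast_det] using
    sum_abs_det_le_of_disjoint_cones (A := fun u ↦ (A u).map (Int.cast : ℤ → ℝ)) hR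
      (fun u hu ↦ (hA u hu).det_ne_zero)
      (fun u hu j k ↦ (PiLp.norm_apply_le (intVec d (A u j)) k).trans
        (hXR _ ((hA u hu).2 j).1))
      fun u hu v hv t t' ht ht' h ↦
        ((hA u hu).eq_of_vecMul_eq (hA v hv) (hS u hu).1 (hS v hv).1 ht ht' h).symm

/-- Facet normals whose contact matrix has determinant at most `T` are determined by an integer
point in a box; the other ones are few because their cones are large. -/
lemma ncard_facetNormals_le (hX : X ⊆ intPoints d) (hfin : X.Finite) {R T B : ℝ} (hR : 0 ≤ R)
    (hXR : ∀ x ∈ X, ‖x‖ ≤ R) (hT : 0 < T) (hB : ∀ u ∈ polarSet X, ∀ j, |u j| ≤ B) :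
    ((facetNormals X).ncard : ℝ) ≤ (2 * (T * B) + 1) ^ d + (2 * R * d) ^ d / T := by
  classical
  set S := (finite_facetNormals hfin).toFinset
  have hS (u) (hu : u ∈ S) : u ∈ facetNormals X := (finite_facetNormals hfin).mem_toFinset.1 hu
  have hA (u) (hu : u ∈ S) := exists_isContactMatrix hX (hS u hu)
  choose! A hA using hA
  let small := S.filter fun u ↦ |((A u).det : ℝ)| ≤ T
  let large := S.filter fun u ↦ ¬|((A u).det : ℝ)| ≤ T
  have hsmall : (small.card : ℝ) ≤ (2 * (T * B) + 1) ^ d :=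
    card_facetNormals_le_of_abs_det_le (fun u hu ↦ hS u (Finset.filter_subset _ _ hu))
      (fun u hu ↦ hA u (Finset.filter_subset _ _ hu)) hT.le
      (fun u hu ↦ (Finset.mem_filter.1 hu).2) hB
  have hlarge : (large.card : ℝ) ≤ (2 * R * d) ^ d / T := by
    rw [le_div_iff₀ hT]
    calc (large.card : ℝ) * T = ∑ _u ∈ large, T := by simp
      _ ≤ ∑ u ∈ large, |((A u).det : ℝ)| :=
          Finset.sum_le_sum fun u hu ↦ (not_le.1 (Finset.mem_filter.1 hu).2).le
      _ ≤ (2 * R * d) ^ d :=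
          sum_abs_det_contactMatrix_le (fun u hu ↦ hS u (Finset.filter_subset _ _ hu))
            (fun u hu ↦ hA u (Finset.filter_subset _ _ hu)) hR hXR
  calc ((facetNormals X).ncard : ℝ)
      = S.card := by rw [ncard_eq_toFinset_card _ (finite_facetNormals hfin)]
    _ = small.card + large.card := by
        exact_mod_cast (Finset.card_filter_add_card_filter_not _).symm
    _ ≤ _ := add_le_add hsmall hlarge

end FacetNormalCount

end Counting

section NonfacialSums

variable {F : Type*} [AddCommGroup F] [Module ℝ F] [TopologicalSpace F] {V : Set F} {i : ℕ}

/-- The sums of `2 * (i + 1)` points of `V` which do not all lie in a common `i`-face of `V`. The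
index set `Fin 2 × Fin (i + 1)` lets one mix affine bases of two different `i`-faces. -/
def nonfacialSums (V : Set F) (i : ℕ) : Set F :=
  {x | ∃ a : Fin 2 × Fin (i + 1) → F, (∀ p, a p ∈ V) ∧
    (∀ W ∈ exposedFaces V i, ∃ p, a p ∉ W) ∧ ∑ p, a p = x}

lemma finite_nonfacialSums (hV : V.Finite) (i : ℕ) : (nonfacialSums V i).Finite := by
  refine ((Set.Finite.pi' fun _ : Fin 2 × Fin (i + 1) ↦ hV).image fun a ↦ ∑ p, a p).subset ?_
  rintro _ ⟨a, ha, -, rfl⟩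
  exact ⟨a, ha, rfl⟩

lemma nonfacialSums_subset_addSubmonoid {S : AddSubmonoid F} (h : V ⊆ S) :
    nonfacialSums V i ⊆ S := by
  rintro _ ⟨a, ha, -, rfl⟩
  exact S.sum_mem fun p _ ↦ h (ha p)

lemma subset_nonfacialSums (h0 : 0 ∈ V) (h : ∀ W ∈ exposedFaces V i, (0 : F) ∉ W) :
    V ⊆ nonfacialSums V i := fun x hx ↦
  ⟨fun p ↦ if p = (0, 0) then x else 0, fun p ↦ by dsimp only; split_ifs <;> assumption,
    fun W hW ↦ ⟨(1, 0), by simpa using h W hW⟩, by simp⟩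

lemma zero_notMem_of_mem_exposedFaces (hneg : ∀ x ∈ V, -x ∈ V) (hV : Submodule.span ℝ V = ⊤)
    (hi : i < Module.finrank ℝ F) {W : Set F} (hW : W ∈ exposedFaces V i) : 0 ∉ W := by
  intro h0
  obtain ⟨hne, hexp, hdim⟩ := hW
  obtain ⟨l, rfl⟩ := hexp hne
  have hzero (y) (hy : y ∈ V) : l y = 0 := by
    have h := h0.2 y hy
    have h' := h0.2 (-y) (hneg y hy)
    simp only [map_zero, map_neg] at h h'
    linarith
  have hWV : {x | x ∈ V ∧ ∀ y ∈ V, l y ≤ l x} = V :=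
    sep_eq_self_iff_mem_true.2 fun x hx y hy ↦ by rw [hzero x hx, hzero y hy]
  rw [hWV] at hdim h0
  rw [vectorSpan_eq_span_vsub_set_right ℝ h0] at hdim
  have himage : (fun x : F ↦ x -ᵥ 0) '' V = V := by simp
  rw [himage, hV, finrank_top] at hdim
  exact hi.ne' hdim

lemma eq_of_mem_exposedFaces_of_forall_mem (hV : V.Finite) {W W' : Set F}
    (hW : W ∈ exposedFaces V i) (hW' : W' ∈ exposedFaces V i) {ι : Type*} {a : ι → F}
    (ha : affineSpan ℝ (range a) = affineSpan ℝ W) (haW' : ∀ k, a k ∈ W') : W = W' := by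
  have hle : affineSpan ℝ W ≤ affineSpan ℝ W' :=
    ha ▸ affineSpan_mono ℝ (range_subset_iff.2 haW')
  refine eq_of_affineSpan_eq_of_isExposed hW.2.1 hW.1 hW'.2.1 hW'.1
    (AffineSubspace.eq_of_direction_eq_of_nonempty_of_le ?_ ((affineSpan_nonempty ℝ).2 hW.1) hle)
  have : FiniteDimensional ℝ (vectorSpan ℝ W') :=
    finiteDimensional_vectorSpan_of_finite ℝ (hV.subset hW'.2.1.subset)
  have hdir := AffineSubspace.direction_le hle
  rw [direction_affineSpan, direction_affineSpan] at hdir ⊢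
  exact Submodule.eq_of_le_of_finrank_eq hdir (hW.2.2.trans hW'.2.2.symm)

lemma exists_strongDual_lt_of_mem_nonfacialSums {W : Set F} (hW : W ∈ exposedFaces V i)
    {w : Fin 2 × Fin (i + 1) → F} (hw : ∀ p, w p ∈ W) :
    ∃ l : StrongDual ℝ F, ∀ x ∈ nonfacialSums V i, l x < l (∑ p, w p) := by
  obtain ⟨l, rfl⟩ : ∃ l : StrongDual ℝ F, W = l.toExposed V := hW.2.1 hW.1
  refine ⟨l, ?_⟩
  rintro _ ⟨a, ha, haW, rfl⟩
  obtain ⟨p, hp⟩ := haW _ hW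
  rw [map_sum, map_sum]
  refine Finset.sum_lt_sum (fun p _ ↦ (hw p).2 _ (ha p)) ⟨p, Finset.mem_univ p, ?_⟩
  refine ((hw p).2 _ (ha p)).lt_of_ne fun heq ↦ hp ⟨ha p, fun y hy ↦ ?_⟩
  exact heq ▸ (hw p).2 y hy

end NonfacialSums

section UpperBound

open scoped RealInnerProductSpace

variable {H : Type*} [NormedAddCommGroup H] [InnerProductSpace ℝ H] [FiniteDimensional ℝ H]

lemma exists_facetNormal_one_lt {X : Set H} (hX : X.Finite)
    (hb : Bornology.IsBounded (polarSet X)) (h0 : 0 ∈ X) {l : StrongDual ℝ H} {y : H}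
    (hlt : ∀ x ∈ X, l x < l y) : ∃ u ∈ facetNormals X, 1 < ⟪u, y⟫ := by
  obtain ⟨x₀, hx₀, hmax⟩ := exists_max_image X l hX ⟨0, h0⟩
  obtain ⟨c, hxc, hcy⟩ := exists_between (hlt x₀ hx₀)
  have hc : 0 < c := (by simpa using hmax 0 h0 : 0 ≤ l x₀).trans_lt hxc
  let w := (InnerProductSpace.toDual ℝ H).symm (c⁻¹ • l)
  have hw (x : H) : ⟪w, x⟫ = c⁻¹ * l x := InnerProductSpace.toDual_symm_apply
  obtain ⟨u, hu, hle⟩ := exists_facetNormal hX hb (w := w) (fun x hx ↦ by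
    rw [hw, inv_mul_le_iff₀ hc, mul_one]
    exact (hmax x hx).trans hxc.le) y
  refine ⟨u, hu, lt_of_lt_of_le ?_ hle⟩
  rwa [hw, lt_inv_mul_iff₀ hc, mul_one]

/-- The facet normal assigned to a face `W` separates twice the sum of an affine basis of `W` from
`nonfacialSums V i`. If two faces shared it, it would have to exceed `1` on the mixed sum too, which
is nonfacial. -/
lemma ncard_exposedFaces_le_ncard_facetNormals {V : Set H} (hV : V.Finite) (h0 : 0 ∈ V)
    (hneg : ∀ x ∈ V, -x ∈ V) (hspan : Submodule.span ℝ V = ⊤) {i : ℕ}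
    (hi : i < Module.finrank ℝ H) :
    (exposedFaces V i).ncard ≤ (facetNormals (nonfacialSums V i)).ncard := by
  set X := nonfacialSums V i
  have hVX : V ⊆ X :=
    subset_nonfacialSums h0 fun W hW ↦ zero_notMem_of_mem_exposedFaces hneg hspan hi hW
  have hX : X.Finite := finite_nonfacialSums hV i
  have hb : Bornology.IsBounded (polarSet X) :=
    (isBounded_polarSet_of_neg_mem hneg hspan).subset (polarSet_anti hVX)
  have hbasis (W) (hW : W ∈ exposedFaces V i) :=
    exists_affineSpan_range_eq (hV.subset hW.2.1.subset) hW.1 hW.2.2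
  choose! a haW haspan using hbasis
  have hnormal (W) (hW : W ∈ exposedFaces V i) :
      ∃ u ∈ facetNormals X, 1 < ⟪u, ∑ p : Fin 2 × Fin (i + 1), a W p.2⟫ := by
    obtain ⟨l, hl⟩ := exists_strongDual_lt_of_mem_nonfacialSums hW
      fun p : Fin 2 × Fin (i + 1) ↦ haW W hW p.2
    exact exists_facetNormal_one_lt hX hb (hVX h0) hl
  choose! u hu hlt using hnormal
  refine ncard_le_ncard_of_injOn u hu (fun W hW W' hW' heq ↦ ?_) (finite_facetNormals hX)
  by_contra hne
  have hmixed : ∑ p : Fin 2 × Fin (i + 1), (if p.1 = 0 then a W p.2 else a W' p.2) ∈ X := by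
    refine ⟨_, fun p ↦ ?_, fun U hU ↦ ?_, rfl⟩
    · split_ifs
      · exact hW.2.1.subset (haW W hW _)
      · exact hW'.2.1.subset (haW W' hW' _)
    · by_contra! hall
      have hWU := eq_of_mem_exposedFaces_of_forall_mem hV hW hU (haspan W hW)
        fun k ↦ by simpa using hall (0, k)
      have hW'U := eq_of_mem_exposedFaces_of_forall_mem hV hW' hU (haspan W' hW')
        fun k ↦ by simpa using hall (1, k)
      exact hne (hWU.trans hW'U.symm)
  have hle := (hu W hW).1 _ hmixed
  have hltW := hlt W hW
  have hltW' := hlt W' hW'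
  rw [← heq] at hltW'
  simp only [Fintype.sum_prod_type, Fin.sum_univ_two, inner_add_right, if_true, one_ne_zero,
    if_false] at hle hltW hltW'
  linarith

/-- The lattice points of the ball `rB^d`, so that `integerHull d (closedBall 0 r)` is their convex
hull. -/
def latticeBall (d : ℕ) (r : ℝ) : Set (E d) := intPoints d ∩ Metric.closedBall 0 r

variable {d : ℕ} {r : ℝ}

lemma mem_latticeBall {x : E d} : x ∈ latticeBall d r ↔ x ∈ intPoints d ∧ ‖x‖ ≤ r := by
  simp [latticeBall]

lemma finite_latticeBall (d : ℕ) (r : ℝ) : (latticeBall d r).Finite := by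
  have hbox : (univ.pi fun _ : Fin d ↦ Icc (-⌊r⌋) ⌊r⌋).Finite :=
    Set.Finite.pi fun _ ↦ finite_Icc _ _
  refine (hbox.image (intVec d)).subset fun x hx ↦ ?_
  obtain ⟨hxint, hxr⟩ := mem_latticeBall.1 hx
  obtain ⟨z, rfl⟩ := intPoints_eq_range.subset hxint
  refine ⟨z, fun k _ ↦ abs_le.1 (Int.le_floor.2 ?_), rfl⟩
  have := (PiLp.norm_apply_le (intVec d z) k).trans hxr
  simpa using this

lemma neg_mem_latticeBall {x : E d} (hx : x ∈ latticeBall d r) : -x ∈ latticeBall d r := by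
  obtain ⟨hxint, hxr⟩ := mem_latticeBall.1 hx
  obtain ⟨z, rfl⟩ := intPoints_eq_range.subset hxint
  exact mem_latticeBall.2 ⟨by rw [← map_neg]; exact intVec_mem_intPoints _, by rwa [norm_neg]⟩

lemma zero_mem_latticeBall (hr : 0 ≤ r) : (0 : E d) ∈ latticeBall d r :=
  mem_latticeBall.2 ⟨by simpa using intVec_mem_intPoints (0 : Fin d → ℤ), by simpa⟩

lemma single_mem_latticeBall {m : ℕ} (hm : m ≤ r) (j : Fin d) :
    EuclideanSpace.single j (m : ℝ) ∈ latticeBall d r := by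
  refine mem_latticeBall.2 ⟨fun k ↦ ⟨(Pi.single j (m : ℤ) : Fin d → ℤ) k, ?_⟩, by simpa using hm⟩
  by_cases hk : k = j <;> simp [hk]

lemma span_latticeBall (hr : 1 ≤ r) : Submodule.span ℝ (latticeBall d r) = ⊤ := by
  rw [eq_top_iff, ← (EuclideanSpace.basisFun (Fin d) ℝ).toBasis.span_eq]
  refine Submodule.span_mono ?_
  rintro _ ⟨j, rfl⟩
  simpa using single_mem_latticeBall (m := 1) (by simpa using hr) j

lemma abs_apply_le_of_mem_polarSet_latticeBall {m : ℕ} (hm : 0 < m) (hmr : m ≤ r) {u : E d}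
    (hu : u ∈ polarSet (latticeBall d r)) (j : Fin d) : |u j| ≤ (m : ℝ)⁻¹ := by
  have hpos := hu _ (single_mem_latticeBall hmr j)
  have hneg := hu _ (neg_mem_latticeBall (single_mem_latticeBall hmr j))
  rw [inner_neg_right] at hneg
  simp only [EuclideanSpace.inner_single_right, conj_trivial] at hpos hneg
  have hm0 : (0 : ℝ) < m := by exact_mod_cast hm
  rw [abs_le, inv_eq_one_div, neg_le, le_div_iff₀ hm0, le_div_iff₀ hm0]
  constructor <;> linarith

lemma ncard_exposedFaces_latticeBall_le {i m : ℕ} (hi : i < d) (hm : 0 < m) (hmr : m ≤ r) {T : ℝ}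
    (hT : 0 < T) : ((exposedFaces (latticeBall d r) i).ncard : ℝ) ≤
      (2 * (T / m) + 1) ^ d + (2 * (2 * (i + 1) * r) * d) ^ d / T := by
  have : NeZero d := ⟨by lia⟩
  have hr : 1 ≤ r := le_trans (by exact_mod_cast hm) hmr
  have hdim : i < Module.finrank ℝ (E d) := by simpa using hi
  have hneg (x) (hx : x ∈ latticeBall d r) := neg_mem_latticeBall hx
  have h0 : 0 ∈ latticeBall d r := zero_mem_latticeBall (by linarith)
  have hsub : latticeBall d r ⊆ nonfacialSums (latticeBall d r) i :=
    subset_nonfacialSums h0 fun W hW ↦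
      zero_notMem_of_mem_exposedFaces hneg (span_latticeBall hr) hdim hW
  have hint : nonfacialSums (latticeBall d r) i ⊆ intPoints d := by
    rw [intPoints_eq_range]
    refine nonfacialSums_subset_addSubmonoid (S := AddMonoidHom.mrange (intVec d)) fun x hx ↦ ?_
    exact intPoints_eq_range.subset (mem_latticeBall.1 hx).1
  have hnorm : ∀ x ∈ nonfacialSums (latticeBall d r) i, ‖x‖ ≤ 2 * (i + 1) * r := by
    rintro _ ⟨a, ha, -, rfl⟩
    calc ‖∑ p, a p‖ ≤ ∑ _ : Fin 2 × Fin (i + 1), r :=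
          norm_sum_le_of_le _ fun p _ ↦ (mem_latticeBall.1 (ha p)).2
      _ = 2 * (i + 1) * r := by simp
  have hcount := ncard_facetNormals_le hint (finite_nonfacialSums (finite_latticeBall d r) i)
    (R := 2 * (i + 1) * r) (by positivity) hnorm hT fun u hu ↦
      abs_apply_le_of_mem_polarSet_latticeBall hm hmr (polarSet_anti hsub hu)
  refine le_trans ?_ hcount
  exact_mod_cast ncard_exposedFaces_le_ncard_facetNormals (finite_latticeBall d r) h0 hneg
    (span_latticeBall hr) hdim

/-- The choice `T = s ^ (2 * (n + 1))` balances the two terms of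
`ncard_exposedFaces_latticeBall_le`. -/
lemma ncard_exposedFaces_latticeBall_le_pow {n i : ℕ} (hi : i ≤ n) {s : ℝ} (hs : 1 ≤ s) :
    ((exposedFaces (latticeBall (n + 1) (s ^ (n + 2))) i).ncard : ℝ) ≤
      (5 ^ (n + 1) + (2 * (2 * (i + 1)) * (n + 1)) ^ (n + 1)) * s ^ (n * (n + 1)) := by
  have hr : 1 ≤ s ^ (n + 2) := one_le_pow₀ hs
  set m := ⌊s ^ (n + 2)⌋₊
  have hm : 0 < m := Nat.floor_pos.2 hr
  have hm0 : (0 : ℝ) < m := by exact_mod_cast hm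
  have hrm : s ^ (n + 2) ≤ 2 * m := by
    have := Nat.lt_floor_add_one (s ^ (n + 2))
    have : (1 : ℝ) ≤ m := by exact_mod_cast hm
    linarith
  have hTm : s ^ (2 * (n + 1)) / m ≤ 2 * s ^ n := by
    rw [div_le_iff₀ hm0]
    calc s ^ (2 * (n + 1)) = s ^ n * s ^ (n + 2) := by ring
      _ ≤ s ^ n * (2 * m) := by gcongr
      _ = 2 * s ^ n * m := by ring
  have hone : 1 ≤ s ^ n := one_le_pow₀ hs
  calc ((exposedFaces (latticeBall (n + 1) (s ^ (n + 2))) i).ncard : ℝ)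
      ≤ (2 * (s ^ (2 * (n + 1)) / m) + 1) ^ (n + 1) +
          (2 * (2 * (i + 1) * s ^ (n + 2)) * (n + 1)) ^ (n + 1) / s ^ (2 * (n + 1)) := by
        exact_mod_cast ncard_exposedFaces_latticeBall_le (d := n + 1) (by lia) hm
          (Nat.floor_le (by positivity)) (T := s ^ (2 * (n + 1))) (by positivity)
    _ ≤ (5 * s ^ n) ^ (n + 1) +
          (2 * (2 * (i + 1) * s ^ (n + 2)) * (n + 1)) ^ (n + 1) / s ^ (2 * (n + 1)) := by
        gcongr
        linarith
    _ = _ := by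
        have hC : 2 * (2 * (i + 1) * s ^ (n + 2)) * (n + 1) =
            2 * (2 * (i + 1)) * (n + 1) * s ^ (n + 2) := by ring
        have hs' : (s ^ (n + 2)) ^ (n + 1) = s ^ (n * (n + 1)) * s ^ (2 * (n + 1)) := by ring
        rw [hC, mul_pow _ (s ^ (n + 2)), hs', ← mul_assoc, mul_div_cancel_right₀ _ (by positivity),
          mul_pow, ← pow_mul, add_mul]

end UpperBound

section Flatness

open scoped RealInnerProductSpace

lemma exists_mem_forall_norm_le {G : Type*} [NormedAddCommGroup G] {L : AddSubgroup G}
    (hL : ∀ R, ((L : Set G) ∩ Metric.closedBall 0 R).Finite) (hne : L ≠ ⊥) :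
    ∃ b ∈ L, b ≠ 0 ∧ ∀ y ∈ L, y ≠ 0 → ‖b‖ ≤ ‖y‖ := by
  obtain ⟨x, hx, hx0⟩ := L.bot_or_exists_ne_zero.resolve_left hne
  obtain ⟨b, ⟨⟨hb, -⟩, hb0⟩, hmin⟩ := exists_min_image
    (((L : Set G) ∩ Metric.closedBall 0 ‖x‖) \ {0}) norm (hL ‖x‖).sdiff ⟨x, by simp_all⟩
  refine ⟨b, hb, hb0, fun y hy hy0 ↦ ?_⟩
  rcases le_total ‖y‖ ‖x‖ with hyx | hyx
  · exact hmin y (by simp_all)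
  · exact (hmin x (by simp_all)).trans hyx

variable {H : Type*} [NormedAddCommGroup H] [InnerProductSpace ℝ H]

lemma norm_sub_round_zsmul_le (b x : H) :
    ‖x - round (⟪b, x⟫ / ‖b‖ ^ 2) • b‖ ≤ ‖(ℝ ∙ b)ᗮ.starProjection x‖ + ‖b‖ / 2 := by
  set c := ⟪b, x⟫ / ‖b‖ ^ 2
  have hsplit : x - round c • b = (ℝ ∙ b)ᗮ.starProjection x + (c - round c) • b := by
    rw [Submodule.starProjection_orthogonal_val, Submodule.starProjection_singleton, sub_smul,
      Int.cast_smul_eq_zsmul]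
    simp [c]
  calc ‖x - round c • b‖ ≤ ‖(ℝ ∙ b)ᗮ.starProjection x‖ + |c - round c| * ‖b‖ := by
        rw [hsplit, ← Real.norm_eq_abs, ← norm_smul]
        exact norm_add_le _ _
    _ ≤ ‖(ℝ ∙ b)ᗮ.starProjection x‖ + 1 / 2 * ‖b‖ := by gcongr; exact abs_sub_round c
    _ = _ := by ring

/-- The property in Khinchine's flatness theorem: some nonzero `φ` in the dual lattice of `L` has
product at most `K` with the covering radius of `L`. -/
def IsFlat (K : ℝ) (L : AddSubgroup H) : Prop :=
  ∃ φ ∈ Submodule.span ℝ (L : Set H), φ ≠ 0 ∧ (∀ y ∈ L, ∃ z : ℤ, ⟪φ, y⟫ = z) ∧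
    ∀ x ∈ Submodule.span ℝ (L : Set H), ∃ y ∈ L, ‖x - y‖ * ‖φ‖ ≤ K

variable {L : AddSubgroup H} {b : H} {K : ℝ}

lemma isFlat_of_starProjection_eq_zero (hb : b ∈ L) (hb0 : b ≠ 0)
    (hmin : ∀ y ∈ L, y ≠ 0 → ‖b‖ ≤ ‖y‖) (hL : ∀ y ∈ L, (ℝ ∙ b)ᗮ.starProjection y = 0) :
    IsFlat (1 / 2) L := by
  have hbpos : 0 < ‖b‖ := norm_pos_iff.2 hb0
  have hspan : Submodule.span ℝ (L : Set H) ≤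
      LinearMap.ker (ℝ ∙ b)ᗮ.starProjection.toLinearMap := Submodule.span_le.2 hL
  have hround (x) (hx : x ∈ Submodule.span ℝ (L : Set H)) :
      ‖x - round (⟪b, x⟫ / ‖b‖ ^ 2) • b‖ ≤ ‖b‖ / 2 := by
    have h := norm_sub_round_zsmul_le b x
    rwa [show (ℝ ∙ b)ᗮ.starProjection x = 0 from hspan hx, norm_zero, zero_add] at h
  refine ⟨(‖b‖ ^ 2)⁻¹ • b, Submodule.smul_mem _ _ (Submodule.subset_span hb), by simp [hb0],
    fun y hy ↦ ?_, fun x hx ↦ ⟨_, zsmul_mem hb (round (⟪b, x⟫ / ‖b‖ ^ 2)), ?_⟩⟩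
  · set k := round (⟪b, y⟫ / ‖b‖ ^ 2)
    have hzero : y - k • b = 0 := by
      by_contra hne
      have := hmin _ (sub_mem hy (zsmul_mem hb k)) hne
      have := hround y (Submodule.subset_span hy)
      linarith
    refine ⟨k, ?_⟩
    rw [sub_eq_zero.1 hzero, ← Int.cast_smul_eq_zsmul ℝ, real_inner_smul_left, inner_smul_right,
      real_inner_self_eq_norm_sq]
    field_simp
  · calc ‖x - round (⟪b, x⟫ / ‖b‖ ^ 2) • b‖ * ‖(‖b‖ ^ 2)⁻¹ • b‖
        ≤ ‖b‖ / 2 * ‖(‖b‖ ^ 2)⁻¹ • b‖ := by gcongr; exact hround x hx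
      _ = 1 / 2 := by
        rw [norm_smul, norm_inv, norm_pow, norm_norm]
        field_simp

lemma exists_ne_zero_norm_mul_le (hK : 0 < K) {φ : H} (hφ : φ ∈ Submodule.span ℝ (L : Set H))
    (hφ0 : φ ≠ 0) (hcover : ∀ x ∈ Submodule.span ℝ (L : Set H), ∃ y ∈ L, ‖x - y‖ * ‖φ‖ ≤ K) :
    ∃ y ∈ L, y ≠ 0 ∧ ‖y‖ * ‖φ‖ ≤ 3 * K := by
  set x := (2 * K / ‖φ‖ ^ 2) • φ
  have hx : ‖x‖ * ‖φ‖ = 2 * K := by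
    rw [norm_smul, Real.norm_of_nonneg (by positivity)]
    field_simp
  obtain ⟨y, hy, hxy⟩ := hcover x (Submodule.smul_mem _ _ hφ)
  refine ⟨y, hy, ?_, ?_⟩
  · rintro rfl
    rw [sub_zero, hx] at hxy
    linarith
  · calc ‖y‖ * ‖φ‖ ≤ (‖x‖ + ‖x - y‖) * ‖φ‖ := by gcongr; exact norm_le_norm_add_norm_sub x y
      _ ≤ 3 * K := by rw [add_mul, hx]; linarith

/-- The image of `L` in `(ℝ ∙ b)ᗮ`. -/
def projAlong (L : AddSubgroup H) (b : H) : AddSubgroup H :=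
  L.map (ℝ ∙ b)ᗮ.starProjection.toLinearMap.toAddMonoidHom

lemma mem_projAlong {x : H} :
    x ∈ projAlong L b ↔ ∃ y ∈ L, (ℝ ∙ b)ᗮ.starProjection y = x := Iff.rfl

lemma starProjection_sub_zsmul (b x : H) (k : ℤ) :
    (ℝ ∙ b)ᗮ.starProjection (x - k • b) = (ℝ ∙ b)ᗮ.starProjection x := by
  rw [map_sub, map_zsmul, Submodule.starProjection_orthogonalComplement_singleton_eq_zero,
    smul_zero, sub_zero]

lemma span_projAlong_le_orthogonal :
    Submodule.span ℝ (projAlong L b : Set H) ≤ (ℝ ∙ b)ᗮ := by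
  rw [Submodule.span_le]
  rintro _ ⟨y, -, rfl⟩
  exact Submodule.starProjection_apply_mem _ y

lemma span_projAlong_le (hb : b ∈ L) :
    Submodule.span ℝ (projAlong L b : Set H) ≤ Submodule.span ℝ (L : Set H) := by
  rw [Submodule.span_le]
  rintro _ ⟨y, hy, rfl⟩
  change (ℝ ∙ b)ᗮ.starProjection y ∈ _
  rw [Submodule.starProjection_orthogonal_val, Submodule.starProjection_singleton]
  exact sub_mem (Submodule.subset_span hy) (Submodule.smul_mem _ _ (Submodule.subset_span hb))

lemma starProjection_mem_span_projAlong {x : H} (hx : x ∈ Submodule.span ℝ (L : Set H)) :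
    (ℝ ∙ b)ᗮ.starProjection x ∈ Submodule.span ℝ (projAlong L b : Set H) := by
  have hle : Submodule.span ℝ (L : Set H) ≤
      (Submodule.span ℝ (projAlong L b : Set H)).comap (ℝ ∙ b)ᗮ.starProjection.toLinearMap :=
    Submodule.span_le.2 fun y hy ↦ Submodule.subset_span ⟨y, hy, rfl⟩
  exact hle hx

lemma finite_projAlong_inter_closedBall (hb : b ∈ L)
    (hL : ∀ R, ((L : Set H) ∩ Metric.closedBall 0 R).Finite) (R : ℝ) :
    ((projAlong L b : Set H) ∩ Metric.closedBall 0 R).Finite := by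
  refine ((hL (R + ‖b‖ / 2)).image (ℝ ∙ b)ᗮ.starProjection).subset ?_
  rintro _ ⟨⟨y, hy, rfl⟩, hyR⟩
  refine ⟨y - round (⟪b, y⟫ / ‖b‖ ^ 2) • b, ⟨sub_mem hy (zsmul_mem hb _), ?_⟩,
    starProjection_sub_zsmul b y _⟩
  have hyR' : ‖(ℝ ∙ b)ᗮ.starProjection y‖ ≤ R := mem_closedBall_zero_iff.1 hyR
  exact mem_closedBall_zero_iff.2 ((norm_sub_round_zsmul_le b y).trans (by gcongr))

lemma norm_le_two_mul_of_mem_projAlong (hb : b ∈ L) (hmin : ∀ y ∈ L, y ≠ 0 → ‖b‖ ≤ ‖y‖) {y : H}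
    (hy : y ∈ projAlong L b) (hy0 : y ≠ 0) : ‖b‖ ≤ 2 * ‖y‖ := by
  obtain ⟨x, hx, rfl⟩ := mem_projAlong.1 hy
  set k := round (⟪b, x⟫ / ‖b‖ ^ 2)
  have hle : ‖b‖ ≤ ‖x - k • b‖ := hmin _ (sub_mem hx (zsmul_mem hb k)) fun h ↦
    hy0 (by rw [← starProjection_sub_zsmul b x k, h, map_zero])
  have := norm_sub_round_zsmul_le b x
  linarith

lemma isFlat_of_isFlat_projAlong (hb : b ∈ L) (hmin : ∀ y ∈ L, y ≠ 0 → ‖b‖ ≤ ‖y‖) (hK : 0 < K)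
    (h : IsFlat K (projAlong L b)) : IsFlat (4 * K) L := by
  obtain ⟨φ, hφ, hφ0, hint, hcover⟩ := h
  have hφb : ⟪φ, b⟫ = 0 := Submodule.mem_orthogonal_singleton_iff_inner_left.1
    (span_projAlong_le_orthogonal hφ)
  have hbφ : ‖b‖ * ‖φ‖ ≤ 6 * K := by
    obtain ⟨y, hy, hy0, hyφ⟩ := exists_ne_zero_norm_mul_le hK hφ hφ0 hcover
    calc ‖b‖ * ‖φ‖ ≤ 2 * ‖y‖ * ‖φ‖ := by
          gcongr; exact norm_le_two_mul_of_mem_projAlong hb hmin hy hy0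
      _ ≤ 6 * K := by linarith
  refine ⟨φ, span_projAlong_le hb hφ, hφ0, fun y hy ↦ ?_, fun x hx ↦ ?_⟩
  · obtain ⟨z, hz⟩ := hint _ (mem_projAlong.2 ⟨y, hy, rfl⟩)
    refine ⟨z, ?_⟩
    rw [← hz, Submodule.starProjection_orthogonal_val, Submodule.starProjection_singleton,
      inner_sub_right, inner_smul_right, hφb, mul_zero, sub_zero]
  · obtain ⟨_, hy, hxy⟩ := hcover _ (starProjection_mem_span_projAlong hx)
    obtain ⟨y, hyL, rfl⟩ := mem_projAlong.1 hy
    set k := round (⟪b, x - y⟫ / ‖b‖ ^ 2)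
    refine ⟨y + k • b, add_mem hyL (zsmul_mem hb k), ?_⟩
    calc ‖x - (y + k • b)‖ * ‖φ‖ = ‖x - y - k • b‖ * ‖φ‖ := by rw [sub_add_eq_sub_sub]
      _ ≤ (‖(ℝ ∙ b)ᗮ.starProjection (x - y)‖ + ‖b‖ / 2) * ‖φ‖ := by
          gcongr; exact norm_sub_round_zsmul_le b (x - y)
      _ ≤ 4 * K := by rw [map_sub]; linarith

lemma finrank_span_projAlong_lt [FiniteDimensional ℝ H] (hb : b ∈ L) (hb0 : b ≠ 0) :
    Module.finrank ℝ (Submodule.span ℝ (projAlong L b : Set H)) <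
      Module.finrank ℝ (Submodule.span ℝ (L : Set H)) := by
  refine Submodule.finrank_lt_finrank_of_lt ((span_projAlong_le hb).lt_of_ne fun heq ↦ hb0 ?_)
  have hb' : b ∈ (ℝ ∙ b)ᗮ := span_projAlong_le_orthogonal (heq ▸ Submodule.subset_span hb)
  exact inner_self_eq_zero.1 (Submodule.mem_orthogonal_singleton_iff_inner_left.1 hb')

lemma IsFlat.mono {K' : ℝ} (h : IsFlat K L) (hK : K ≤ K') : IsFlat K' L := by
  obtain ⟨φ, hφ, hφ0, hint, hcover⟩ := h
  refine ⟨φ, hφ, hφ0, hint, fun x hx ↦ ?_⟩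
  obtain ⟨y, hy, hxy⟩ := hcover x hx
  exact ⟨y, hy, hxy.trans hK⟩

theorem isFlat_pow_of_finrank_le [FiniteDimensional ℝ H] (n : ℕ) (L : AddSubgroup H)
    (hL : ∀ R, ((L : Set H) ∩ Metric.closedBall 0 R).Finite) (hne : L ≠ ⊥)
    (hn : Module.finrank ℝ (Submodule.span ℝ (L : Set H)) ≤ n) : IsFlat (4 ^ n) L := by
  induction n generalizing L with
  | zero =>
    obtain ⟨x, hx, hx0⟩ := L.bot_or_exists_ne_zero.resolve_left hne
    have hbot := Submodule.finrank_eq_zero.1 (Nat.le_zero.1 hn)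
    exact absurd (Submodule.span_eq_bot.1 hbot x hx) hx0
  | succ n ih =>
    obtain ⟨b, hb, hb0, hmin⟩ := exists_mem_forall_norm_le hL hne
    by_cases hproj : projAlong L b = ⊥
    · have hle : (1 / 2 : ℝ) ≤ 4 ^ (n + 1) :=
        le_trans (by norm_num) (one_le_pow₀ (by norm_num : (1 : ℝ) ≤ 4))
      refine (isFlat_of_starProjection_eq_zero hb hb0 hmin fun y hy ↦ ?_).mono hle
      exact AddSubgroup.mem_bot.1 (hproj ▸ mem_projAlong.2 ⟨y, hy, rfl⟩)
    · have hlt := finrank_span_projAlong_lt hb hb0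
      rw [pow_succ']
      exact isFlat_of_isFlat_projAlong hb hmin (by positivity)
        (ih _ (finite_projAlong_inter_closedBall hb hL) hproj (by lia))

end Flatness

section AxialScaling

open scoped RealInnerProductSpace

variable {H : Type*} [NormedAddCommGroup H] [InnerProductSpace ℝ H] {ω : H}

lemma norm_sq_eq_inner_sq_add_norm_sub_sq (hω : ‖ω‖ = 1) (x : H) :
    ‖x‖ ^ 2 = ⟪ω, x⟫ ^ 2 + ‖x - ⟪ω, x⟫ • ω‖ ^ 2 := by
  rw [norm_sub_sq_real, inner_smul_right, norm_smul, hω, real_inner_comm, Real.norm_eq_abs,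
    mul_one, sq_abs]
  ring

lemma abs_inner_le_norm_of_norm_eq_one (hω : ‖ω‖ = 1) (x : H) : |⟪ω, x⟫| ≤ ‖x‖ := by
  simpa [hω] using abs_real_inner_le_norm ω x

lemma norm_sub_inner_smul_le (hω : ‖ω‖ = 1) (x : H) : ‖x - ⟪ω, x⟫ • ω‖ ≤ ‖x‖ := by
  refine (sq_le_sq₀ (norm_nonneg _) (norm_nonneg _)).1 ?_
  rw [norm_sq_eq_inner_sq_add_norm_sub_sq hω x]
  exact le_add_of_nonneg_left (sq_nonneg _)

/-- For a unit vector `ω`, the map that scales by `a` along `ω` and by `b` orthogonally to it. -/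
def axialScaling (ω : H) (a b : ℝ) : H →L[ℝ] H :=
  b • ContinuousLinearMap.id ℝ H + ((a - b) • innerSL ℝ ω).smulRight ω

lemma axialScaling_apply (ω : H) (a b : ℝ) (x : H) :
    axialScaling ω a b x = b • x + ((a - b) * ⟪ω, x⟫) • ω := by
  simp [axialScaling]

lemma inner_axialScaling (hω : ‖ω‖ = 1) (a b : ℝ) (x : H) :
    ⟪ω, axialScaling ω a b x⟫ = a * ⟪ω, x⟫ := by
  rw [axialScaling_apply, inner_add_right, inner_smul_right, inner_smul_right,
    real_inner_self_eq_norm_sq, hω]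
  ring

lemma axialScaling_sub_inner_smul (hω : ‖ω‖ = 1) (a b : ℝ) (x : H) :
    axialScaling ω a b x - ⟪ω, axialScaling ω a b x⟫ • ω = b • (x - ⟪ω, x⟫ • ω) := by
  rw [inner_axialScaling hω, axialScaling_apply]
  module

lemma inner_axialScaling_comm (ω : H) (a b : ℝ) (x y : H) :
    ⟪axialScaling ω a b x, y⟫ = ⟪x, axialScaling ω a b y⟫ := by
  rw [axialScaling_apply, axialScaling_apply, inner_add_left, inner_add_right, inner_smul_right,
    inner_smul_right, real_inner_smul_left, real_inner_smul_left, real_inner_comm x ω]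
  ring

lemma axialScaling_axialScaling_inv (hω : ‖ω‖ = 1) {a b : ℝ} (ha : a ≠ 0) (hb : b ≠ 0) (x : H) :
    axialScaling ω a b (axialScaling ω a⁻¹ b⁻¹ x) = x := by
  rw [axialScaling_apply ω a b, inner_axialScaling hω, axialScaling_apply, smul_add, smul_smul,
    smul_smul, mul_inv_cancel₀ hb, one_smul, add_assoc, ← add_smul, add_eq_left]
  convert zero_smul ℝ ω
  field_simp
  ring

/-- `axialScaling` as an equivalence. -/
def axialScalingEquiv (hω : ‖ω‖ = 1) {a b : ℝ} (ha : a ≠ 0) (hb : b ≠ 0) : H ≃L[ℝ] H :=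
  .equivOfInverse (axialScaling ω a b) (axialScaling ω a⁻¹ b⁻¹)
    (fun x ↦ by
      simpa using axialScaling_axialScaling_inv hω (inv_ne_zero ha) (inv_ne_zero hb) x)
    (axialScaling_axialScaling_inv hω ha hb)

/-- The preimage of the unit ball is an ellipsoid inside the cap of height `q ^ 2 * r` of the ball
of radius `r`. -/
lemma mem_cap_of_norm_axialScaling_le_one (hω : ‖ω‖ = 1) {r q : ℝ} (hr : 0 < r) (hq : 0 < q)
    (hq1 : q ≤ 1) {x : H}
    (hx : ‖axialScaling ω (4 / (q ^ 2 * r)) (2 / (q * r)) (x - (r - q ^ 2 * r / 2) • ω)‖ ≤ 1) :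
    ‖x‖ ≤ r ∧ r - q ^ 2 * r ≤ ⟪ω, x⟫ := by
  set c := (r - q ^ 2 * r / 2) • ω
  have hc : ⟪ω, c⟫ = r - q ^ 2 * r / 2 := by simp [c, inner_smul_right, hω]
  have haxial : |⟪ω, x⟫ - (r - q ^ 2 * r / 2)| ≤ q ^ 2 * r / 4 := by
    have h := (abs_inner_le_norm_of_norm_eq_one hω _).trans hx
    rw [inner_axialScaling hω, abs_mul, abs_of_pos (by positivity), inner_sub_right, hc,
      div_mul_eq_mul_div, div_le_one (by positivity)] at h
    linarith
  have hperp : ‖x - ⟪ω, x⟫ • ω‖ ≤ q * r / 2 := by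
    have h := (norm_sub_inner_smul_le hω _).trans hx
    have hsub : x - c - ⟪ω, x - c⟫ • ω = x - ⟪ω, x⟫ • ω := by
      rw [inner_sub_right, hc]; simp only [c]; module
    rw [axialScaling_sub_inner_smul hω, norm_smul, Real.norm_of_nonneg (by positivity), hsub,
      div_mul_eq_mul_div, div_le_one (by positivity)] at h
    linarith
  have hq2 : q ^ 2 ≤ 1 := pow_le_one₀ hq.le hq1
  have hq2r : q ^ 2 * r ≤ r := mul_le_of_le_one_left hr.le hq2
  have hq2pos : 0 < q ^ 2 * r := by positivity
  obtain ⟨hlow, hupp⟩ := abs_le.1 haxial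
  refine ⟨(sq_le_sq₀ (norm_nonneg _) hr.le).1 ?_, by linarith⟩
  calc ‖x‖ ^ 2 = ⟪ω, x⟫ ^ 2 + ‖x - ⟪ω, x⟫ • ω‖ ^ 2 := norm_sq_eq_inner_sq_add_norm_sub_sq hω x
    _ ≤ (r - q ^ 2 * r / 4) ^ 2 + (q * r / 2) ^ 2 := by
      gcongr <;> linarith
    _ ≤ r ^ 2 := by nlinarith

end AxialScaling

section LatticeCaps

open scoped RealInnerProductSpace

variable {d : ℕ}

lemma mem_intPoints_of_forall_inner {p : E d} (hp : ∀ x ∈ intPoints d, ∃ z : ℤ, ⟪p, x⟫ = z) :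
    p ∈ intPoints d := fun k ↦ by
  obtain ⟨z, hz⟩ := hp _ (intVec_mem_intPoints (Pi.single k 1))
  exact ⟨z, by simpa [inner_intVec, Pi.single_apply] using hz⟩

lemma span_intPoints : Submodule.span ℝ (intPoints d) = ⊤ :=
  top_le_iff.1 (span_latticeBall (d := d) le_rfl ▸ Submodule.span_mono inter_subset_left)

lemma exists_dual_of_continuousLinearEquiv [NeZero d] (A : E d ≃L[ℝ] E d) :
    ∃ φ : E d, φ ≠ 0 ∧ (∀ x ∈ intPoints d, ∃ z : ℤ, ⟪φ, A x⟫ = z) ∧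
      ∀ c, ∃ x ∈ intPoints d, ‖A (x - c)‖ * ‖φ‖ ≤ 4 ^ d := by
  let L : AddSubgroup (E d) := (intVec d).range.map (A : E d →+ E d)
  have hL : (L : Set (E d)) = A '' intPoints d := by simp [L, intPoints_eq_range]
  have hspan : Submodule.span ℝ (L : Set (E d)) = ⊤ := by
    rw [hL]
    have h := Submodule.map_span (A : E d →ₗ[ℝ] E d) (intPoints d)
    rw [span_intPoints, Submodule.map_top, LinearMap.range_eq_top.2 A.surjective] at h
    exact h.symm
  have hfin (R : ℝ) : ((L : Set (E d)) ∩ Metric.closedBall 0 R).Finite := by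
    refine ((finite_latticeBall d (‖(A.symm : E d →L[ℝ] E d)‖ * R)).image A).subset ?_
    rw [hL]
    rintro _ ⟨⟨x, hx, rfl⟩, hxR⟩
    refine ⟨x, mem_latticeBall.2 ⟨hx, ?_⟩, rfl⟩
    calc ‖x‖ = ‖(A.symm : E d →L[ℝ] E d) (A x)‖ := by simp
      _ ≤ ‖(A.symm : E d →L[ℝ] E d)‖ * ‖A x‖ := ContinuousLinearMap.le_opNorm _ _
      _ ≤ _ := by gcongr; exact mem_closedBall_zero_iff.1 hxR
  have hne : L ≠ ⊥ := by
    intro h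
    rw [h] at hspan
    simp at hspan
  obtain ⟨φ, -, hφ0, hint, hcover⟩ := isFlat_pow_of_finrank_le d L hfin hne
    ((Submodule.finrank_le _).trans (by simp))
  refine ⟨φ, hφ0, fun x hx ↦ hint _ (hL.ge (mem_image_of_mem A hx)), fun c ↦ ?_⟩
  obtain ⟨y, hy, hyc⟩ := hcover (A c) (hspan ▸ trivial)
  obtain ⟨x, hx, rfl⟩ := hL.le hy
  exact ⟨x, hx, by rwa [map_sub, norm_sub_rev]⟩

lemma exists_mem_cap_or_dual [NeZero d] {ω : E d} (hω : ‖ω‖ = 1) {r q : ℝ} (hr : 0 < r)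
    (hq : 0 < q) (hq1 : q ≤ 1) :
    (∃ x ∈ latticeBall d r, r - q ^ 2 * r ≤ ⟪ω, x⟫) ∨
      ∃ p ∈ intPoints d, p ≠ 0 ∧ |⟪ω, p⟫| ≤ 4 * 4 ^ d / (q ^ 2 * r) ∧
        ‖p - ⟪ω, p⟫ • ω‖ ≤ 2 * 4 ^ d / (q * r) := by
  have ha : 0 < 4 / (q ^ 2 * r) := by positivity
  have hb : 0 < 2 / (q * r) := by positivity
  let A := axialScalingEquiv hω ha.ne' hb.ne'
  obtain ⟨φ, hφ0, hint, hcover⟩ := exists_dual_of_continuousLinearEquiv A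
  rcases le_or_gt (4 ^ d) ‖φ‖ with hφ | hφ
  · obtain ⟨x, hx, hxφ⟩ := hcover ((r - q ^ 2 * r / 2) • ω)
    have hA : ‖A (x - (r - q ^ 2 * r / 2) • ω)‖ ≤ 1 :=
      le_of_mul_le_mul_right (by linarith) (norm_pos_iff.2 hφ0)
    obtain ⟨hxr, hcap⟩ := mem_cap_of_norm_axialScaling_le_one hω hr hq hq1 hA
    exact .inl ⟨x, mem_latticeBall.2 ⟨hx, hxr⟩, hcap⟩
  · refine .inr ⟨A φ, mem_intPoints_of_forall_inner fun x hx ↦ ?_, by simpa using hφ0, ?_, ?_⟩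
    · obtain ⟨z, hz⟩ := hint x hx
      exact ⟨z, hz ▸ inner_axialScaling_comm ω _ _ φ x⟩
    · calc |⟪ω, A φ⟫| = |4 / (q ^ 2 * r) * ⟪ω, φ⟫| := congrArg _ (inner_axialScaling hω _ _ φ)
        _ = 4 / (q ^ 2 * r) * |⟪ω, φ⟫| := by rw [abs_mul, abs_of_pos ha]
        _ ≤ 4 / (q ^ 2 * r) * 4 ^ d := by
            gcongr; exact (abs_inner_le_norm_of_norm_eq_one hω φ).trans hφ.le
        _ = 4 * 4 ^ d / (q ^ 2 * r) := by ring
    · calc ‖A φ - ⟪ω, A φ⟫ • ω‖ = ‖(2 / (q * r)) • (φ - ⟪ω, φ⟫ • ω)‖ :=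
            congrArg _ (axialScaling_sub_inner_smul hω _ _ φ)
        _ = 2 / (q * r) * ‖φ - ⟪ω, φ⟫ • ω‖ := by rw [norm_smul, Real.norm_of_nonneg hb.le]
        _ ≤ 2 / (q * r) * 4 ^ d := by
            gcongr; exact (norm_sub_inner_smul_le hω φ).trans hφ.le
        _ = 2 * 4 ^ d / (q * r) := by ring

end LatticeCaps

section Resonance

lemma card_Icc_ceil_floor_le {a b : ℝ} (h : a ≤ b) :
    ((Finset.Icc ⌈a⌉ ⌊b⌋).card : ℝ) ≤ b - a + 1 := by
  rw [Int.card_Icc, ← Int.cast_natCast, Int.toNat_eq_max, Int.cast_max, max_le_iff]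
  push_cast
  constructor <;> linarith [Int.floor_le b, Int.le_ceil a]

/-- The integers `z` for which `z / M` is within `c / (m * M)` of a fraction `k / m` in
`[-1, 1]`. -/
def resonantIntegers (M c : ℝ) (m : ℕ) : Finset ℤ :=
  (Finset.Icc (-(m : ℤ)) m).biUnion fun k ↦ Finset.Icc ⌈(M * k - c) / m⌉ ⌊(M * k + c) / m⌋

variable {M c : ℝ}

lemma mem_resonantIntegers {m : ℕ} (hm : 0 < m) {z : ℤ} :
    z ∈ resonantIntegers M c m ↔ ∃ k : ℤ, |k| ≤ m ∧ |m * z - M * k| ≤ c := by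
  have hm' : (0 : ℝ) < m := by exact_mod_cast hm
  simp only [resonantIntegers, Finset.mem_biUnion, Finset.mem_Icc, Int.ceil_le, Int.le_floor,
    div_le_iff₀ hm', le_div_iff₀ hm', abs_le]
  refine exists_congr fun k ↦ and_congr_right fun _ ↦ ⟨fun h ↦ ?_, fun h ↦ ?_⟩ <;>
    constructor <;> linarith

lemma card_resonantIntegers_le (hc : 0 ≤ c) {m : ℕ} (hm : 0 < m) :
    ((resonantIntegers M c m).card : ℝ) ≤ 6 * c + 3 * m := by
  have hm' : (1 : ℝ) ≤ m := by exact_mod_cast hm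
  have hcard : (Finset.Icc (-(m : ℤ)) m).card = 2 * m + 1 := by rw [Int.card_Icc]; lia
  calc ((resonantIntegers M c m).card : ℝ)
      ≤ ∑ k ∈ Finset.Icc (-(m : ℤ)) m,
          ((Finset.Icc ⌈(M * k - c) / m⌉ ⌊(M * k + c) / m⌋).card : ℝ) := by
        exact_mod_cast Finset.card_biUnion_le
    _ ≤ ∑ _ ∈ Finset.Icc (-(m : ℤ)) m, (2 * c / m + 1) := by
        refine Finset.sum_le_sum fun k _ ↦ ?_
        exact (card_Icc_ceil_floor_le (by gcongr; linarith)).trans_eq (by ring)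
    _ = (2 * m + 1) * (2 * c / m + 1) := by simp [hcard, mul_add]
    _ ≤ 3 * m * (2 * c / m + 1) := by gcongr; linarith
    _ = 6 * c + 3 * m := by field_simp; ring

variable (ι : Type*) [Fintype ι] [DecidableEq ι]

/-- The integer vectors `z` for which the coordinates of `z / M` have simultaneous rational
approximations, of quality `c`, with a common denominator at most `T`. -/
def resonantVectors (M c : ℝ) (T : ℕ) : Finset (ι → ℤ) :=
  (Finset.Icc 1 T).biUnion fun m ↦ Fintype.piFinset fun _ ↦ resonantIntegers M c m

lemma card_resonantVectors_le (hc : 0 ≤ c) (T : ℕ) :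
    ((resonantVectors ι M c T).card : ℝ) ≤ T * (6 * c + 3 * T) ^ Fintype.card ι := by
  calc ((resonantVectors ι M c T).card : ℝ)
      ≤ ∑ m ∈ Finset.Icc 1 T, ((resonantIntegers M c m).card : ℝ) ^ Fintype.card ι := by
        refine (Nat.cast_le.2 Finset.card_biUnion_le).trans_eq ?_
        simp [Fintype.card_piFinset]
    _ ≤ ∑ _ ∈ Finset.Icc 1 T, (6 * c + 3 * T) ^ Fintype.card ι := by
        refine Finset.sum_le_sum fun m hm ↦ ?_
        obtain ⟨hm1, hmT⟩ := Finset.mem_Icc.1 hm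
        gcongr
        exact (card_resonantIntegers_le hc hm1).trans (by gcongr)
    _ = T * (6 * c + 3 * T) ^ Fintype.card ι := by simp

end Resonance

section Grid

open NormedSpace
open scoped RealInnerProductSpace

variable {d n M : ℕ} {z z' : Fin n → ℤ}

lemma norm_le_mul_of_forall_abs_apply_le {x : E d} {c : ℝ} (hx : ∀ j, |x j| ≤ c) :
    ‖x‖ ≤ d * c := by
  calc ‖x‖ = ‖∑ j, x j • EuclideanSpace.basisFun (Fin d) ℝ j‖ := by
        simpa using congrArg norm ((EuclideanSpace.basisFun (Fin d) ℝ).sum_repr x).symm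
    _ ≤ ∑ j, ‖x j • EuclideanSpace.basisFun (Fin d) ℝ j‖ := norm_sum_le _ _
    _ ≤ ∑ _ : Fin d, c := Finset.sum_le_sum fun j _ ↦ by simpa [norm_smul] using hx j
    _ = d * c := by simp

/-- The vector `(M, z)`; the directions of these vectors, with `z` in `[1, M] ^ n`, are a
well-separated family of points of the sphere. -/
def gridVec (M : ℕ) (z : Fin n → ℤ) : E (n + 1) := intVec (n + 1) (Fin.cons M z)

@[simp] lemma gridVec_zero : gridVec M z 0 = M := by simp [gridVec]

@[simp] lemma gridVec_succ (j : Fin n) : gridVec M z j.succ = z j := by simp [gridVec]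

lemma le_norm_gridVec : M ≤ ‖gridVec M z‖ := by
  simpa using PiLp.norm_apply_le (gridVec M z) 0

lemma gridVec_ne_zero (hM : 0 < M) : gridVec M z ≠ 0 := by
  refine norm_pos_iff.1 (lt_of_lt_of_le ?_ le_norm_gridVec)
  exact_mod_cast hM

lemma norm_gridVec_le (hz : ∀ j, |z j| ≤ M) : ‖gridVec M z‖ ≤ (n + 1) * M := by
  have hz' (j) : |(z j : ℝ)| ≤ M := by exact_mod_cast hz j
  have hcoord (j : Fin (n + 1)) : |gridVec M z j| ≤ M :=
    Fin.cases (by simp) (fun j ↦ by simpa using hz' j) j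
  simpa using norm_le_mul_of_forall_abs_apply_le hcoord

lemma one_le_mul_norm_normalize_gridVec_sub (hM : 0 < M) (hz : ∀ j, |z j| ≤ M)
    (hz' : ∀ j, |z' j| ≤ M) (hne : z ≠ z') :
    1 ≤ 2 * ((n + 1) * M) * ‖normalize (gridVec M z) - normalize (gridVec M z')‖ := by
  obtain ⟨j, hj⟩ := Function.ne_iff.1 hne
  have hM' : (0 : ℝ) < M := by exact_mod_cast hM
  set a := ‖gridVec M z‖
  set a' := ‖gridVec M z'‖
  have ha : 0 < a := norm_pos_iff.2 (gridVec_ne_zero hM)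
  have ha' : 0 < a' := norm_pos_iff.2 (gridVec_ne_zero hM)
  set v := normalize (gridVec M z) - normalize (gridVec M z')
  have hv0 : v 0 = a⁻¹ * M - a'⁻¹ * M := by simp [v, NormedSpace.normalize, a, a']
  have hvj : v j.succ = a⁻¹ * z j - a'⁻¹ * z' j := by simp [v, NormedSpace.normalize, a, a']
  have hratio : |(z' j : ℝ) / M| ≤ 1 := by
    rw [abs_div, abs_of_pos hM', div_le_one hM']
    exact_mod_cast hz' j
  have hcoord (k) : |v k| ≤ ‖v‖ := PiLp.norm_apply_le v k
  calc (1 : ℝ) ≤ |(z j : ℝ) - z' j| := by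
        exact_mod_cast Int.one_le_abs (sub_ne_zero.2 hj)
    _ = |a * (v j.succ - z' j / M * v 0)| := by rw [hv0, hvj]; congr 1; field_simp; ring
    _ ≤ a * (|v j.succ| + |(z' j : ℝ) / M| * |v 0|) := by
        rw [abs_mul, abs_of_pos ha, ← abs_mul]
        gcongr
        exact abs_sub _ _
    _ ≤ (n + 1) * M * (‖v‖ + 1 * ‖v‖) := by
        gcongr
        exacts [norm_gridVec_le hz, hcoord _, hcoord _]
    _ = 2 * ((n + 1) * M) * ‖v‖ := by ring

lemma abs_le_abs_of_abs_sub_mul_le {P Q : ℤ} {s N x e : ℝ} (hP : |P - s * N| ≤ e)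
    (hQ : |Q - s * x| ≤ e) (hx : |x| ≤ N) (he : e < 1 / 2) : |Q| ≤ |P| := by
  have hsx : |s * x| ≤ |s * N| := by
    rw [abs_mul, abs_mul]
    exact mul_le_mul_of_nonneg_left (hx.trans (le_abs_self N)) (abs_nonneg s)
  have hQP : |(Q : ℝ)| < |(P : ℝ)| + 1 := by
    have := abs_sub_abs_le_abs_sub (Q : ℝ) (s * x)
    have := abs_sub_abs_le_abs_sub (s * N) (P : ℝ)
    rw [abs_sub_comm] at this
    linarith
  exact Int.lt_add_one_iff.1 (by exact_mod_cast hQP)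

lemma abs_mul_sub_mul_le {P Q s N x e : ℝ} (hP : |P - s * N| ≤ e) (hQ : |Q - s * x| ≤ e)
    (hx : |x| ≤ N) : |P * x - N * Q| ≤ 2 * N * e := by
  have hN : 0 ≤ N := (abs_nonneg x).trans hx
  calc |P * x - N * Q| = |(P - s * N) * x - N * (Q - s * x)| := by congr 1; ring
    _ ≤ |P - s * N| * |x| + N * |Q - s * x| := by
        rw [← abs_mul, ← abs_of_nonneg hN, ← abs_mul, abs_of_nonneg hN]
        exact abs_sub _ _
    _ ≤ e * N + N * e := by
        gcongr
        exact (abs_nonneg _).trans hP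
    _ = 2 * N * e := by ring

lemma mem_resonantVectors_of_norm_sub_smul_le {T : ℕ} (hz : ∀ j, |z j| ≤ M) {p : E (n + 1)}
    (hp : p ∈ intPoints (n + 1)) (hp0 : p ≠ 0) {s e : ℝ} (he : e < 1 / 2)
    (hpe : ‖p - s • gridVec M z‖ ≤ e) (hT : |s| * M + e < T + 1) :
    z ∈ resonantVectors (Fin n) M (2 * M * e) T := by
  choose P hP using hp
  have hclose (j) : |P j - s * gridVec M z j| ≤ e := by
    simpa [hP] using (PiLp.norm_apply_le (p - s • gridVec M z) j).trans hpe
  have hclose0 : |P 0 - s * M| ≤ e := by simpa using hclose 0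
  have hclosej (j : Fin n) : |P j.succ - s * z j| ≤ e := by simpa using hclose j.succ
  have hzM (j) : |(z j : ℝ)| ≤ M := by exact_mod_cast hz j
  have hPle (j : Fin n) : |P j.succ| ≤ |P 0| :=
    abs_le_abs_of_abs_sub_mul_le hclose0 (hclosej j) (hzM j) he
  have hP0 : P 0 ≠ 0 := fun h0 ↦ hp0 <| by
    ext j
    refine (hP j).trans (Fin.cases (by simp [h0]) (fun j ↦ ?_) j)
    have := hPle j
    simp_all
  have hPT : (P 0).natAbs ≤ T := by
    have habs := abs_sub_abs_le_abs_sub (P 0 : ℝ) (s * M)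
    rw [abs_mul, Nat.abs_cast] at habs
    have hlt : |(P 0 : ℝ)| < T + 1 := by linarith
    rw [← Int.cast_abs] at hlt
    have : |P 0| < T + 1 := by exact_mod_cast hlt
    rw [Int.abs_eq_natAbs] at this
    lia
  have hpos : 0 < (P 0).natAbs := Int.natAbs_pos.2 hP0
  refine Finset.mem_biUnion.2 ⟨(P 0).natAbs, Finset.mem_Icc.2 ⟨hpos, hPT⟩,
    Fintype.mem_piFinset.2 fun j ↦ (mem_resonantIntegers hpos).2 ⟨(P 0).sign * P j.succ, ?_, ?_⟩⟩
  · rw [abs_mul, Int.abs_sign_of_ne_zero hP0, one_mul, Int.natCast_natAbs]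
    exact hPle j
  · have hsign : |((P 0).sign : ℝ)| = 1 := by exact_mod_cast Int.abs_sign_of_ne_zero hP0
    calc |((P 0).natAbs : ℝ) * z j - M * ((P 0).sign * P j.succ : ℤ)|
        = |((P 0).sign : ℝ) * (P 0 * z j - M * P j.succ)| := by
          rw [← Int.cast_natCast (P 0).natAbs, ← Int.sign_mul_self_eq_natAbs]
          push_cast
          congr 1
          ring
      _ = |(P 0 : ℝ) * z j - M * P j.succ| := by rw [abs_mul, hsign, one_mul]
      _ ≤ 2 * M * e := abs_mul_sub_mul_le hclose0 (hclosej j) (hzM j)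

lemma mem_resonantVectors_of_dual {T : ℕ} (hM : 0 < M) (hz : ∀ j, |z j| ≤ M) {ω p : E (n + 1)}
    {δ τ β e : ℝ} (hω : ‖ω - normalize (gridVec M z)‖ ≤ δ) (hp : p ∈ intPoints (n + 1))
    (hp0 : p ≠ 0) (hτ : |⟪ω, p⟫| ≤ τ) (hβ : ‖p - ⟪ω, p⟫ • ω‖ ≤ β) (he : β + δ * τ ≤ e)
    (he2 : e < 1 / 2) (hT : τ + e < T + 1) : z ∈ resonantVectors (Fin n) M (2 * M * e) T := by
  have hg : 0 < ‖gridVec M z‖ := norm_pos_iff.2 (gridVec_ne_zero hM)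
  refine mem_resonantVectors_of_norm_sub_smul_le hz hp hp0 (s := ⟪ω, p⟫ * ‖gridVec M z‖⁻¹) he2 ?_ ?_
  · calc ‖p - (⟪ω, p⟫ * ‖gridVec M z‖⁻¹) • gridVec M z‖
        = ‖(p - ⟪ω, p⟫ • ω) + ⟪ω, p⟫ • (ω - normalize (gridVec M z))‖ := by
          rw [NormedSpace.normalize, smul_sub, smul_smul]; abel_nf
      _ ≤ ‖p - ⟪ω, p⟫ • ω‖ + |⟪ω, p⟫| * ‖ω - normalize (gridVec M z)‖ := by
          rw [← Real.norm_eq_abs, ← norm_smul]; exact norm_add_le _ _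
      _ ≤ β + τ * δ := by gcongr; exact (abs_nonneg _).trans hτ
      _ ≤ e := by rwa [mul_comm τ]
  · have hratio : ‖gridVec M z‖⁻¹ * M ≤ 1 := by
      rw [inv_mul_le_iff₀ hg, mul_one]
      exact le_norm_gridVec
    have hs : |⟪ω, p⟫ * ‖gridVec M z‖⁻¹| * M ≤ τ := by
      rw [abs_mul, abs_of_pos (inv_pos.2 hg), mul_assoc]
      exact (mul_le_of_le_one_right (abs_nonneg _) hratio).trans hτ
    linarith

end Grid

section LocalFacets

open NormedSpace
open scoped RealInnerProductSpace

variable {H : Type*} [NormedAddCommGroup H] [InnerProductSpace ℝ H] {V : Set H} {r q : ℝ}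
  {ω₀ : H}

lemma inner_normalize_left (u x : H) : ⟪normalize u, x⟫ = ‖u‖⁻¹ * ⟪u, x⟫ :=
  real_inner_smul_left _ _ _

lemma norm_sub_smul_le_of_mem_cap (hr : 0 ≤ r) (hq : 0 ≤ q) {v x : H} (hv : ‖v‖ = 1)
    (hx : ‖x‖ ≤ r) (hcap : r - q ^ 2 * r ≤ ⟪v, x⟫) : ‖x - r • v‖ ≤ 3 / 2 * q * r := by
  refine (sq_le_sq₀ (norm_nonneg _) (by positivity)).1 ?_
  calc ‖x - r • v‖ ^ 2 = ‖x‖ ^ 2 - 2 * (r * ⟪v, x⟫) + r ^ 2 := by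
        rw [norm_sub_sq_real, real_inner_smul_right, norm_smul, hv, Real.norm_of_nonneg hr,
          mul_one, real_inner_comm]
    _ ≤ r ^ 2 - 2 * (r * (r - q ^ 2 * r)) + r ^ 2 := by gcongr
    _ = 2 * (q * r) ^ 2 := by ring
    _ ≤ (3 / 2 * q * r) ^ 2 := by nlinarith [sq_nonneg (q * r)]

lemma ne_zero_of_inv_le_inner (hr : 0 < r) {u : H} (huω : r⁻¹ ≤ ⟪u, ω₀⟫) : u ≠ 0 := by
  rintro rfl
  rw [inner_zero_left] at huω
  exact (inv_pos.2 hr).not_ge huω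

lemma inv_smul_mem_polarSet (hr : 0 < r) (hV : ∀ x ∈ V, ‖x‖ ≤ r) (hω₀ : ‖ω₀‖ = 1) :
    r⁻¹ • ω₀ ∈ polarSet V := by
  intro x hx
  rw [real_inner_smul_left, inv_mul_le_iff₀ hr, mul_one]
  exact ((le_abs_self _).trans (abs_inner_le_norm_of_norm_eq_one hω₀ x)).trans (hV x hx)

lemma norm_normalize_sub_le_of_mem_polarSet (hr : 0 < r) (hq : 0 ≤ q) (hω₀ : ‖ω₀‖ = 1) {u x : H}
    (hu : u ∈ polarSet V) (huω : r⁻¹ ≤ ⟪u, ω₀⟫) (hx : x ∈ V)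
    (hcap : r - q ^ 2 * r ≤ ⟪normalize u, x⟫) : ‖normalize u - ω₀‖ ≤ 3 / 2 * q := by
  have hu0 : u ≠ 0 := ne_zero_of_inv_le_inner hr huω
  have hinner : 1 - q ^ 2 ≤ ⟪normalize u, ω₀⟫ := by
    calc 1 - q ^ 2 = (r - q ^ 2 * r) * r⁻¹ := by field_simp
      _ ≤ ‖u‖⁻¹ * ⟪u, x⟫ * r⁻¹ := by rw [← inner_normalize_left]; gcongr
      _ ≤ ‖u‖⁻¹ * 1 * ⟪u, ω₀⟫ := by gcongr; exact hu x hx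
      _ = ⟪normalize u, ω₀⟫ := by rw [mul_one, inner_normalize_left]
  refine (sq_le_sq₀ (norm_nonneg _) (by positivity)).1 ?_
  rw [norm_sub_sq_real, norm_normalize_eq_one_iff.2 hu0, hω₀]
  nlinarith [sq_nonneg q]

/-- The normals `u` considered here form a connected set, on which the angle to `ω₀` vanishes
somewhere and never equals `3 * q`. -/
lemma norm_normalize_sub_lt_of_forall_mem_cap (hr : 0 < r) (hV : ∀ x ∈ V, ‖x‖ ≤ r) (hq : 0 < q)
    (hω₀ : ‖ω₀‖ = 1)
    (hcap : ∀ ω : H, ‖ω‖ = 1 → ‖ω - ω₀‖ ≤ 3 * q → ∃ x ∈ V, r - q ^ 2 * r ≤ ⟪ω, x⟫) {u : H}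
    (hu : u ∈ polarSet V) (huω : r⁻¹ ≤ ⟪u, ω₀⟫) : ‖normalize u - ω₀‖ < 3 * q := by
  set S := polarSet V ∩ {γ | r⁻¹ ≤ ⟪γ, ω₀⟫}
  have hS : Convex ℝ S := (convex_polarSet V).inter
    (convex_halfSpace_ge ⟨fun _ _ ↦ inner_add_left _ _ _, fun _ _ ↦ real_inner_smul_left _ _ _⟩ _)
  have hS0 : ∀ γ ∈ S, γ ≠ 0 := fun γ hγ ↦ ne_zero_of_inv_le_inner hr hγ.2
  have hcont : ContinuousOn (fun γ : H ↦ ‖NormedSpace.normalize γ - ω₀‖) S :=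
    (((continuousOn_id.norm.inv₀ fun γ hγ ↦ norm_ne_zero_iff.2 (hS0 γ hγ)).smul
      continuousOn_id).sub continuousOn_const).norm
  have hmem : r⁻¹ • ω₀ ∈ S :=
    ⟨inv_smul_mem_polarSet hr hV hω₀, by simp [real_inner_smul_left, hω₀]⟩
  have hzero : ‖normalize (r⁻¹ • ω₀) - ω₀‖ = 0 := by
    rw [normalize_smul_of_pos (inv_pos.2 hr), normalize_eq_self_of_norm_eq_one hω₀, sub_self,
      norm_zero]
  by_contra! hlarge
  obtain ⟨γ, hγ, heq⟩ := hS.isPreconnected.intermediate_value hmem ⟨hu, huω⟩ hcont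
    (show 3 * q ∈ Icc _ _ from ⟨by rw [hzero]; positivity, hlarge⟩)
  beta_reduce at heq
  obtain ⟨x, hx, hxγ⟩ := hcap _ (norm_normalize_eq_one_iff.2 (hS0 γ hγ)) heq.le
  have hsmall := norm_normalize_sub_le_of_mem_polarSet hr hq.le hω₀ hγ.1 hγ.2 hx hxγ
  linarith

lemma exists_facetNormal_forall_contact_near [FiniteDimensional ℝ H] (hfin : V.Finite)
    (hb : Bornology.IsBounded (polarSet V)) (hr : 0 < r) (hV : ∀ x ∈ V, ‖x‖ ≤ r) (hq : 0 < q)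
    (hω₀ : ‖ω₀‖ = 1)
    (hcap : ∀ ω : H, ‖ω‖ = 1 → ‖ω - ω₀‖ ≤ 3 * q → ∃ x ∈ V, r - q ^ 2 * r ≤ ⟪ω, x⟫) :
    ∃ u ∈ facetNormals V, ∀ x ∈ contact V u, ‖x - r • ω₀‖ ≤ 3 * q * r := by
  obtain ⟨u, hu, huω⟩ := exists_facetNormal hfin hb (inv_smul_mem_polarSet hr hV hω₀) ω₀
  rw [real_inner_smul_left, real_inner_self_eq_norm_sq, hω₀, one_pow, mul_one] at huω
  have hu0 : u ≠ 0 := ne_zero_of_inv_le_inner hr huω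
  set v := normalize u
  have hv : ‖v‖ = 1 := norm_normalize_eq_one_iff.2 hu0
  obtain ⟨x', hx', hvx'⟩ := hcap v hv
    (norm_normalize_sub_lt_of_forall_mem_cap hr hV hq hω₀ hcap hu.1 huω).le
  have hvω : ‖v - ω₀‖ ≤ 3 / 2 * q :=
    norm_normalize_sub_le_of_mem_polarSet hr hq.le hω₀ hu.1 huω hx' hvx'
  refine ⟨u, hu, fun x ⟨hx, hux⟩ ↦ ?_⟩
  have hvx : r - q ^ 2 * r ≤ ⟪v, x⟫ := by
    refine hvx'.trans ?_
    rw [inner_normalize_left, inner_normalize_left, hux]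
    gcongr
    exact hu.1 x' hx'
  calc ‖x - r • ω₀‖ = ‖(x - r • v) + r • (v - ω₀)‖ := by rw [smul_sub]; abel_nf
    _ ≤ ‖x - r • v‖ + r * ‖v - ω₀‖ := by
      rw [← Real.norm_of_nonneg hr.le, ← norm_smul, Real.norm_of_nonneg hr.le]
      exact norm_add_le _ _
    _ ≤ 3 / 2 * q * r + r * (3 / 2 * q) := by
      gcongr
      exact norm_sub_smul_le_of_mem_cap hr.le hq.le hv (hV x hx) hvx
    _ = 3 * q * r := by ring

end LocalFacets

section LowerBound

open NormedSpace
open scoped RealInnerProductSpace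

variable {n i M T : ℕ} {r q e : ℝ}

lemma exists_facetNormal_contact_latticeBall_near (hM : 0 < M) (hr : 1 ≤ r) (hq : 0 < q)
    (hq1 : q ≤ 1) (he : 14 * 4 ^ (n + 1) / (q * r) ≤ e) (he2 : e < 1 / 2)
    (hT : 4 * 4 ^ (n + 1) / (q ^ 2 * r) + e < T + 1) {z : Fin n → ℤ} (hz : ∀ j, |z j| ≤ M)
    (hzB : z ∉ resonantVectors (Fin n) M (2 * M * e) T) :
    ∃ u ∈ facetNormals (latticeBall (n + 1) r), ∀ x ∈ contact (latticeBall (n + 1) r) u,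
      ‖x - r • normalize (gridVec M z)‖ ≤ 3 * q * r := by
  have hr0 : 0 < r := one_pos.trans_le hr
  have hb : Bornology.IsBounded (polarSet (latticeBall (n + 1) r)) :=
    isBounded_polarSet_of_neg_mem (fun _ ↦ neg_mem_latticeBall) (span_latticeBall hr)
  refine exists_facetNormal_forall_contact_near (finite_latticeBall _ r) hb hr0
    (fun x hx ↦ (mem_latticeBall.1 hx).2) hq
    (norm_normalize_eq_one_iff.2 (gridVec_ne_zero hM)) fun ω hω hωz ↦ ?_
  refine (exists_mem_cap_or_dual hω hr0 hq hq1).resolve_right ?_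
  rintro ⟨p, hp, hp0, hτ, hβ⟩
  refine hzB (mem_resonantVectors_of_dual hM hz hωz hp hp0 hτ hβ (le_trans ?_ he) he2 hT)
  refine le_of_eq ?_
  field_simp
  ring

lemma eq_of_norm_sub_smul_normalize_gridVec_le (hM : 0 < M) (hMq : 16 * (n + 1) * M * q ≤ 1)
    (hr : 0 < r) {z z' : Fin n → ℤ} (hz : ∀ j, |z j| ≤ M) (hz' : ∀ j, |z' j| ≤ M) {x : E (n + 1)}
    (hx : ‖x - r • normalize (gridVec M z)‖ ≤ 3 * q * r)
    (hx' : ‖x - r • normalize (gridVec M z')‖ ≤ 3 * q * r) : z = z' := by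
  by_contra! hne
  set v := normalize (gridVec M z)
  set v' := normalize (gridVec M z')
  have hvv' : r * ‖v - v'‖ ≤ r * (6 * q) := by
    calc r * ‖v - v'‖ = ‖(x - r • v') - (x - r • v)‖ := by
          rw [sub_sub_sub_cancel_left, ← smul_sub, norm_smul, Real.norm_of_nonneg hr.le]
      _ ≤ ‖x - r • v'‖ + ‖x - r • v‖ := norm_sub_le _ _
      _ ≤ r * (6 * q) := by linarith
  have hsep : 1 ≤ 12 / 16 * (16 * (n + 1) * M * q) := by
    calc 1 ≤ 2 * ((n + 1) * M) * ‖v - v'‖ := one_le_mul_norm_normalize_gridVec_sub hM hz hz' hne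
      _ ≤ 2 * ((n + 1) * M) * (6 * q) := by gcongr; exact le_of_mul_le_mul_left hvv' hr
      _ = 12 / 16 * (16 * (n + 1) * M * q) := by ring
  linarith

lemma pow_le_ncard_exposedFaces_latticeBall_add (hM : 0 < M) (hi : i ≤ n) (hr : 1 ≤ r)
    (hq : 0 < q) (hq1 : q ≤ 1) (hMq : 16 * (n + 1) * M * q ≤ 1)
    (he : 14 * 4 ^ (n + 1) / (q * r) ≤ e) (he2 : e < 1 / 2)
    (hT : 4 * 4 ^ (n + 1) / (q ^ 2 * r) + e < T + 1) :
    (M : ℝ) ^ n ≤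
      (exposedFaces (latticeBall (n + 1) r) i).ncard + T * (12 * M * e + 3 * T) ^ n := by
  have hr0 : 0 < r := one_pos.trans_le hr
  have he0 : 0 ≤ e := le_trans (by positivity) he
  set V := latticeBall (n + 1) r
  set Z : Finset (Fin n → ℤ) := Fintype.piFinset fun _ ↦ Finset.Icc 1 (M : ℤ)
  set B := resonantVectors (Fin n) M (2 * M * e) T
  have hZ : ∀ z ∈ Z, ∀ j, |z j| ≤ M := fun z hz j ↦ by
    have := Finset.mem_Icc.1 (Fintype.mem_piFinset.1 hz j)
    exact abs_le.2 ⟨by lia, this.2⟩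
  have hface : ∀ z ∈ Z \ B, ∃ W ∈ exposedFaces V i,
      ∀ x ∈ W, ‖x - r • normalize (gridVec M z)‖ ≤ 3 * q * r := fun z hz ↦ by
    obtain ⟨hzZ, hzB⟩ := Finset.mem_sdiff.1 hz
    obtain ⟨u, hu, hnear⟩ :=
      exists_facetNormal_contact_latticeBall_near hM hr hq hq1 he he2 hT (hZ z hzZ) hzB
    obtain ⟨W, hW, hWu⟩ := exists_exposedFace_subset (finite_latticeBall _ r)
      (contact_mem_exposedFaces (by simp) hu) hi
    exact ⟨W, hW, fun x hx ↦ hnear x (hWu hx)⟩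
  choose! W hW hWnear using hface
  have hinj : InjOn W (Z \ B : Finset _) := fun z hz z' hz' hWz ↦ by
    obtain ⟨x, hx⟩ := (hW z hz).1
    exact eq_of_norm_sub_smul_normalize_gridVec_le hM hMq hr0 (hZ z (Finset.mem_sdiff.1 hz).1)
      (hZ z' (Finset.mem_sdiff.1 hz').1) (hWnear z hz x hx) (hWnear z' hz' x (hWz ▸ hx))
  have hcard : (Z \ B).card ≤ (exposedFaces V i).ncard := by
    rw [← Set.ncard_coe_finset, ← hinj.ncard_image]
    exact ncard_le_ncard (image_subset_iff.2 hW) (finite_exposedFaces (finite_latticeBall _ r) i)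
  have hB : (B.card : ℝ) ≤ T * (12 * M * e + 3 * T) ^ n := by
    refine (card_resonantVectors_le (Fin n) (by positivity) T).trans_eq ?_
    rw [Fintype.card_fin]
    ring
  calc (M : ℝ) ^ n = Z.card := by simp [Z]
    _ ≤ (Z \ B).card + B.card := by
      exact_mod_cast Nat.sub_le_iff_le_add.1 (Finset.le_card_sdiff B Z)
    _ ≤ (exposedFaces V i).ncard + T * (12 * M * e + 3 * T) ^ n := by gcongr

/-- In `hH`, the summand `168 = 12 * 14` comes from `12 * M * (14 * K / (H * s))`, and `48 / b` from
`3 * T`. -/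
lemma resonant_count_le_half {K H b s : ℝ} (hK : 0 < K) (hb : 0 < b) (hs : 0 < s) (hH1 : 1 ≤ H)
    (hH : 16 * K ^ (n + 1) * (168 + 48 / b) ^ n ≤ H) (hM : b * s ^ (n + 1) / H / 2 ≤ M)
    (hT : T ≤ 2 * (4 * K * s ^ n / H ^ 2)) :
    T * (12 * M * (14 * K / (H * s)) + 3 * T) ^ n ≤ (M : ℝ) ^ n / 2 := by
  have : 0 < H := one_pos.trans_le hH1
  have hTM : (T : ℝ) ≤ K * M / (H * s) * (16 / b) := by
    calc (T : ℝ) ≤ 2 * (4 * K * s ^ n / H ^ 2) := hT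
      _ = K * (b * s ^ (n + 1) / H / 2) / (H * s) * (16 / b) := by field_simp; ring
      _ ≤ K * M / (H * s) * (16 / b) := by gcongr
  have hsum : 12 * M * (14 * K / (H * s)) + 3 * T ≤ K * M / (H * s) * (168 + 48 / b) := by
    calc 12 * M * (14 * K / (H * s)) + 3 * T
        ≤ 12 * M * (14 * K / (H * s)) + 3 * (K * M / (H * s) * (16 / b)) := by gcongr
      _ = K * M / (H * s) * (168 + 48 / b) := by ring
  calc T * (12 * M * (14 * K / (H * s)) + 3 * T) ^ n
      ≤ 2 * (4 * K * s ^ n / H ^ 2) * (K * M / (H * s) * (168 + 48 / b)) ^ n := by gcongr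
    _ = 16 * K ^ (n + 1) * (168 + 48 / b) ^ n / H ^ (n + 2) * ((M : ℝ) ^ n / 2) := by
      rw [mul_pow, div_pow, mul_pow, mul_pow]
      field_simp
      ring
    _ ≤ 1 * ((M : ℝ) ^ n / 2) := by
      gcongr
      rw [div_le_one (by positivity)]
      exact hH.trans (le_self_pow₀ hH1 (by lia))
    _ = (M : ℝ) ^ n / 2 := one_mul _

/-- The cap parameter is `q = H / s ^ (n + 1)`, so that `q * r = H * s` and
`q ^ 2 * r = H ^ 2 / s ^ n`. -/
lemma mul_pow_le_ncard_exposedFaces_latticeBall (hn : 1 ≤ n) (hi : i ≤ n) {b H s : ℝ}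
    (hb : b = 1 / (16 * (n + 1))) (hH1 : 1 ≤ H)
    (hH : 16 * (4 ^ (n + 1)) ^ (n + 1) * (168 + 48 / b) ^ n ≤ H) (hHs : H ^ 2 ≤ s)
    (hKs : 56 * 4 ^ (n + 1) ≤ s) (hbs : H ≤ b * s) :
    (b / (2 * H)) ^ n / 2 * s ^ (n * (n + 1)) ≤
      (exposedFaces (latticeBall (n + 1) (s ^ (n + 2))) i).ncard := by
  have hb0 : 0 < b := by rw [hb]; positivity
  have hH0 : 0 < H := one_pos.trans_le hH1
  have hH_le : H ≤ s := (le_self_pow₀ hH1 two_ne_zero).trans hHs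
  have hs1 : 1 ≤ s := hH1.trans hH_le
  have hs0 : 0 < s := one_pos.trans_le hs1
  have hs_le : s ≤ s ^ (n + 1) := le_self_pow₀ hs1 n.succ_ne_zero
  set K : ℝ := 4 ^ (n + 1)
  have hK1 : 1 ≤ K := one_le_pow₀ (by norm_num)
  set q := H / s ^ (n + 1) with hq
  have hqr : q * s ^ (n + 2) = H * s := by rw [hq]; field_simp; ring
  have hτ : 4 * K / (q ^ 2 * s ^ (n + 2)) = 4 * K * s ^ n / H ^ 2 := by
    rw [hq]; field_simp; ring
  set M := ⌊b * s ^ (n + 1) / H⌋₊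
  have hM1 : 1 ≤ b * s ^ (n + 1) / H := by
    rw [one_le_div₀ hH0]
    exact hbs.trans (by gcongr)
  have hMq : 16 * (n + 1) * M * q ≤ 1 := by
    calc 16 * (n + 1) * M * q ≤ 16 * (n + 1) * (b * s ^ (n + 1) / H) * q := by
          gcongr
          exact Nat.floor_le (by positivity)
      _ = 1 := by rw [hb, hq]; field_simp
  have he : 14 * K / (H * s) ≤ 1 / 4 := by
    rw [div_le_iff₀ (by positivity)]
    nlinarith
  set T := ⌈4 * K * s ^ n / H ^ 2⌉₊
  have hT1 : 1 ≤ 4 * K * s ^ n / H ^ 2 := by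
    rw [one_le_div₀ (by positivity)]
    nlinarith [le_self_pow₀ hs1 (Nat.one_le_iff_ne_zero.1 hn)]
  have hcount := pow_le_ncard_exposedFaces_latticeBall_add (T := T) (Nat.floor_pos.2 hM1) hi
    (one_le_pow₀ hs1) (by positivity) ((div_le_one (by positivity)).2 (hH_le.trans hs_le)) hMq
    (by rw [hqr]) (he.trans_lt (by norm_num))
    (by rw [hτ]; linarith [Nat.le_ceil (4 * K * s ^ n / H ^ 2)])
  have hM2 : b * s ^ (n + 1) / H / 2 ≤ M := (Nat.div_two_lt_floor hM1).le
  have hhalf := resonant_count_le_half (by positivity) hb0 hs0 hH1 hH hM2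
    (Nat.ceil_le_two_mul (by linarith))
  calc (b / (2 * H)) ^ n / 2 * s ^ (n * (n + 1)) = (b * s ^ (n + 1) / H / 2) ^ n / 2 := by
        rw [mul_comm n, pow_mul, ← mul_div_right_comm, ← mul_pow]
        congr 2
        ring
    _ ≤ (M : ℝ) ^ n / 2 := by gcongr
    _ ≤ (exposedFaces (latticeBall (n + 1) (s ^ (n + 2))) i).ncard := by linarith

lemma exists_mul_pow_le_ncard_exposedFaces_latticeBall (hn : 1 ≤ n) (hi : i ≤ n) :
    ∃ c > 0, ∀ᶠ s : ℝ in atTop, c * s ^ (n * (n + 1)) ≤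
      (exposedFaces (latticeBall (n + 1) (s ^ (n + 2))) i).ncard := by
  obtain ⟨b, hb⟩ : ∃ b : ℝ, b = 1 / (16 * (n + 1)) := ⟨_, rfl⟩
  have hb0 : 0 < b := by rw [hb]; positivity
  obtain ⟨H, hH1, hH⟩ : ∃ H : ℝ, 1 ≤ H ∧
      16 * (4 ^ (n + 1)) ^ (n + 1) * (168 + 48 / b) ^ n ≤ H :=
    ⟨_, le_max_left _ _, le_max_right _ _⟩
  refine ⟨(b / (2 * H)) ^ n / 2, by positivity, ?_⟩
  filter_upwards [eventually_ge_atTop (H ^ 2), eventually_ge_atTop (56 * 4 ^ (n + 1)),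
    eventually_ge_atTop (H / b)] with s hHs hKs hbs
  exact mul_pow_le_ncard_exposedFaces_latticeBall hn hi hb hH1 hH hHs hKs
    ((div_le_iff₀' hb0).1 hbs)

end LowerBound

section FacesOfBall

lemma numFaces_integerHull_closedBall (d i : ℕ) (r : ℝ) :
    numFaces d i (integerHull d (Metric.closedBall 0 r)) =
      (exposedFaces (latticeBall d r) i).ncard :=
  ncard_exposedFaces_convexHull (latticeBall d r) i

lemma rpow_inv_add_two_pow {r : ℝ} (hr : 0 ≤ r) (n : ℕ) : (r ^ ((n : ℝ) + 2)⁻¹) ^ (n + 2) = r := by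
  rw [← Real.rpow_mul_natCast hr]
  push_cast
  rw [inv_mul_cancel₀ (by positivity), Real.rpow_one]

lemma rpow_face_exponent {r : ℝ} (hr : 0 ≤ r) (n : ℕ) :
    r ^ (((n + 1 : ℕ) : ℝ) * ((n + 1 : ℕ) - 1) / ((n + 1 : ℕ) + 1)) =
      (r ^ ((n : ℝ) + 2)⁻¹) ^ (n * (n + 1)) := by
  rw [← Real.rpow_mul_natCast hr]
  congr 1
  push_cast
  field_simp
  ring

end FacesOfBall

/-- Theorem 4.2 (Bárány–Larman): for every `d ≥ 2` and `0 ≤ i ≤ d-1`, the number of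
`i`-faces of the integer hull of the ball of radius `r` is of order `r^{d(d-1)/(d+1)}`. -/
theorem faces_of_integer_hull_of_ball (d i : ℕ) (hd : 2 ≤ d) (hi : i ≤ d - 1) :
    ∃ c₁ c₂ : ℝ, 0 < c₁ ∧ 0 < c₂ ∧ ∃ R : ℝ, ∀ r : ℝ, R ≤ r →
      c₁ * r ^ (((d : ℝ) * ((d : ℝ) - 1)) / ((d : ℝ) + 1)) ≤
          (numFaces d i (integerHull d (Metric.closedBall (0 : E d) r)) : ℝ) ∧
      (numFaces d i (integerHull d (Metric.closedBall (0 : E d) r)) : ℝ) ≤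
          c₂ * r ^ (((d : ℝ) * ((d : ℝ) - 1)) / ((d : ℝ) + 1)) := by
  obtain ⟨n, rfl⟩ : ∃ n, d = n + 1 := ⟨d - 1, by lia⟩
  have hin : i ≤ n := hi
  obtain ⟨c, hc, hlower⟩ :=
    exists_mul_pow_le_ncard_exposedFaces_latticeBall (by lia : 1 ≤ n) hin
  have hroot : Tendsto (fun r : ℝ ↦ r ^ ((n : ℝ) + 2)⁻¹) atTop atTop :=
    tendsto_rpow_atTop (by positivity)
  refine ⟨c, 5 ^ (n + 1) + (2 * (2 * (i + 1)) * (n + 1)) ^ (n + 1), hc, by positivity,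
    eventually_atTop.1 ?_⟩
  filter_upwards [hroot.eventually hlower, hroot.eventually_ge_atTop 1, eventually_ge_atTop 0]
    with r hlow hs hr
  have hupper := ncard_exposedFaces_latticeBall_le_pow hin hs
  rw [rpow_inv_add_two_pow hr] at hlow hupper
  rw [numFaces_integerHull_closedBall, rpow_face_exponent hr]
  exact ⟨hlow, hupper⟩
end
end

section
/- Every convex polytope P in R^d with all vertices in Z^d and with volume V > 0 has at most c_d · V^{(d-1)/(d+1)} vertices, where c_d depends only on d. -/
open MeasureTheory Set Filter
noncomputable section

/-!
Count facets instead of vertices. Take a deep interior point as origin and call the index of a facet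
the determinant of `d` independent vertices on it. Facets of index at least `R = V ^ (2 / (d + 1))`
are few because the simplices over them are disjoint. The remaining ones have normals with small
integral multiples; in coordinates on the lattice of rank `k ≤ d` which these multiples generate,
the number of facets is at most a constant times the volume `V'` of the projected polytope, and also
at most a constant times `R ^ k / V'` by counting lattice points in the polar, so it is at most a
constant times `V ^ ((d - 1) / (d + 1))`. To return to vertices, replace `P` by the hull of the
points `2v + w` for distinct vertices `v`, `w`: it lies in `3P`, and every vertex `3v` is cut off by
a facet that cuts off no other vertex of `3P`.
-/

namespace LatticePolytope

open Matrix Module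
open scoped Pointwise

section IntegerLattice

variable {n : Type*}

/-- The integer lattice `ℤⁿ` inside `n → ℝ`, in the form for which `ZSpan` provides a fundamental
domain. -/
def intLattice (n : Type*) [Finite n] : Submodule ℤ (n → ℝ) :=
  Submodule.span ℤ (range (Pi.basisFun ℝ n))

lemma mem_intLattice [Finite n] {x : n → ℝ} : x ∈ intLattice n ↔ ∀ i, ∃ z : ℤ, (z : ℝ) = x i := by
  simp [intLattice, Basis.mem_span_iff_repr_mem]

variable [Fintype n] [DecidableEq n]

lemma exists_intCast_eq_det {t : Matrix n n ℝ} (ht : ∀ i, t i ∈ intLattice n) :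
    ∃ z : ℤ, (z : ℝ) = t.det := by
  choose z hz using fun i => mem_intLattice.1 (ht i)
  have ht : t = (Matrix.of z).map (Int.castRingHom ℝ) := by
    ext i j
    exact (hz i j).symm
  exact ⟨(Matrix.of z).det, by rw [ht, ← RingHom.mapMatrix_apply, ← RingHom.map_det]; rfl⟩

lemma one_le_abs_det {t : Matrix n n ℝ} (ht : ∀ i, t i ∈ intLattice n) (hdet : t.det ≠ 0) :
    1 ≤ |t.det| := by
  obtain ⟨z, hz⟩ := exists_intCast_eq_det ht
  rw [← hz] at hdet ⊢
  exact_mod_cast Int.one_le_abs (Int.cast_ne_zero.1 hdet)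

/-- By Cramer's rule the `j`-th coordinate of `det t • u` is the determinant of `t` with column `j`
replaced by ones, and this is unchanged when multiples of that column are added to the others. -/
lemma abs_det_smul_mem_intLattice {t : Matrix n n ℝ} {o u : n → ℝ}
    (ht : ∀ i, t i + o ∈ intLattice n) (htu : t *ᵥ u = 1) : |t.det| • u ∈ intLattice n := by
  have integral (j : n) : ∃ z : ℤ, (z : ℝ) = (t.det • u) j := by
    let s : Matrix n n ℝ := updateCol (Matrix.of fun i => t i + o) j 1
    have hs (i : n) : s i ∈ intLattice n := by
      refine mem_intLattice.2 fun l => ?_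
      rcases eq_or_ne l j with rfl | hl
      · exact ⟨1, by simp [s]⟩
      · simpa [s, updateCol_ne hl] using mem_intLattice.1 (ht i) l
    have hdet : s.det = (t.updateCol j 1).det := by
      rw [← det_transpose s, ← det_transpose (t.updateCol j 1)]
      refine det_eq_of_forall_row_eq_smul_add_const (Function.update o j 0) j (by simp)
        fun l i => ?_
      rcases eq_or_ne l j with rfl | hl <;> simp [s, updateCol_ne, *]
    obtain ⟨z, hz⟩ := exists_intCast_eq_det hs
    refine ⟨z, ?_⟩
    rw [hz, hdet, ← cramer_apply, ← htu, cramer_eq_adjugate_mulVec, mulVec_mulVec, adjugate_mul,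
      smul_mulVec, one_mulVec]
  have hmem : t.det • u ∈ intLattice n := mem_intLattice.2 integral
  rcases abs_choice t.det with h | h <;> rw [h]
  · exact hmem
  · simpa only [neg_smul] using neg_mem hmem

end IntegerLattice

section Frames

variable {n : Type*} [Fintype n] [DecidableEq n]

lemma exists_rows_mem_det_ne_zero {Y : Set (n → ℝ)} (hY : Submodule.span ℝ Y = ⊤) :
    ∃ q : Matrix n n ℝ, (∀ i, q i ∈ Y) ∧ q.det ≠ 0 := by
  let b := Basis.ofSpan hY.ge
  let e := b.indexEquiv (Pi.basisFun ℝ n)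
  refine ⟨Matrix.of (b.reindex e), fun i => ?_, ?_⟩
  · exact Basis.ofSpan_subset hY.ge ⟨e.symm i, (b.reindex_apply e i).symm⟩
  · exact isUnit_iff_ne_zero.1 <| (isUnit_iff_isUnit_det _).1 <|
      linearIndependent_rows_iff_isUnit.1 (b.reindex e).linearIndependent

lemma exists_eq_vecMul {q : Matrix n n ℝ} (hq : q.det ≠ 0) (x : n → ℝ) : ∃ a, x = a ᵥ* q :=
  ((vecMul_surjective_iff_isUnit.2 ((isUnit_iff_isUnit_det _).2 hq.isUnit)) x).imp fun _ => Eq.symm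

/-- Rows maximising `|det|`: by Cramer's rule the coefficients are ratios of determinants. -/
lemma exists_rows_forall_eq_vecMul_abs_le_one {Y : Set (n → ℝ)} (hfin : Y.Finite)
    (hY : Submodule.span ℝ Y = ⊤) :
    ∃ q : Matrix n n ℝ, (∀ i, q i ∈ Y) ∧ q.det ≠ 0 ∧
      ∀ x ∈ Y, ∃ a : n → ℝ, (∀ i, |a i| ≤ 1) ∧ x = a ᵥ* q := by
  obtain ⟨q₀, hq₀, hdet₀⟩ := exists_rows_mem_det_ne_zero hY
  obtain ⟨q, hq, hmax⟩ := (Set.Finite.pi' fun _ : n => hfin).exists_maximalFor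
    (fun q : Matrix n n ℝ => |q.det|) _ ⟨q₀, hq₀⟩
  have hle (p : Matrix n n ℝ) (hp : ∀ i, p i ∈ Y) : |p.det| ≤ |q.det| :=
    (le_total _ _).elim id (hmax hp)
  have hdet : q.det ≠ 0 := abs_pos.1 <| (abs_pos.2 hdet₀).trans_le (hle q₀ hq₀)
  refine ⟨q, hq, hdet, fun x hx => ?_⟩
  obtain ⟨a, rfl⟩ := exists_eq_vecMul hdet x
  refine ⟨a, fun i => le_of_mul_le_mul_right ?_ (abs_pos.2 hdet), rfl⟩
  have hcramer : (q.updateRow i (a ᵥ* q)).det = a i * q.det := by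
    rw [vecMul_eq_sum, det_updateRow_sum, smul_eq_mul]
  rw [one_mul, ← abs_mul, ← hcramer]
  refine hle _ fun l => ?_
  rcases eq_or_ne l i with rfl | hl
  · simpa using hx
  · simpa [updateRow_ne hl] using hq l

lemma volume_image_vecMul (t : Matrix n n ℝ) (s : Set (n → ℝ)) :
    volume ((· ᵥ* t) '' s) = ENNReal.ofReal |t.det| * volume s := by
  simp only [← mulVec_transpose]
  rw [← det_transpose, ← LinearMap.det_toLin']
  exact Measure.addHaar_image_linearMap volume (toLin' tᵀ) s

end Frames

section Packing

lemma sum_smul_mem_of_zero_mem {V ι : Type*} [AddCommGroup V] [Module ℝ V] [Fintype ι]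
    {C : Set V} (hC : Convex ℝ C) (h0 : 0 ∈ C) {a : ι → ℝ} {p : ι → V} (ha : ∀ i, 0 ≤ a i)
    (hsum : ∑ i, a i ≤ 1) (hp : ∀ i, p i ∈ C) : ∑ i, a i • p i ∈ C := by
  have h := hC.sum_mem (t := Finset.univ) (w := fun i : Option ι => i.elim (1 - ∑ i, a i) a)
    (z := fun i => i.elim 0 p) (by simp [Option.forall, hsum, ha]) (by simp)
    (by simp [Option.forall, h0, hp])
  simpa using h

variable {n : Type*} [Fintype n]

/-- Vertices of the polar of `S`. When `0` is interior to `convexHull ℝ S` they are the `u` for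
which `{x | x ⬝ᵥ u = 1}` cuts out a facet of the hull. -/
structure IsPolarVertex (S : Set (n → ℝ)) (u : n → ℝ) : Prop where
  le_one : ∀ x ∈ S, x ⬝ᵥ u ≤ 1
  span_eq_top : Submodule.span ℝ {x ∈ S | x ⬝ᵥ u = 1} = ⊤

/-- The parallelepiped spanned by the rows of `t`, scaled to fit into the simplex spanned by these
rows and `0`. Facets are counted by packing their cells. -/
def frameCell (t : Matrix n n ℝ) : Set (n → ℝ) :=
  (· ᵥ* t) '' pi univ fun _ => Ioo 0 (1 / (Fintype.card n + 1))

variable {S : Set (n → ℝ)} {u v : n → ℝ} {t : Matrix n n ℝ}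

lemma frameCell_subset_convexHull (h0 : 0 ∈ convexHull ℝ S) (ht : ∀ i, t i ∈ S) :
    frameCell t ⊆ convexHull ℝ S := by
  rintro _ ⟨a, ha, rfl⟩
  simp only [mem_univ_pi] at ha
  have hsum : ∑ i, a i ≤ 1 := calc
    ∑ i, a i ≤ ∑ _i : n, (1 / (Fintype.card n + 1) : ℝ) := Finset.sum_le_sum fun i _ => (ha i).2.le
    _ = Fintype.card n / (Fintype.card n + 1) := by simp [div_eq_mul_inv]
    _ ≤ 1 := div_le_one_of_le₀ (by linarith) (by positivity)
  simpa only [vecMul_eq_sum] using sum_smul_mem_of_zero_mem (convex_convexHull ℝ S) h0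
    (fun i => (ha i).1.le) hsum fun i => subset_convexHull ℝ S (ht i)

section FacetFrames

variable [DecidableEq n]

/-- The rows of `t` are linearly independent points of `S` on the supporting hyperplane
`{x | x ⬝ᵥ u = 1}`. -/
structure IsFacetFrame (S : Set (n → ℝ)) (u : n → ℝ) (t : Matrix n n ℝ) : Prop where
  le_one : ∀ x ∈ S, x ⬝ᵥ u ≤ 1
  row_mem : ∀ i, t i ∈ S
  mulVec_eq_one : t *ᵥ u = 1
  det_ne_zero : t.det ≠ 0

lemma IsPolarVertex.exists_isFacetFrame (hu : IsPolarVertex S u) : ∃ t, IsFacetFrame S u t := by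
  obtain ⟨t, ht, hdet⟩ := exists_rows_mem_det_ne_zero hu.span_eq_top
  exact ⟨t, hu.le_one, fun i => (ht i).1, funext fun i => (ht i).2, hdet⟩

lemma IsFacetFrame.eq_of_mulVec_eq_one (ht : IsFacetFrame S u t) (hv : t *ᵥ v = 1) : u = v :=
  mulVec_injective_of_det_ne_zero ht.det_ne_zero (ht.mulVec_eq_one.trans hv.symm)

lemma IsFacetFrame.vecMul_dotProduct_self (ht : IsFacetFrame S u t) (a : n → ℝ) :
    (a ᵥ* t) ⬝ᵥ u = ∑ i, a i := by
  rw [← dotProduct_mulVec, ht.mulVec_eq_one, dotProduct_one]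

lemma IsFacetFrame.vecMul_dotProduct_le (ht : IsFacetFrame S u t) (hv : ∀ x ∈ S, x ⬝ᵥ v ≤ 1)
    {a : n → ℝ} (ha : ∀ i, 0 < a i) : (a ᵥ* t) ⬝ᵥ v ≤ ∑ i, a i := by
  rw [← dotProduct_mulVec]
  exact Finset.sum_le_sum fun i _ => mul_le_of_le_one_right (ha i).le (hv _ (ht.row_mem i))

lemma IsFacetFrame.eq_of_vecMul_dotProduct_eq (ht : IsFacetFrame S u t)
    (hv : ∀ x ∈ S, x ⬝ᵥ v ≤ 1) {a : n → ℝ} (ha : ∀ i, 0 < a i)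
    (h : (a ᵥ* t) ⬝ᵥ v = ∑ i, a i) : u = v := by
  refine ht.eq_of_mulVec_eq_one (funext fun i => ?_)
  rw [← dotProduct_mulVec] at h
  have hi := (Finset.sum_eq_sum_iff_of_le fun i _ =>
    mul_le_of_le_one_right (ha i).le (hv _ (ht.row_mem i))).1 h i (Finset.mem_univ i)
  exact (mul_eq_left₀ (ha i).ne').1 hi

lemma measureReal_frameCell (t : Matrix n n ℝ) :
    volume.real (frameCell t) = |t.det| / (Fintype.card n + 1) ^ Fintype.card n := by
  rw [frameCell, measureReal_def, volume_image_vecMul, Real.volume_pi_Ioo, ENNReal.toReal_mul,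
    ENNReal.toReal_prod, ENNReal.toReal_ofReal (abs_nonneg _)]
  simp_rw [sub_zero, ENNReal.toReal_ofReal (show (0 : ℝ) ≤ 1 / (Fintype.card n + 1) by positivity)]
  rw [Finset.prod_const, Finset.card_univ, one_div, inv_pow, div_eq_mul_inv]

lemma isOpen_frameCell (ht : t.det ≠ 0) : IsOpen (frameCell t) := by
  have hsurj : Function.Surjective fun a => a ᵥ* t :=
    vecMul_surjective_iff_isUnit.2 ((isUnit_iff_isUnit_det _).2 ht.isUnit)
  exact (t.vecMulLinear.toContinuousLinearMap.isOpenMap hsurj) _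
    (isOpen_set_pi finite_univ fun _ _ => isOpen_Ioo)

lemma IsFacetFrame.disjoint_frameCell {s : Matrix n n ℝ} (ht : IsFacetFrame S u t)
    (hs : IsFacetFrame S v s) (huv : u ≠ v) : Disjoint (frameCell t) (frameCell s) := by
  refine disjoint_left.2 ?_
  rintro _ ⟨a, ha, rfl⟩ ⟨b, hb, hab : b ᵥ* s = a ᵥ* t⟩
  replace ha i : 0 < a i := (ha i (mem_univ i)).1
  replace hb i : 0 < b i := (hb i (mem_univ i)).1
  refine huv (ht.eq_of_vecMul_dotProduct_eq hs.le_one ha (le_antisymm ?_ ?_))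
  · exact ht.vecMul_dotProduct_le hs.le_one ha
  · rw [← ht.vecMul_dotProduct_self, ← hab, hs.vecMul_dotProduct_self]
    exact hs.vecMul_dotProduct_le ht.le_one hb

/-- The cells of frames belonging to distinct facets are disjoint. -/
theorem sum_abs_det_le (h0 : 0 ∈ convexHull ℝ S) (hvol : volume (convexHull ℝ S) ≠ ⊤)
    {U : Finset (n → ℝ)} {t : (n → ℝ) → Matrix n n ℝ} (ht : ∀ u ∈ U, IsFacetFrame S u (t u)) :
    ∑ u ∈ U, |(t u).det| ≤
      (Fintype.card n + 1) ^ Fintype.card n * volume.real (convexHull ℝ S) := by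
  have hsub : ⋃ u ∈ U, frameCell (t u) ⊆ convexHull ℝ S :=
    iUnion₂_subset fun u hu => frameCell_subset_convexHull h0 (ht u hu).row_mem
  have hunion : volume.real (⋃ u ∈ U, frameCell (t u)) = ∑ u ∈ U, volume.real (frameCell (t u)) :=
    measureReal_biUnion_finset (fun u hu v hv => (ht u hu).disjoint_frameCell (ht v hv))
      (fun u hu => (isOpen_frameCell (ht u hu).det_ne_zero).measurableSet)
      fun u hu => measure_ne_top_of_subset ((subset_biUnion_of_mem hu).trans hsub) hvol
  have hle := measureReal_mono hsub hvol
  simp only [hunion, measureReal_frameCell, ← Finset.sum_div] at hle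
  rwa [div_le_iff₀' (by positivity)] at hle

lemma one_le_pow_mul_abs_det {N : ℕ} (hN : 0 < N) (ht : ∀ i, N • t i ∈ intLattice n)
    (hdet : t.det ≠ 0) : 1 ≤ (N : ℝ) ^ Fintype.card n * |t.det| := by
  have : (N : ℝ) ≠ 0 := by positivity
  have h := one_le_abs_det (t := (N : ℝ) • t)
    (fun i => by rw [Nat.cast_smul_eq_nsmul]; exact ht i)
    (by rw [det_smul]; positivity)
  rwa [det_smul, abs_mul, abs_of_nonneg (by positivity)] at h

end FacetFrames

theorem card_polarVertices_le (h0 : 0 ∈ convexHull ℝ S) (hvol : volume (convexHull ℝ S) ≠ ⊤)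
    {N : ℕ} (hN : 0 < N) (hS : ∀ x ∈ S, N • x ∈ intLattice n) {U : Finset (n → ℝ)}
    (hU : ∀ u ∈ U, IsPolarVertex S u) :
    (U.card : ℝ) ≤ (N * (Fintype.card n + 1)) ^ Fintype.card n * volume.real (convexHull ℝ S) := by
  classical
  choose! t ht using fun u hu => (hU u hu).exists_isFacetFrame
  calc (U.card : ℝ) = ∑ _u ∈ U, (1 : ℝ) := by simp
    _ ≤ ∑ u ∈ U, (N : ℝ) ^ Fintype.card n * |(t u).det| := Finset.sum_le_sum fun u hu =>
      one_le_pow_mul_abs_det hN (fun i => hS _ ((ht u hu).row_mem i)) (ht u hu).det_ne_zero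
    _ = (N : ℝ) ^ Fintype.card n * ∑ u ∈ U, |(t u).det| := (Finset.mul_sum ..).symm
    _ ≤ (N : ℝ) ^ Fintype.card n *
        ((Fintype.card n + 1) ^ Fintype.card n * volume.real (convexHull ℝ S)) := by
      gcongr
      exact sum_abs_det_le h0 hvol ht
    _ = _ := by rw [mul_pow, mul_assoc]

end Packing

section LatticePoints

/-- Averaging over a fundamental domain: unfold `μ B` as an integral over `D` of the number of
translates of a point that fall in `B`. -/
theorem natCast_mul_measure_le_of_forall_exists_vadd_mem {G α : Type*} [AddGroup G] [Countable G]
    [MeasurableSpace α] [AddAction G α] [MeasurableConstVAdd G α] {μ : Measure α}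
    [VAddInvariantMeasure G α μ] {D B : Set α} (hD : IsAddFundamentalDomain G D μ)
    (hB : MeasurableSet B) {c : ℕ} (h : ∀ x, ∃ T : Finset G, c ≤ T.card ∧ ∀ g ∈ T, g +ᵥ x ∈ B) :
    c * μ D ≤ μ B := by
  have hcount (x : α) : (c : ENNReal) ≤ ∑' g : G, B.indicator 1 (g +ᵥ x) := by
    obtain ⟨T, hc, hT⟩ := h x
    calc (c : ENNReal) ≤ ∑ g ∈ T, 1 := by simpa using hc
      _ = ∑ g ∈ T, B.indicator 1 (g +ᵥ x) :=
        Finset.sum_congr rfl fun g hg => (indicator_of_mem (hT g hg) 1).symm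
      _ ≤ _ := ENNReal.sum_le_tsum T
  calc c * μ D = ∫⁻ _ in D, c ∂μ := (setLIntegral_const D _).symm
    _ ≤ ∫⁻ x in D, ∑' g : G, B.indicator 1 (g +ᵥ x) ∂μ := lintegral_mono hcount
    _ = ∑' g : G, ∫⁻ x in D, B.indicator 1 (g +ᵥ x) ∂μ := lintegral_tsum fun g =>
      ((measurable_one.indicator hB).comp (measurable_const_vadd g)).aemeasurable
    _ = μ B := by rw [← hD.lintegral_eq_tsum'', lintegral_indicator_one hB]

instance {n : Type*} [Finite n] : Countable (intLattice n).toAddSubgroup :=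
  inferInstanceAs (Countable (Submodule.span ℤ (range (Pi.basisFun ℝ n))))

variable {n : Type*} [Fintype n]

lemma isAddFundamentalDomain_intLattice :
    IsAddFundamentalDomain (intLattice n).toAddSubgroup
      (ZSpan.fundamentalDomain (Pi.basisFun ℝ n)) volume :=
  ZSpan.isAddFundamentalDomain' _ _

lemma volume_fundamentalDomain_basisFun :
    volume (ZSpan.fundamentalDomain (Pi.basisFun ℝ n)) = 1 := by
  classical
  have h : Matrix.of (Pi.basisFun ℝ n) = 1 := by
    ext i j
    simp [Matrix.one_apply, Pi.single_apply, eq_comm]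
  rw [ZSpan.volume_fundamentalDomain, h, det_one, abs_one, ENNReal.ofReal_one]

lemma volume_preimage_mulVec_closedBall [DecidableEq n] {q : Matrix n n ℝ} (hq : q.det ≠ 0) {r : ℝ}
    (hr : 0 ≤ r) :
    volume ((q *ᵥ ·) ⁻¹' Metric.closedBall 0 r) =
      ENNReal.ofReal ((2 * r) ^ Fintype.card n / |q.det|) := by
  change volume (toLin' q ⁻¹' _) = _
  rw [Measure.addHaar_preimage_linearMap _ (by rwa [LinearMap.det_toLin']),
    Real.volume_pi_closedBall _ hr, LinearMap.det_toLin', ← ENNReal.ofReal_mul (abs_nonneg _),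
    abs_inv, inv_mul_eq_div]

variable {Y M : Set (n → ℝ)} {R : ℝ}

/-- Round the coordinates of `x` in a basis taken from `M`. -/
lemma exists_mem_intLattice_abs_dotProduct_add_le (hM : M ⊆ intLattice n)
    (hspan : Submodule.span ℝ M = ⊤) (hY : ∀ y ∈ Y, ∀ m ∈ M, |y ⬝ᵥ m| ≤ R) (x : n → ℝ) :
    ∃ g ∈ intLattice n, ∀ y ∈ Y, |y ⬝ᵥ (g + x)| ≤ Fintype.card n * R := by
  classical
  obtain ⟨p, hp, hdet⟩ := exists_rows_mem_det_ne_zero hspan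
  obtain ⟨a, rfl⟩ := exists_eq_vecMul hdet x
  have hround : -(∑ i, ⌊a i⌋ • p i) + a ᵥ* p = ∑ i, Int.fract (a i) • p i := by
    simp only [vecMul_eq_sum, Int.fract, sub_smul, Int.cast_smul_eq_zsmul, Finset.sum_sub_distrib]
    abel
  refine ⟨-∑ i, ⌊a i⌋ • p i, neg_mem (sum_mem fun i _ => zsmul_mem (hM (hp i)) _), fun y hy => ?_⟩
  rw [hround, dotProduct_sum]
  calc |∑ i, y ⬝ᵥ Int.fract (a i) • p i| ≤ ∑ i, |y ⬝ᵥ Int.fract (a i) • p i| :=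
      Finset.abs_sum_le_sum_abs _ _
    _ ≤ ∑ _i : n, R := Finset.sum_le_sum fun i _ => ?_
    _ = Fintype.card n * R := by simp
  rw [dotProduct_smul, smul_eq_mul, abs_mul, abs_of_nonneg (Int.fract_nonneg _)]
  exact (mul_le_of_le_one_left (abs_nonneg _) (Int.fract_lt_one _).le).trans (hY y hy _ (hp i))

lemma card_le_measure_of_forall_exists_translate {M : Finset (n → ℝ)} {B : Set (n → ℝ)}
    (hM : ∀ m ∈ M, m ∈ intLattice n) (hB : MeasurableSet B)
    (h : ∀ x, ∃ g ∈ intLattice n, ∀ m ∈ M, m + (g + x) ∈ B) : M.card ≤ volume B := by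
  rw [← mul_one (M.card : ENNReal), ← volume_fundamentalDomain_basisFun (n := n)]
  refine natCast_mul_measure_le_of_forall_exists_vadd_mem isAddFundamentalDomain_intLattice hB
    fun x => ?_
  obtain ⟨g, hg, hgx⟩ := h x
  let e : M → (intLattice n).toAddSubgroup := fun m => ⟨m + g, add_mem (hM m m.2) hg⟩
  have he : Function.Injective e := fun m m' h => Subtype.ext <| by simpa [e] using h
  refine ⟨Finset.univ.map ⟨e, he⟩, by simp, ?_⟩
  simp only [Finset.mem_map, Finset.mem_univ, true_and, forall_exists_index,
    forall_apply_eq_imp_iff]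
  intro m
  have hadd : e m +ᵥ x = m + (g + x) := add_assoc _ _ _
  exact hadd ▸ hgx m m.2

lemma card_mul_abs_det_le [DecidableEq n] {q : Matrix n n ℝ} (hq : q.det ≠ 0)
    {M : Finset (n → ℝ)} (hR : 0 ≤ R) (hM : ∀ m ∈ M, m ∈ intLattice n)
    (hspan : Submodule.span ℝ (M : Set (n → ℝ)) = ⊤) (hbound : ∀ i, ∀ m ∈ M, |q i ⬝ᵥ m| ≤ R) :
    M.card * |q.det| ≤ (2 * (Fintype.card n + 1) * R) ^ Fintype.card n := by
  let B : Set (n → ℝ) := (q *ᵥ ·) ⁻¹' Metric.closedBall 0 ((Fintype.card n + 1) * R)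
  have hmeas : MeasurableSet B :=
    (Metric.isClosed_closedBall.preimage (by fun_prop : Continuous (q *ᵥ ·))).measurableSet
  have htranslates (x : n → ℝ) : ∃ g ∈ intLattice n, ∀ m ∈ M, m + (g + x) ∈ B := by
    obtain ⟨g, hg, hgx⟩ := exists_mem_intLattice_abs_dotProduct_add_le hM hspan
      (forall_mem_range.2 hbound) x
    refine ⟨g, hg, fun m hm => mem_closedBall_zero_iff.2 <|
      (pi_norm_le_iff_of_nonneg (by positivity)).2 fun i => ?_⟩
    calc |q i ⬝ᵥ (m + (g + x))| ≤ |q i ⬝ᵥ m| + |q i ⬝ᵥ (g + x)| := by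
          rw [dotProduct_add]
          exact abs_add_le _ _
      _ ≤ R + Fintype.card n * R := add_le_add (hbound i m hm) (hgx _ (mem_range_self i))
      _ = (Fintype.card n + 1) * R := by ring
  have hle := card_le_measure_of_forall_exists_translate hM hmeas htranslates
  rw [volume_preimage_mulVec_closedBall hq (by positivity), ← mul_assoc] at hle
  have hcard := ENNReal.toReal_le_of_le_ofReal (by positivity) hle
  rwa [ENNReal.toReal_natCast, le_div_iff₀ (abs_pos.2 hq)] at hcard

lemma measureReal_convexHull_le [DecidableEq n] {q : Matrix n n ℝ}
    (h : ∀ x ∈ Y, ∃ a : n → ℝ, (∀ i, |a i| ≤ 1) ∧ x = a ᵥ* q) :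
    volume.real (convexHull ℝ Y) ≤ 2 ^ Fintype.card n * |q.det| := by
  have hsub : convexHull ℝ Y ⊆ (· ᵥ* q) '' Metric.closedBall 0 1 := by
    refine convexHull_min (fun x hx => ?_)
      ((convex_closedBall 0 1).linear_image q.vecMulLinear)
    obtain ⟨a, ha, rfl⟩ := h x hx
    exact ⟨a, mem_closedBall_zero_iff.2 ((pi_norm_le_iff_of_nonneg zero_le_one).2 ha), rfl⟩
  refine ENNReal.toReal_le_of_le_ofReal (by positivity) ((measure_mono hsub).trans_eq ?_)
  rw [volume_image_vecMul, Real.volume_pi_closedBall _ zero_le_one, mul_one,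
    ← ENNReal.ofReal_mul (abs_nonneg _), mul_comm]

theorem card_mul_measureReal_convexHull_le (hfin : Y.Finite) {M : Finset (n → ℝ)} (hR : 0 ≤ R)
    (hM : ∀ m ∈ M, m ∈ intLattice n) (hspan : Submodule.span ℝ (M : Set (n → ℝ)) = ⊤)
    (hbound : ∀ y ∈ Y, ∀ m ∈ M, |y ⬝ᵥ m| ≤ R) :
    M.card * volume.real (convexHull ℝ Y) ≤
      (4 * (Fintype.card n + 1) * R) ^ Fintype.card n := by
  classical
  by_cases hY : Submodule.span ℝ Y = ⊤
  · obtain ⟨q, hq, hdet, hcoord⟩ := exists_rows_forall_eq_vecMul_abs_le_one hfin hY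
    calc M.card * volume.real (convexHull ℝ Y)
        ≤ M.card * (2 ^ Fintype.card n * |q.det|) := by
          gcongr
          exact measureReal_convexHull_le hcoord
      _ = 2 ^ Fintype.card n * (M.card * |q.det|) := by ring
      _ ≤ 2 ^ Fintype.card n * (2 * (Fintype.card n + 1) * R) ^ Fintype.card n := by
          gcongr
          exact card_mul_abs_det_le hdet hR hM hspan fun i => hbound _ (hq i)
      _ = (4 * (Fintype.card n + 1) * R) ^ Fintype.card n := by rw [← mul_pow]; ring
  · have hnull : volume (convexHull ℝ Y) = 0 :=
      measure_mono_null (convexHull_min Submodule.subset_span (Submodule.convex _))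
        (Measure.addHaar_submodule volume _ hY)
    rw [measureReal_def, hnull, ENNReal.toReal_zero, mul_zero]
    positivity

end LatticePoints

section Charts

variable {n m : Type*} [Fintype n] [Fintype m]

lemma span_eq_top_iff_forall_dotProduct {Y : Set (n → ℝ)} :
    Submodule.span ℝ Y = ⊤ ↔ ∀ z, (∀ y ∈ Y, y ⬝ᵥ z = 0) → z = 0 := by
  classical
  constructor
  · intro hY z hz
    have h : (dotProductBilin ℝ ℝ).flip z = 0 := LinearMap.ext_on hY fun y hy => hz y hy
    exact dotProduct_eq_zero z fun y => by simpa [dotProduct_comm] using LinearMap.congr_fun h y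
  · intro h
    by_contra hY
    obtain ⟨f, hf, hle⟩ := Submodule.exists_le_ker_of_lt_top _ (lt_top_iff_ne_top.2 hY)
    obtain ⟨z, rfl⟩ := (dotProductEquiv ℝ n).surjective f
    refine hf ?_
    rw [h z fun y hy => ?_, map_zero]
    simpa [dotProduct_comm] using hle (Submodule.subset_span hy)

lemma vecMul_mem_intLattice {m : Type*} [Finite m] {B : Matrix n m ℝ}
    (hB : ∀ j, Bᵀ j ∈ intLattice n) {x : n → ℝ} (hx : x ∈ intLattice n) :
    x ᵥ* B ∈ intLattice m := by
  choose a ha using mem_intLattice.1 hx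
  choose b hb using fun j => mem_intLattice.1 (hB j)
  refine mem_intLattice.2 fun j => ⟨∑ i, a i * b j i, ?_⟩
  simp [vecMul, dotProduct, ha, hb]

lemma IsPolarVertex.image_vecMul {B : Matrix n m ℝ} (hB : Function.Injective B.mulVec)
    {S : Set (n → ℝ)} {ν : m → ℝ} (h : IsPolarVertex S (B *ᵥ ν)) :
    IsPolarVertex ((· ᵥ* B) '' S) ν where
  le_one := by
    rintro _ ⟨x, hx, rfl⟩
    rw [← dotProduct_mulVec]
    exact h.le_one x hx
  span_eq_top := by
    refine span_eq_top_iff_forall_dotProduct.2 fun z hz => ?_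
    refine hB ((span_eq_top_iff_forall_dotProduct.1 h.span_eq_top _ fun x hx => ?_).trans
      (mulVec_zero B).symm)
    rw [dotProduct_mulVec]
    exact hz _ ⟨mem_image_of_mem _ hx.1, by rw [← dotProduct_mulVec]; exact hx.2⟩

lemma IsPolarVertex.le_of_smul_eq [Nonempty n] {S : Set (n → ℝ)} {u v : n → ℝ} {a b : ℝ}
    (hu : IsPolarVertex S u) (hv : IsPolarVertex S v) (hb : 0 < b) (h : a • u = b • v) : a ≤ b := by
  obtain ⟨x, hx, hxu⟩ : {x ∈ S | x ⬝ᵥ u = 1}.Nonempty := by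
    by_contra hempty
    have := hu.span_eq_top
    rw [not_nonempty_iff_eq_empty.1 hempty, Submodule.span_empty] at this
    exact bot_ne_top this
  calc a = x ⬝ᵥ (a • u) := by rw [dotProduct_smul, hxu, smul_eq_mul, mul_one]
    _ = b * (x ⬝ᵥ v) := by rw [h, dotProduct_smul, smul_eq_mul]
    _ ≤ b := mul_le_of_le_one_right hb.le (hv.le_one x hx)

lemma IsPolarVertex.eq_of_smul_eq {S : Set (n → ℝ)} {u v : n → ℝ} {a b : ℝ}
    (hu : IsPolarVertex S u) (hv : IsPolarVertex S v) (ha : 0 < a) (hb : 0 < b)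
    (h : a • u = b • v) : u = v := by
  cases isEmpty_or_nonempty n
  · exact Subsingleton.elim u v
  · have hab : a = b := le_antisymm (hu.le_of_smul_eq hv hb h) (hv.le_of_smul_eq hu ha h.symm)
    exact smul_right_injective _ ha.ne' (h.trans (by rw [hab]))

lemma linearIndependent_real_of_int {n ι : Type*} [Finite n] {b : ι → n → ℝ}
    (hb : ∀ i, b i ∈ intLattice n) (hli : LinearIndependent ℤ b) : LinearIndependent ℝ b := by
  choose z hz using fun i => mem_intLattice.1 (hb i)
  obtain rfl : (fun i j => (z i j : ℝ)) = b := funext₂ hz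
  let cast : (n → ℤ) →ₗ[ℤ] n → ℝ := (Algebra.linearMap ℤ ℝ).compLeft n
  have hz : LinearIndependent ℤ z := LinearIndependent.of_comp cast hli
  exact (linearIndependent_algebraMap_comp_iff (R := ℤ) (S := ℝ)).2 hz

/-- `B` consists of a basis of the subgroup generated by `M`. -/
theorem exists_lattice_chart {M : Set (n → ℝ)} (hfin : M.Finite) (hM : M ⊆ intLattice n) :
    ∃ k ≤ Fintype.card n, ∃ B : Matrix n (Fin k) ℝ, (∀ j, Bᵀ j ∈ intLattice n) ∧
      Function.Injective B.mulVec ∧ (∀ x ∈ M, ∃ y ∈ intLattice (Fin k), B *ᵥ y = x) ∧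
      Submodule.span ℝ {y | B *ᵥ y ∈ M} = ⊤ := by
  let L : Submodule ℤ (n → ℝ) := Submodule.span ℤ M
  have : Module.Finite ℤ L := Module.Finite.span_of_finite ℤ hfin
  let b := Module.finBasis ℤ L
  have hbL (j) : (b j : n → ℝ) ∈ intLattice n := Submodule.span_le.2 hM (b j).2
  have hli : LinearIndependent ℝ fun j => (b j : n → ℝ) :=
    linearIndependent_real_of_int hbL (b.linearIndependent.map' L.subtype L.ker_subtype)
  let B : Matrix n (Fin (Module.finrank ℤ L)) ℝ := (Matrix.of fun j => (b j : n → ℝ))ᵀ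
  have hinj : Function.Injective B.mulVec := mulVec_injective_iff.2 hli
  have hsurj (x) (hx : x ∈ M) : ∃ y ∈ intLattice (Fin (Module.finrank ℤ L)), B *ᵥ y = x := by
    have hx : x ∈ L := Submodule.subset_span hx
    refine ⟨fun j => b.repr ⟨x, hx⟩ j, mem_intLattice.2 fun j => ⟨_, rfl⟩, ?_⟩
    have hrepr := congrArg Subtype.val (b.sum_repr ⟨x, hx⟩)
    rw [Submodule.coe_sum] at hrepr
    refine Eq.trans ?_ hrepr
    simp only [B, mulVec_transpose, vecMul_eq_sum, Int.cast_smul_eq_zsmul]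
    rfl
  refine ⟨_, by simpa using hli.fintype_card_le_finrank, B, hbL, hinj, hsurj, ?_⟩
  refine eq_top_iff.2 ((Pi.basisFun ℝ _).span_eq.ge.trans (Submodule.span_le.2 ?_))
  rintro _ ⟨j, rfl⟩
  have himage : B.mulVecLin '' {y | B *ᵥ y ∈ M} = M :=
    image_preimage_eq_of_subset fun x hx => (hsurj x hx).imp fun _ => And.right
  have hmem : B.mulVecLin (Pi.basisFun ℝ _ j) ∈
      (Submodule.span ℝ {y | B *ᵥ y ∈ M}).map B.mulVecLin := by
    rw [Submodule.map_span, himage, Pi.basisFun_apply, mulVecLin_apply, mulVec_single_one]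
    exact Submodule.span_subset_span ℤ ℝ M (b j).2
  obtain ⟨y, hy, hyj⟩ := hmem
  exact hinj hyj ▸ hy

end Charts

section SmallFacets

lemma measureReal_convexHull_le_image_vecMul {n : Type*} [Fintype n] {B : Matrix n n ℝ}
    (hB : ∀ j, Bᵀ j ∈ intLattice n) (hinj : Function.Injective B.mulVec) (S : Set (n → ℝ)) :
    volume.real (convexHull ℝ S) ≤ volume.real (convexHull ℝ ((· ᵥ* B) '' S)) := by
  classical
  have hdet : 1 ≤ |B.det| := by
    rw [← det_transpose]
    refine one_le_abs_det hB ?_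
    rw [det_transpose]
    exact ((isUnit_iff_isUnit_det B).1 (mulVec_injective_iff_isUnit.1 hinj)).ne_zero
  have himage : (· ᵥ* B) '' convexHull ℝ S = convexHull ℝ ((· ᵥ* B) '' S) :=
    B.vecMulLinear.image_convexHull S
  rw [← himage, measureReal_def, measureReal_def, volume_image_vecMul, ENNReal.toReal_mul,
    ENNReal.toReal_ofReal (abs_nonneg _)]
  exact le_mul_of_one_le_left ENNReal.toReal_nonneg hdet

lemma exists_polarVertex_chart {n : Type*} [Fintype n] {S : Set (n → ℝ)} {U : Finset (n → ℝ)}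
    (hU : ∀ u ∈ U, IsPolarVertex S u) {w : (n → ℝ) → ℝ} (hw : ∀ u ∈ U, 0 < w u)
    (hint : ∀ u ∈ U, w u • u ∈ intLattice n) :
    ∃ k ≤ Fintype.card n, ∃ (B : Matrix n (Fin k) ℝ) (y : (n → ℝ) → Fin k → ℝ),
      (∀ j, Bᵀ j ∈ intLattice n) ∧ Function.Injective B.mulVec ∧
      (∀ u ∈ U, y u ∈ intLattice (Fin k)) ∧ (∀ u ∈ U, B *ᵥ y u = w u • u) ∧
      InjOn y U ∧ Submodule.span ℝ (y '' U) = ⊤ := by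
  obtain ⟨k, hk, B, hB, hinj, hcoord, hspan⟩ :=
    exists_lattice_chart (M := (fun u => w u • u) '' U) (U.finite_toSet.image _)
      (image_subset_iff.2 hint)
  choose! y hy hBy using fun u (hu : u ∈ U) => hcoord _ (mem_image_of_mem _ hu)
  refine ⟨k, hk, B, y, hB, hinj, hy, hBy, fun u hu v hv h => ?_, ?_⟩
  · exact (hU u hu).eq_of_smul_eq (hU v hv) (hw u hu) (hw v hv)
      (by rw [← hBy u hu, ← hBy v hv, h])
  · refine top_unique (hspan.ge.trans (Submodule.span_mono ?_))
    rintro z ⟨u, hu, hz⟩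
    exact ⟨u, hu, hinj ((hBy u hu).trans hz)⟩

variable {d : ℕ} {S : Set (Fin d → ℝ)}

/-- Facets whose normals `u` have a small integral multiple `w u • u`. In coordinates on the lattice
generated by these multiples, `V'` is the volume of the corresponding projection of the polytope:
there are few facets if `V'` is small, and few short lattice vectors if `V'` is large. -/
theorem exists_card_polarVertices_le (hfin : S.Finite) (h0 : 0 ∈ convexHull ℝ S) {N : ℕ}
    (hN : 0 < N) (hS : ∀ x ∈ S, N • x ∈ intLattice (Fin d)) {U : Finset (Fin d → ℝ)}
    (hU : ∀ u ∈ U, IsPolarVertex S u) {w : (Fin d → ℝ) → ℝ} (hw : ∀ u ∈ U, 0 < w u)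
    (hint : ∀ u ∈ U, w u • u ∈ intLattice (Fin d)) {R : ℝ} (hR : 0 ≤ R)
    (hbound : ∀ u ∈ U, ∀ x ∈ S, |x ⬝ᵥ (w u • u)| ≤ R) :
    ∃ k ≤ d, ∃ V' : ℝ, U.card ≤ (N * (k + 1)) ^ k * V' ∧ U.card * V' ≤ (4 * (k + 1) * R) ^ k ∧
      (k = d → volume.real (convexHull ℝ S) ≤ V') := by
  classical
  obtain ⟨k, hk, B, y, hB, hinj, hy, hBy, hy_inj, hspan⟩ := exists_polarVertex_chart hU hw hint
  rw [Fintype.card_fin] at hk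
  let ν (u : Fin d → ℝ) : Fin k → ℝ := (w u)⁻¹ • y u
  have hBν (u) (hu : u ∈ U) : B *ᵥ ν u = u := by
    rw [mulVec_smul, hBy u hu, inv_smul_smul₀ (hw u hu).ne']
  have hν_inj : InjOn ν U := fun u hu v hv h => by rw [← hBν u hu, ← hBν v hv, h]
  let S' : Set (Fin k → ℝ) := (· ᵥ* B) '' S
  have h0' : 0 ∈ convexHull ℝ S' :=
    B.vecMulLinear.image_convexHull S ▸ ⟨0, h0, zero_vecMul B⟩
  have hS' (x') (hx' : x' ∈ S') : N • x' ∈ intLattice (Fin k) := by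
    obtain ⟨x, hx, rfl⟩ := hx'
    simpa only [smul_vecMul] using vecMul_mem_intLattice hB (hS x hx)
  have hvol : volume (convexHull ℝ S') ≠ ⊤ :=
    (Set.Finite.isCompact_convexHull (𝕜 := ℝ) (hfin.image _)).measure_ne_top
  refine ⟨k, hk, volume.real (convexHull ℝ S'), ?_, ?_, ?_⟩
  · have hle := card_polarVertices_le h0' hvol hN hS'
      (U := U.image ν) (Finset.forall_mem_image.2 fun u hu =>
        IsPolarVertex.image_vecMul hinj ((hBν u hu).symm ▸ hU u hu))
    rwa [Finset.card_image_of_injOn hν_inj, Fintype.card_fin] at hle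
  · have hle := card_mul_measureReal_convexHull_le (hfin.image (· ᵥ* B)) hR
      (Finset.forall_mem_image.2 hy) (by rwa [Finset.coe_image]) (forall_mem_image.2 fun x hx =>
        Finset.forall_mem_image.2 fun u hu => by
          rw [← dotProduct_mulVec, hBy u hu]; exact hbound u hu x hx)
    rwa [Finset.card_image_of_injOn hy_inj, Fintype.card_fin] at hle
  · rintro rfl
    exact measureReal_convexHull_le_image_vecMul hB hinj S

end SmallFacets

section FacetCount

/-- `α = (d - 1) / (d + 1)`, the exponent in Andrews' theorem. -/
def andrewsExponent (d : ℕ) : ℝ := ((d : ℝ) - 1) / (d + 1)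

/-- `R = V ^ (2 / (d + 1))`, the index at which facets of a polytope of volume `V` start to count
as large; it is chosen so that `V = R * V ^ α`. -/
def indexThreshold (d : ℕ) (V : ℝ) : ℝ := V ^ (2 / ((d : ℝ) + 1))

variable {d : ℕ} {V : ℝ}

lemma rpow_andrewsExponent_mul_indexThreshold (hV : 0 < V) :
    V ^ andrewsExponent d * indexThreshold d V = V := by
  rw [andrewsExponent, indexThreshold, ← Real.rpow_add hV, ← add_div]
  convert Real.rpow_one V using 2
  field_simp
  ring

lemma indexThreshold_pow_pred (hd : 1 ≤ d) (hV : 0 < V) :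
    indexThreshold d V ^ (d - 1) = (V ^ andrewsExponent d) ^ 2 := by
  rw [andrewsExponent, indexThreshold, ← Real.rpow_mul_natCast hV.le, ← Real.rpow_mul_natCast hV.le,
    Nat.cast_pred hd]
  congr 1
  push_cast
  ring

lemma indexThreshold_pow (hd : 1 ≤ d) (hV : 0 < V) :
    indexThreshold d V ^ d = V ^ andrewsExponent d * V := by
  obtain ⟨e, rfl⟩ := Nat.exists_eq_add_of_le' hd
  have h := indexThreshold_pow_pred hd hV
  rw [Nat.add_sub_cancel] at h
  rw [pow_succ, h, sq, mul_assoc, rpow_andrewsExponent_mul_indexThreshold hV]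

lemma one_le_indexThreshold (hV : 1 ≤ V) : 1 ≤ indexThreshold d V :=
  Real.one_le_rpow hV (by positivity)

lemma andrewsExponent_nonneg (hd : 1 ≤ d) : 0 ≤ andrewsExponent d :=
  div_nonneg (sub_nonneg.2 (by exact_mod_cast hd)) (by positivity)

lemma andrewsExponent_le_one (d : ℕ) : andrewsExponent d ≤ 1 :=
  div_le_one_of_le₀ (by linarith) (by positivity)

lemma le_rpow_andrewsExponent (hd : 1 ≤ d) (h0 : 0 ≤ V) (h1 : V ≤ 1) :
    V ≤ V ^ andrewsExponent d := by
  simpa using Real.rpow_le_rpow_of_exponent_ge' h0 h1 (andrewsExponent_nonneg hd)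
    (andrewsExponent_le_one d)

/-- Multiplying the two bounds on `c` eliminates `V'`, leaving `c ^ 2 ≤ (a * b * R) ^ k`. This is
good enough for `k < d`; for `k = d` the second bound alone suffices. -/
lemma le_mul_rpow_of_chart_bounds (hd : 1 ≤ d) (hV : 1 ≤ V) {k : ℕ} (hk : k ≤ d) {c V' a b : ℝ}
    (hc : 0 ≤ c) (ha : 1 ≤ a) (hb : 1 ≤ b) (hsmall : c ≤ a ^ k * V')
    (hlarge : c * V' ≤ (b * indexThreshold d V) ^ k) (hfull : k = d → V ≤ V') :
    c ≤ (a * b) ^ d * V ^ andrewsExponent d := by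
  have hV0 : 0 < V := by linarith
  have hab : 1 ≤ a * b := one_le_mul_of_one_le_of_one_le ha hb
  have hR := one_le_indexThreshold (d := d) hV
  rcases hk.eq_or_lt with rfl | hkd
  · refine le_of_mul_le_mul_right ?_ hV0
    calc c * V ≤ c * V' := by gcongr; exact hfull rfl
      _ ≤ (b * indexThreshold k V) ^ k := hlarge
      _ ≤ (a * b * indexThreshold k V) ^ k := by
        gcongr
        exact le_mul_of_one_le_left (by linarith) ha
      _ = (a * b) ^ k * V ^ andrewsExponent k * V := by
        rw [mul_pow, indexThreshold_pow hd hV0, mul_assoc]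
  · refine abs_le_of_sq_le_sq' ?_ (by positivity) |>.2
    calc c ^ 2 ≤ a ^ k * V' * c := by rw [sq]; gcongr
      _ = a ^ k * (c * V') := by ring
      _ ≤ a ^ k * (b * indexThreshold d V) ^ k := by gcongr
      _ = (a * b * indexThreshold d V) ^ k := by rw [← mul_pow, mul_assoc]
      _ ≤ (a * b * indexThreshold d V) ^ (d - 1) := by
        gcongr
        · exact one_le_mul_of_one_le_of_one_le hab hR
        · omega
      _ = (a * b) ^ (d - 1) * (V ^ andrewsExponent d) ^ 2 := by
        rw [mul_pow, indexThreshold_pow_pred hd hV0]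
      _ ≤ (a * b) ^ (d * 2) * (V ^ andrewsExponent d) ^ 2 := by
        gcongr
        omega
      _ = ((a * b) ^ d * V ^ andrewsExponent d) ^ 2 := by rw [mul_pow _ _ 2, ← pow_mul]

variable {S : Set (Fin d → ℝ)} {N : ℕ} {C : ℝ} {U : Finset (Fin d → ℝ)}

lemma card_le_of_indexThreshold_le_abs_det (h0 : 0 ∈ convexHull ℝ S)
    (hvol : volume (convexHull ℝ S) ≠ ⊤) (hV : 0 < volume.real (convexHull ℝ S))
    {t : (Fin d → ℝ) → Matrix (Fin d) (Fin d) ℝ} (ht : ∀ u ∈ U, IsFacetFrame S u (t u))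
    (hlarge : ∀ u ∈ U, indexThreshold d (volume.real (convexHull ℝ S)) ≤ |(t u).det|) :
    U.card ≤ ((d : ℝ) + 1) ^ d * volume.real (convexHull ℝ S) ^ andrewsExponent d := by
  have hR : 0 < indexThreshold d (volume.real (convexHull ℝ S)) := Real.rpow_pos_of_pos hV _
  refine le_of_mul_le_mul_right ?_ hR
  rw [mul_assoc, rpow_andrewsExponent_mul_indexThreshold hV, ← nsmul_eq_mul]
  simpa using (Finset.card_nsmul_le_sum U _ _ hlarge).trans (sum_abs_det_le h0 hvol ht)

lemma card_le_of_abs_det_le_indexThreshold (hd : 1 ≤ d) (hfin : S.Finite) (h0 : 0 ∈ convexHull ℝ S)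
    (hN : 0 < N) (hS : ∀ x ∈ S, N • x ∈ intLattice (Fin d)) {o : Fin d → ℝ}
    (hSo : ∀ x ∈ S, x + o ∈ intLattice (Fin d)) (hC : 1 ≤ C)
    (hU : ∀ u ∈ U, IsPolarVertex S u) (hbound : ∀ u ∈ U, ∀ x ∈ S, |x ⬝ᵥ u| ≤ C)
    (hV : 1 ≤ volume.real (convexHull ℝ S))
    {t : (Fin d → ℝ) → Matrix (Fin d) (Fin d) ℝ} (ht : ∀ u ∈ U, IsFacetFrame S u (t u))
    (hsmall : ∀ u ∈ U, |(t u).det| ≤ indexThreshold d (volume.real (convexHull ℝ S))) :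
    U.card ≤ (4 * N * C * (d + 1) ^ 2) ^ d * volume.real (convexHull ℝ S) ^ andrewsExponent d := by
  have hR := one_le_indexThreshold (d := d) hV
  obtain ⟨k, hk, V', hcard, hmul, hfull⟩ := exists_card_polarVertices_le hfin h0 hN hS hU
    (fun u hu => abs_pos.2 (ht u hu).det_ne_zero)
    (fun u hu => abs_det_smul_mem_intLattice (fun i => hSo _ ((ht u hu).row_mem i))
      (ht u hu).mulVec_eq_one)
    (R := C * indexThreshold d (volume.real (convexHull ℝ S))) (by positivity) fun u hu x hx => by
      rw [dotProduct_smul, smul_eq_mul, abs_mul, abs_abs, mul_comm]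
      gcongr
      exacts [hbound u hu x hx, hsmall u hu]
  have hk' : (k : ℝ) ≤ d := by exact_mod_cast hk
  have hV' : 0 ≤ V' :=
    (mul_nonneg_iff_of_pos_left (by positivity)).1 (U.card.cast_nonneg.trans hcard)
  convert le_mul_rpow_of_chart_bounds hd hV hk U.card.cast_nonneg (a := N * (d + 1))
    (b := 4 * (d + 1) * C) ?_ ?_ ?_ ?_ hfull using 3
  · ring
  · have : (1 : ℝ) ≤ N := by exact_mod_cast hN
    nlinarith [d.cast_nonneg (α := ℝ)]
  · nlinarith [d.cast_nonneg (α := ℝ)]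
  · exact hcard.trans (by gcongr)
  · refine hmul.trans ?_
    rw [mul_assoc (4 * _)]
    gcongr

/-- Facets of large index are few because their cells are disjoint; those of small index have
normals with small integral multiples. -/
lemma card_polarVertices_le_mul_rpow_of_one_le (hd : 1 ≤ d) (hfin : S.Finite)
    (h0 : 0 ∈ convexHull ℝ S) (hN : 0 < N) (hS : ∀ x ∈ S, N • x ∈ intLattice (Fin d))
    {o : Fin d → ℝ} (hSo : ∀ x ∈ S, x + o ∈ intLattice (Fin d)) (hC : 1 ≤ C)
    (hU : ∀ u ∈ U, IsPolarVertex S u) (hbound : ∀ u ∈ U, ∀ x ∈ S, |x ⬝ᵥ u| ≤ C)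
    (hV : 1 ≤ volume.real (convexHull ℝ S)) :
    U.card ≤ 2 * (4 * N * C * (d + 1) ^ 2) ^ d *
      volume.real (convexHull ℝ S) ^ andrewsExponent d := by
  choose! t ht using fun u hu => (hU u hu).exists_isFacetFrame
  let large (u : Fin d → ℝ) : Prop :=
    indexThreshold d (volume.real (convexHull ℝ S)) ≤ |(t u).det|
  have hlarge : ((U.filter large).card : ℝ) ≤
      ((d : ℝ) + 1) ^ d * volume.real (convexHull ℝ S) ^ andrewsExponent d :=
    card_le_of_indexThreshold_le_abs_det h0
      (Set.Finite.isCompact_convexHull (𝕜 := ℝ) hfin).measure_ne_top (by linarith)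
      (fun u hu => ht u (Finset.mem_filter.1 hu).1) fun u hu => (Finset.mem_filter.1 hu).2
  have hsmall : ((U.filter (¬ large ·)).card : ℝ) ≤
      (4 * N * C * (d + 1) ^ 2) ^ d * volume.real (convexHull ℝ S) ^ andrewsExponent d :=
    card_le_of_abs_det_le_indexThreshold hd hfin h0 hN hS hSo hC
      (fun u hu => hU u (Finset.mem_filter.1 hu).1)
      (fun u hu => hbound u (Finset.mem_filter.1 hu).1) hV
      (fun u hu => ht u (Finset.mem_filter.1 hu).1)
      fun u hu => (not_le.1 (Finset.mem_filter.1 hu).2).le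
  have hconst : (d + 1 : ℝ) ≤ 4 * N * C * (d + 1) ^ 2 := calc
    (d + 1 : ℝ) = 1 * ((1 : ℕ) : ℝ) * 1 * (d + 1) ^ 1 := by simp
    _ ≤ 4 * N * C * (d + 1) ^ 2 := by gcongr <;> first | exact hN | norm_num
  have hpow := mul_le_mul_of_nonneg_right (pow_le_pow_left₀ (by positivity) hconst d)
    (Real.rpow_nonneg (zero_le_one.trans hV) (andrewsExponent d))
  rw [← Finset.card_filter_add_card_filter_not large, Nat.cast_add]
  linarith

theorem card_polarVertices_le_mul_rpow (hd : 1 ≤ d) (hfin : S.Finite) (h0 : 0 ∈ convexHull ℝ S)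
    (hN : 0 < N) (hS : ∀ x ∈ S, N • x ∈ intLattice (Fin d)) {o : Fin d → ℝ}
    (hSo : ∀ x ∈ S, x + o ∈ intLattice (Fin d)) (hC : 1 ≤ C)
    (hU : ∀ u ∈ U, IsPolarVertex S u) (hbound : ∀ u ∈ U, ∀ x ∈ S, |x ⬝ᵥ u| ≤ C) :
    U.card ≤ 2 * (4 * N * C * (d + 1) ^ 2) ^ d *
      volume.real (convexHull ℝ S) ^ andrewsExponent d := by
  rcases le_total 1 (volume.real (convexHull ℝ S)) with hV | hV
  · exact card_polarVertices_le_mul_rpow_of_one_le hd hfin h0 hN hS hSo hC hU hbound hV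
  · have hcard := card_polarVertices_le h0
      (Set.Finite.isCompact_convexHull (𝕜 := ℝ) hfin).measure_ne_top hN hS hU
    rw [Fintype.card_fin] at hcard
    have hconst : (N * (d + 1) : ℝ) ≤ 4 * N * C * (d + 1) ^ 2 := calc
      (N * (d + 1) : ℝ) = 1 * N * 1 * (d + 1) ^ 1 := by ring
      _ ≤ 4 * N * C * (d + 1) ^ 2 := by gcongr <;> norm_num
    calc (U.card : ℝ) ≤ 1 * (N * (d + 1)) ^ d * volume.real (convexHull ℝ S) := by rwa [one_mul]
      _ ≤ 2 * (4 * N * C * (d + 1) ^ 2) ^ d * volume.real (convexHull ℝ S) ^ andrewsExponent d := by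
        gcongr
        · norm_num
        · exact le_rpow_andrewsExponent hd measureReal_nonneg hV

end FacetCount

section Separation

variable {n : Type*} [Fintype n] {S : Set (n → ℝ)}

/-- The one-sided polar of `S`. Its extreme points are polar vertices of `S`, and provide the
separating facets. -/
def polarSet (S : Set (n → ℝ)) : Set (n → ℝ) := {u | ∀ x ∈ S, x ⬝ᵥ u ≤ 1}

lemma isClosed_polarSet (S : Set (n → ℝ)) : IsClosed (polarSet S) := by
  simp only [polarSet, ofPred_forall]
  exact isClosed_biInter fun x _ => isClosed_le (by fun_prop) continuous_const

lemma convex_polarSet (S : Set (n → ℝ)) : Convex ℝ (polarSet S) := by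
  simp only [polarSet, ofPred_forall]
  exact convex_iInter₂ fun x _ => convex_halfSpace_le (dotProductBilin ℝ ℝ x).isLinear 1

lemma isCompact_polarSet (hspan : Submodule.span ℝ S = ⊤) {C : ℝ}
    (hC : ∀ u ∈ polarSet S, ∀ x ∈ S, |x ⬝ᵥ u| ≤ C) : IsCompact (polarSet S) := by
  classical
  obtain ⟨q, hq, hdet⟩ := exists_rows_mem_det_ne_zero hspan
  have hbox : IsCompact (q⁻¹.mulVec '' Icc (fun _ => -C) fun _ => C) :=
    isCompact_Icc.image (by fun_prop)
  refine hbox.of_isClosed_subset (isClosed_polarSet S) fun u hu => ⟨q *ᵥ u, ?_, ?_⟩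
  · exact ⟨fun i => (abs_le.1 (hC u hu _ (hq i))).1, fun i => (abs_le.1 (hC u hu _ (hq i))).2⟩
  · rw [mulVec_mulVec, nonsing_inv_mul _ hdet.isUnit, one_mulVec]

lemma eventually_add_smul_mem_polarSet (hfin : S.Finite) {u z : n → ℝ} (hu : u ∈ polarSet S)
    (hz : ∀ x ∈ S, x ⬝ᵥ u = 1 → x ⬝ᵥ z = 0) : ∀ᶠ ε : ℝ in nhds 0, u + ε • z ∈ polarSet S := by
  refine (eventually_all_finite hfin).2 fun x hx => ?_
  simp only [dotProduct_add, dotProduct_smul, smul_eq_mul]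
  rcases (hu x hx).eq_or_lt with heq | hlt
  · simp [heq, hz x hx heq]
  · have hcont : Continuous fun ε : ℝ => x ⬝ᵥ u + ε * (x ⬝ᵥ z) := by fun_prop
    exact (hcont.continuousAt.eventually_lt_const (by simpa using hlt)).mono fun _ => le_of_lt

lemma isPolarVertex_of_mem_extremePoints (hfin : S.Finite) {u : n → ℝ}
    (hu : u ∈ extremePoints ℝ (polarSet S)) : IsPolarVertex S u := by
  refine ⟨hu.1, span_eq_top_iff_forall_dotProduct.2 fun z hz => ?_⟩
  have hadd := eventually_add_smul_mem_polarSet hfin hu.1 fun x hx hxu => hz x ⟨hx, hxu⟩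
  have hsub := (continuous_neg.tendsto' (0 : ℝ) 0 neg_zero).eventually hadd
  obtain ⟨ε, ⟨hε_add, hε_sub⟩, hε : ε ≠ 0⟩ :=
    (((hadd.and hsub).filter_mono nhdsWithin_le_nhds).and
      (self_mem_nhdsWithin : {0}ᶜ ∈ nhdsWithin (0 : ℝ) {0}ᶜ)).exists
  have hseg : u ∈ openSegment ℝ (u + ε • z) (u + (-ε) • z) :=
    ⟨1 / 2, 1 / 2, by norm_num, by norm_num, by norm_num, by module⟩
  have hfix : u + ε • z = u := hu.2 hε_add hε_sub hseg
  exact (smul_eq_zero.1 (left_eq_add.1 hfix.symm)).resolve_left hε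

lemma exists_mem_polarSet_one_lt (hfin : S.Finite) (h0 : 0 ∈ convexHull ℝ S) {p : n → ℝ}
    (hp : p ∉ convexHull ℝ S) : ∃ u ∈ polarSet S, 1 < p ⬝ᵥ u := by
  classical
  obtain ⟨f, c, hS, hpc⟩ := geometric_hahn_banach_closed_point (convex_convexHull ℝ S)
    (hfin.isClosed_convexHull ℝ) hp
  have hc : 0 < c := by simpa using hS 0 h0
  have hf (x : n → ℝ) : x ⬝ᵥ (c⁻¹ • fun i => f (Pi.single i 1)) = f x / c := by
    rw [dotProduct_smul, smul_eq_mul, div_eq_inv_mul]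
    congr 1
    conv_rhs => rw [pi_eq_sum_univ' x, map_sum]
    simp [dotProduct]
  refine ⟨c⁻¹ • fun i => f (Pi.single i 1), fun x hx => ?_, ?_⟩
  · rw [hf, div_le_one hc]
    exact (hS x (subset_convexHull ℝ S hx)).le
  · rwa [hf, one_lt_div hc]

theorem exists_isPolarVertex_one_lt (hfin : S.Finite) (h0 : 0 ∈ convexHull ℝ S)
    (hspan : Submodule.span ℝ S = ⊤) {C : ℝ} (hC : ∀ u ∈ polarSet S, ∀ x ∈ S, |x ⬝ᵥ u| ≤ C)
    {p : n → ℝ} (hp : p ∉ convexHull ℝ S) : ∃ u, IsPolarVertex S u ∧ 1 < p ⬝ᵥ u := by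
  obtain ⟨u, hu, hpu⟩ := exists_mem_polarSet_one_lt hfin h0 hp
  by_contra! hle
  have hhalf : extremePoints ℝ (polarSet S) ⊆ {v | p ⬝ᵥ v ≤ 1} := fun v hv =>
    hle v (isPolarVertex_of_mem_extremePoints hfin hv)
  have hsub : closure (convexHull ℝ (extremePoints ℝ (polarSet S))) ⊆ {v | p ⬝ᵥ v ≤ 1} :=
    closure_minimal
      (convexHull_min hhalf (convex_halfSpace_le (dotProductBilin ℝ ℝ p).isLinear 1))
      (isClosed_le (by fun_prop) continuous_const)
  rw [closure_convexHull_extremePoints (isCompact_polarSet hspan hC) (convex_polarSet S)] at hsub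
  exact (hsub hu).not_gt hpu

end Separation

section Centre

lemma vectorSpan_le_span_vadd {V : Type*} [AddCommGroup V] [Module ℝ V] (o : V) (F : Set V) :
    vectorSpan ℝ F ≤ Submodule.span ℝ (o +ᵥ F) := by
  refine Submodule.span_le.2 ?_
  rintro _ ⟨x, hx, y, hy, rfl⟩
  have h := sub_mem (Submodule.subset_span (R := ℝ) (vadd_mem_vadd_set (a := o) hx))
    (Submodule.subset_span (vadd_mem_vadd_set hy))
  rwa [vadd_eq_add, vadd_eq_add, add_sub_add_left_eq_sub] at h

variable {n : Type*} [Fintype n]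

/-- The values `0` and `β i` have mean `σ`, and none exceeds `σ + 1`. -/
lemma abs_le_of_forall_sub_mean_le {β : n → ℝ} {σ : ℝ} (hσ : (Fintype.card n + 1) * σ = ∑ i, β i)
    (h0 : -σ ≤ 1) (h : ∀ i, β i - σ ≤ 1) (i : n) : |β i| ≤ Fintype.card n + 1 := by
  have hnonneg (i) : 0 ≤ 1 + σ - β i := by linarith [h i]
  have hsum : ∑ i, (1 + σ - β i) = Fintype.card n - σ := by
    rw [Finset.sum_sub_distrib, ← hσ, Finset.sum_const, Finset.card_univ, nsmul_eq_mul]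
    ring
  have hsingle := Finset.single_le_sum (fun i _ => hnonneg i) (Finset.mem_univ i)
  have hσ_le := Finset.sum_nonneg fun i (_ : i ∈ Finset.univ) => hnonneg i
  rw [hsum] at hsingle hσ_le
  exact abs_le.2 ⟨by linarith, by linarith [h i]⟩

lemma abs_dotProduct_sub_mean_le {β : n → ℝ} {σ : ℝ} (hσ : (Fintype.card n + 1) * σ = ∑ i, β i)
    (h0 : -σ ≤ 1) (h : ∀ i, β i - σ ≤ 1) {a : n → ℝ} (ha : ∀ i, |a i| ≤ 1) :
    |a ⬝ᵥ β - σ| ≤ Fintype.card n * (Fintype.card n + 2) := by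
  have hβ := abs_le_of_forall_sub_mean_le hσ h0 h
  have hmean : |σ| ≤ Fintype.card n := by
    refine le_of_mul_le_mul_left ?_ (by positivity : (0 : ℝ) < Fintype.card n + 1)
    calc (Fintype.card n + 1) * |σ| = |∑ i, β i| := by
          rw [← hσ, abs_mul, abs_of_nonneg (by positivity : (0 : ℝ) ≤ Fintype.card n + 1)]
      _ ≤ ∑ i, |β i| := Finset.abs_sum_le_sum_abs _ _
      _ ≤ ∑ _i : n, (Fintype.card n + 1 : ℝ) := Finset.sum_le_sum fun i _ => hβ i
      _ = (Fintype.card n + 1) * Fintype.card n := by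
        rw [Finset.sum_const, Finset.card_univ, nsmul_eq_mul, mul_comm]
  have hdot : |a ⬝ᵥ β| ≤ Fintype.card n * (Fintype.card n + 1) := calc
    |a ⬝ᵥ β| ≤ ∑ i, |a i * β i| := Finset.abs_sum_le_sum_abs _ _
    _ ≤ ∑ _i : n, (Fintype.card n + 1 : ℝ) := Finset.sum_le_sum fun i _ => by
      rw [abs_mul]
      exact (mul_le_of_le_one_left (abs_nonneg _) (ha i)).trans (hβ i)
    _ = Fintype.card n * (Fintype.card n + 1) := by
      rw [Finset.sum_const, Finset.card_univ, nsmul_eq_mul]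
  linarith [abs_sub (a ⬝ᵥ β) σ]

/-- `-o` is the barycentre of `0` and of the rows of a matrix in `Y` of maximal determinant. -/
lemma exists_centre_of_zero_mem {Y : Set (n → ℝ)} (hfin : Y.Finite) (h0 : 0 ∈ Y)
    (hY : Y ⊆ intLattice n) (hspan : Submodule.span ℝ Y = ⊤) :
    ∃ o : n → ℝ, 0 ∈ convexHull ℝ (o +ᵥ Y) ∧
      (∀ x ∈ o +ᵥ Y, (Fintype.card n + 1) • x ∈ intLattice n) ∧
      ∀ u ∈ polarSet (o +ᵥ Y), ∀ x ∈ o +ᵥ Y,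
        |x ⬝ᵥ u| ≤ Fintype.card n * (Fintype.card n + 2) := by
  classical
  obtain ⟨b, hb, -, hcoord⟩ := exists_rows_forall_eq_vecMul_abs_le_one hfin hspan
  have hcard : (Fintype.card n + 1 : ℝ) ≠ 0 := by positivity
  let p : n → ℝ := ((Fintype.card n + 1 : ℝ)⁻¹ • 1) ᵥ* b
  have hp_smul : (Fintype.card n + 1 : ℝ) • p = 1 ᵥ* b := by
    rw [← smul_vecMul, smul_inv_smul₀ hcard]
  refine ⟨-p, ?_, ?_, ?_⟩
  · have hsum : ∑ _i : n, (Fintype.card n + 1 : ℝ)⁻¹ ≤ 1 := by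
      rw [Finset.sum_const, Finset.card_univ, nsmul_eq_mul, ← div_eq_mul_inv]
      exact div_le_one_of_le₀ (by linarith) (by positivity)
    have hp : p ∈ convexHull ℝ Y := by
      simpa [p, vecMul_eq_sum] using sum_smul_mem_of_zero_mem (convex_convexHull ℝ Y)
        (subset_convexHull ℝ Y h0) (fun _ => by positivity) hsum
        fun i => subset_convexHull ℝ Y (hb i)
    rw [convexHull_vadd]
    exact ⟨p, hp, neg_add_cancel p⟩
  · rintro _ ⟨y, hy, rfl⟩
    change (Fintype.card n + 1) • (-p + y) ∈ intLattice n
    rw [smul_add, smul_neg, ← Nat.cast_smul_eq_nsmul ℝ _ p, Nat.cast_succ, hp_smul, vecMul_eq_sum]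
    exact add_mem (neg_mem (sum_mem fun i _ => by simpa using hY (hb i))) (nsmul_mem (hY hy) _)
  · intro u hu
    have hu (y) (hy : y ∈ Y) : y ⬝ᵥ u - p ⬝ᵥ u ≤ 1 := by
      rw [← sub_dotProduct, sub_eq_neg_add]
      exact hu _ (vadd_mem_vadd_set hy)
    rintro _ ⟨y, hy, rfl⟩
    obtain ⟨a, ha, rfl⟩ := hcoord y hy
    change |(-p + a ᵥ* b) ⬝ᵥ u| ≤ _
    rw [← sub_eq_neg_add, sub_dotProduct, ← dotProduct_mulVec]
    refine abs_dotProduct_sub_mean_le ?_ (by simpa using hu 0 h0) (fun i => hu _ (hb i)) ha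
    rw [← smul_eq_mul, ← smul_dotProduct, hp_smul, ← dotProduct_mulVec, one_dotProduct]
    rfl

theorem exists_centre {F : Set (n → ℝ)} (hfin : F.Finite) (hne : F.Nonempty)
    (hF : F ⊆ intLattice n) (hspan : vectorSpan ℝ F = ⊤) :
    ∃ o : n → ℝ, 0 ∈ convexHull ℝ (o +ᵥ F) ∧
      (∀ x ∈ o +ᵥ F, (Fintype.card n + 1) • x ∈ intLattice n) ∧
      ∀ u ∈ polarSet (o +ᵥ F), ∀ x ∈ o +ᵥ F,
        |x ⬝ᵥ u| ≤ Fintype.card n * (Fintype.card n + 2) := by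
  obtain ⟨v, hv⟩ := hne
  have hY : -v +ᵥ F ⊆ intLattice n := by
    rintro _ ⟨x, hx, rfl⟩
    exact add_mem (neg_mem (hF hv)) (hF hx)
  obtain ⟨o, ho⟩ := exists_centre_of_zero_mem hfin.vadd_set ⟨v, hv, neg_add_cancel v⟩ hY
    (top_unique (hspan ▸ vectorSpan_le_span_vadd (-v) F))
  exact ⟨o + -v, by rwa [add_vadd]⟩

end Centre

section Vertices

variable {V : Type*} [AddCommGroup V]

/-- The points `2v + w` for distinct `v, w ∈ X`. If `X` is the vertex set of `P`, their hull is
`3 • P` with all its vertices cut off. -/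
def cutPoints (X : Set V) : Set V := (fun p : V × V => p.1 + p.1 + p.2) '' X.offDiag

lemma finite_cutPoints {X : Set V} (hX : X.Finite) : (cutPoints X).Finite := hX.offDiag.image _

lemma add_add_mem_cutPoints {X : Set V} {v w : V} (hv : v ∈ X) (hw : w ∈ X) (hvw : v ≠ w) :
    v + v + w ∈ cutPoints X := ⟨(v, w), ⟨hv, hw, hvw⟩, rfl⟩

variable [Module ℝ V]

lemma vectorSpan_cutPoints (X : Set V) : vectorSpan ℝ X ≤ vectorSpan ℝ (cutPoints X) := by
  refine Submodule.span_le.2 ?_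
  rintro _ ⟨v, hv, w, hw, rfl⟩
  rcases eq_or_ne v w with rfl | hvw
  · simp
  · have h := vsub_mem_vectorSpan ℝ (add_add_mem_cutPoints hv hw hvw)
      (add_add_mem_cutPoints hw hv hvw.symm)
    rwa [vsub_eq_sub, show v + v + w - (w + w + v) = v - w by abel] at h

lemma nonempty_cutPoints [Nontrivial V] {X : Set V} (hX : vectorSpan ℝ X = ⊤) :
    (cutPoints X).Nonempty := by
  refine (offDiag_nonempty.2 (not_subsingleton_iff.1 fun hsub => ?_)).image _
  exact bot_ne_top ((vectorSpan_of_subsingleton ℝ hsub).symm.trans hX)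

variable {P : Set V}

lemma convexHull_cutPoints_subset (hP : Convex ℝ P) {v : V} (hv : v ∈ extremePoints ℝ P) :
    convexHull ℝ (cutPoints (extremePoints ℝ P)) ⊆ (3 : ℝ) • (P \ {v}) := by
  refine convexHull_min ?_ ((hP.mem_extremePoints_iff_convex_sdiff.1 hv).2.smul 3)
  rintro _ ⟨⟨a, b⟩, ⟨ha : a ∈ _, hb : b ∈ _, hab : a ≠ b⟩, rfl⟩
  refine ⟨(2 / 3 : ℝ) • a + (1 / 3 : ℝ) • b,
    ⟨hP ha.1 hb.1 (by norm_num) (by norm_num) (by norm_num), fun h => hab ?_⟩, by module⟩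
  have hmem : v ∈ openSegment ℝ a b := ⟨2 / 3, 1 / 3, by norm_num, by norm_num, by norm_num, h⟩
  obtain ⟨rfl, rfl⟩ := (mem_extremePoints.1 hv).2 a ha.1 b hb.1 hmem
  rfl

lemma three_smul_notMem_convexHull_cutPoints (hP : Convex ℝ P) {v : V}
    (hv : v ∈ extremePoints ℝ P) :
    (3 : ℝ) • v ∉ convexHull ℝ (cutPoints (extremePoints ℝ P)) := fun h => by
  obtain ⟨y, hy, hyv⟩ := convexHull_cutPoints_subset hP hv h
  exact hy.2 (smul_right_injective V (three_ne_zero (α := ℝ)) hyv)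

variable {n : Type*} [Fintype n]

/-- Each vertex `v` is assigned a facet of the hull of the cut points that separates it from `3v`.
No facet serves two vertices `v, v'`, since `2v + v'` lies on its inner side. -/
lemma exists_card_extremePoints_eq_card_polarVertices {P : Set (n → ℝ)} (hP : Convex ℝ P)
    (hfin : (extremePoints ℝ P).Finite) {o : n → ℝ}
    (h0 : 0 ∈ convexHull ℝ (o +ᵥ cutPoints (extremePoints ℝ P)))
    (hspan : Submodule.span ℝ (o +ᵥ cutPoints (extremePoints ℝ P)) = ⊤)
    {C : ℝ} (hC : ∀ u ∈ polarSet (o +ᵥ cutPoints (extremePoints ℝ P)),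
      ∀ x ∈ o +ᵥ cutPoints (extremePoints ℝ P), |x ⬝ᵥ u| ≤ C) :
    ∃ U : Finset (n → ℝ), (∀ u ∈ U, IsPolarVertex (o +ᵥ cutPoints (extremePoints ℝ P)) u) ∧
      U.card = (extremePoints ℝ P).ncard := by
  have hsep (v) (hv : v ∈ extremePoints ℝ P) : ∃ u,
      IsPolarVertex (o +ᵥ cutPoints (extremePoints ℝ P)) u ∧ 1 < (o + (3 : ℝ) • v) ⬝ᵥ u := by
    refine exists_isPolarVertex_one_lt (finite_cutPoints hfin).vadd_set h0 hspan hC ?_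
    rw [convexHull_vadd, ← vadd_eq_add, vadd_mem_vadd_set_iff]
    exact three_smul_notMem_convexHull_cutPoints hP hv
  choose! u hu hlt using hsep
  have hinj : InjOn u (extremePoints ℝ P) := fun v hv w hw huv => by
    by_contra hvw
    have hle := (hu v hv).le_one _ (vadd_mem_vadd_set (add_add_mem_cutPoints hv hw hvw))
    have hv_lt := hlt v hv
    have hw_lt := hlt w hw
    rw [← huv] at hw_lt
    simp only [vadd_eq_add, add_dotProduct, smul_dotProduct, smul_eq_mul] at hle hv_lt hw_lt
    linarith
  refine ⟨(hfin.image u).toFinset, by simpa using hu, ?_⟩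
  rw [← ncard_eq_toFinset_card _ (hfin.image u), hinj.ncard_image]

end Vertices

section LatticePolytopes

lemma vectorSpan_eq_top_of_measure_pos {n : Type*} [Fintype n] {X : Set (n → ℝ)}
    (hX : 0 < volume.real (convexHull ℝ X)) : vectorSpan ℝ X = ⊤ := by
  have hspan : affineSpan ℝ X = ⊤ := by
    by_contra h
    have hzero : volume (convexHull ℝ X) = 0 :=
      measure_mono_null (convexHull_subset_affineSpan X) (Measure.addHaar_affineSubspace _ _ h)
    simp [measureReal_def, hzero] at hX
  rw [← direction_affineSpan, hspan, AffineSubspace.direction_top]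

lemma measureReal_convexHull_cutPoints_le {n : Type*} [Fintype n] {P : Set (n → ℝ)}
    (hP : Convex ℝ P) (hvol : volume P ≠ ⊤) :
    volume.real (convexHull ℝ (cutPoints (extremePoints ℝ P))) ≤
      3 ^ Fintype.card n * volume.real P := by
  have hsub : convexHull ℝ (cutPoints (extremePoints ℝ P)) ⊆ (3 : ℝ) • P := by
    refine convexHull_min ?_ (hP.smul 3)
    rintro _ ⟨⟨a, b⟩, ⟨ha : a ∈ _, hb : b ∈ _, -⟩, rfl⟩
    exact ⟨(2 / 3 : ℝ) • a + (1 / 3 : ℝ) • b,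
      hP ha.1 hb.1 (by norm_num) (by norm_num) (by norm_num), by module⟩
  have hsmul : volume ((3 : ℝ) • P) = ENNReal.ofReal (3 ^ Fintype.card n) * volume P := by
    rw [Measure.addHaar_smul, finrank_fintype_fun_eq_card, abs_of_pos (by positivity)]
  calc volume.real (convexHull ℝ (cutPoints (extremePoints ℝ P))) ≤ volume.real ((3 : ℝ) • P) :=
        measureReal_mono hsub (hsmul ▸ ENNReal.mul_ne_top ENNReal.ofReal_ne_top hvol)
    _ = 3 ^ Fintype.card n * volume.real P := by
      rw [measureReal_def, hsmul, ENNReal.toReal_mul, ENNReal.toReal_ofReal (by positivity)]; rfl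

lemma cutPoints_subset_intLattice {n : Type*} [Finite n] {X : Set (n → ℝ)}
    (hX : X ⊆ intLattice n) : cutPoints X ⊆ intLattice n := by
  rintro _ ⟨⟨a, b⟩, ⟨ha : a ∈ X, hb : b ∈ X, -⟩, rfl⟩
  exact add_mem (add_mem (hX ha) (hX ha)) (hX hb)

lemma convexHull_extremePoints_convexHull {n : Type*} [Finite n] {F : Set (n → ℝ)}
    (hF : F.Finite) : convexHull ℝ (extremePoints ℝ (convexHull ℝ F)) = convexHull ℝ F := by
  cases nonempty_fintype n
  rw [← ((hF.subset extremePoints_convexHull_subset).isClosed_convexHull ℝ).closure_eq,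
    closure_convexHull_extremePoints (Set.Finite.isCompact_convexHull (𝕜 := ℝ) hF)
      (convex_convexHull ℝ F)]

variable {d : ℕ}

/-- The constant `c_d` obtained for Andrews' theorem. The facet count is applied to the cut-off
polytope, whose volume is at most `3 ^ d * V`, with the constants of `exists_centre`. -/
def andrewsConstant (d : ℕ) : ℝ :=
  2 * (4 * (d + 1) * (d * (d + 2)) * (d + 1) ^ 2) ^ d * (3 ^ d) ^ andrewsExponent d

lemma andrewsConstant_pos (hd : 1 ≤ d) : 0 < andrewsConstant d := by
  have : (0 : ℝ) < d := by exact_mod_cast hd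
  unfold andrewsConstant
  positivity

lemma ncard_extremePoints_le_mul_rpow_cutPoints (hd : 1 ≤ d) {P : Set (Fin d → ℝ)}
    (hP : Convex ℝ P) (hfin : (extremePoints ℝ P).Finite)
    (hint : extremePoints ℝ P ⊆ intLattice (Fin d))
    (hspan : vectorSpan ℝ (extremePoints ℝ P) = ⊤) :
    (extremePoints ℝ P).ncard ≤ 2 * (4 * (d + 1) * (d * (d + 2)) * (d + 1) ^ 2) ^ d *
      volume.real (convexHull ℝ (cutPoints (extremePoints ℝ P))) ^ andrewsExponent d := by
  have : Nonempty (Fin d) := ⟨⟨0, hd⟩⟩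
  have hcut_fin := finite_cutPoints hfin
  have hcut_int := cutPoints_subset_intLattice hint
  have hcut_span : vectorSpan ℝ (cutPoints (extremePoints ℝ P)) = ⊤ :=
    top_unique (hspan ▸ vectorSpan_cutPoints _)
  obtain ⟨o, h0, hscale, hbound⟩ :=
    exists_centre hcut_fin (nonempty_cutPoints hspan) hcut_int hcut_span
  rw [Fintype.card_fin] at hscale hbound
  obtain ⟨U, hU, hcard⟩ := exists_card_extremePoints_eq_card_polarVertices hP hfin h0
    (top_unique (hcut_span ▸ vectorSpan_le_span_vadd o _)) hbound
  have hshift (x) (hx : x ∈ o +ᵥ cutPoints (extremePoints ℝ P)) :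
      x + -o ∈ intLattice (Fin d) := by
    obtain ⟨y, hy, rfl⟩ := hx
    simpa using hcut_int hy
  have hC : (1 : ℝ) ≤ d * (d + 2) := by
    have hd' : (1 : ℝ) ≤ d := by exact_mod_cast hd
    nlinarith
  have hcount := card_polarVertices_le_mul_rpow hd hcut_fin.vadd_set h0 d.succ_pos hscale hshift
    hC hU fun u hu => hbound u (hU u hu).le_one
  rwa [hcard, convexHull_vadd, measureReal_def, measure_vadd, Nat.cast_succ] at hcount

theorem ncard_extremePoints_le (hd : 1 ≤ d) {F : Set (Fin d → ℝ)} (hfin : F.Finite)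
    (hF : F ⊆ intLattice (Fin d)) (hV : 0 < volume.real (convexHull ℝ F)) :
    (extremePoints ℝ (convexHull ℝ F)).ncard ≤
      andrewsConstant d * volume.real (convexHull ℝ F) ^ andrewsExponent d := by
  have hX : extremePoints ℝ (convexHull ℝ F) ⊆ F := extremePoints_convexHull_subset
  have hspan : vectorSpan ℝ (extremePoints ℝ (convexHull ℝ F)) = ⊤ :=
    vectorSpan_eq_top_of_measure_pos (by rwa [convexHull_extremePoints_convexHull hfin])
  have hvol := measureReal_convexHull_cutPoints_le (convex_convexHull ℝ F)
    (Set.Finite.isCompact_convexHull (𝕜 := ℝ) hfin).measure_ne_top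
  rw [Fintype.card_fin] at hvol
  refine (ncard_extremePoints_le_mul_rpow_cutPoints hd (convex_convexHull ℝ F) (hfin.subset hX)
    (hX.trans hF) hspan).trans ?_
  rw [andrewsConstant, mul_assoc _ (_ ^ andrewsExponent d), ← Real.mul_rpow (by positivity) hV.le]
  gcongr
  exact andrewsExponent_nonneg hd

end LatticePolytopes

section EuclideanSpace

variable {d : ℕ}

lemma convexHull_image_ofLp (F : Set (E d)) :
    convexHull ℝ (WithLp.ofLp '' F) = WithLp.ofLp '' convexHull ℝ F :=
  ((WithLp.linearEquiv 2 ℝ (Fin d → ℝ)).toLinearMap.image_convexHull F).symm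

lemma measureReal_convexHull_image_ofLp {F : Set (E d)} (hF : F.Finite) :
    volume.real (convexHull ℝ (WithLp.ofLp '' F)) = volume.real (convexHull ℝ F) := by
  have hmeas : MeasurableSet (convexHull ℝ (WithLp.ofLp '' F)) :=
    ((hF.image _).isClosed_convexHull ℝ).measurableSet
  rw [measureReal_def, measureReal_def, ← (PiLp.volume_preserving_ofLp (Fin d)).measure_preimage
    hmeas.nullMeasurableSet, convexHull_image_ofLp,
    preimage_image_eq _ (WithLp.ofLp_injective 2)]

lemma ncard_extremePoints_convexHull_image_ofLp (F : Set (E d)) :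
    (extremePoints ℝ (convexHull ℝ (WithLp.ofLp '' F))).ncard = numVertices d (convexHull ℝ F) := by
  have himage := image_extremePoints (WithLp.linearEquiv 2 ℝ (Fin d → ℝ)) (convexHull ℝ F)
  rw [convexHull_image_ofLp, numVertices, ← ncard_image_of_injective _ (WithLp.ofLp_injective 2)]
  exact congrArg ncard himage.symm

lemma image_ofLp_subset_intLattice {F : Set (E d)} (hF : F ⊆ intPoints d) :
    WithLp.ofLp '' F ⊆ intLattice (Fin d) := by
  rintro _ ⟨x, hx, rfl⟩
  exact mem_intLattice.2 fun i => (hF hx i).imp fun _ h => h.symm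

end EuclideanSpace

end LatticePolytope

open LatticePolytope

/-- Andrews' theorem: a lattice polytope in `ℝ^d` of positive volume `V` has at most
`c_d · V^{(d-1)/(d+1)}` vertices, with `c_d` depending only on `d`. -/
theorem andrews_lattice_polytope_vertex_bound (d : ℕ) (hd : 1 ≤ d) :
    ∃ c : ℝ, 0 < c ∧ ∀ F : Finset (E d), (↑F : Set (E d)) ⊆ intPoints d →
      0 < (volume (convexHull ℝ (↑F : Set (E d)))).toReal →
      (numVertices d (convexHull ℝ (↑F : Set (E d))) : ℝ) ≤
        c * ((volume (convexHull ℝ (↑F : Set (E d)))).toReal) ^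
          (((d : ℝ) - 1) / ((d : ℝ) + 1)) := by
  refine ⟨andrewsConstant d, andrewsConstant_pos hd, fun F hF hV => ?_⟩
  have hvol := measureReal_convexHull_image_ofLp F.finite_toSet
  have hbound := ncard_extremePoints_le hd (F.finite_toSet.image WithLp.ofLp)
    (image_ofLp_subset_intLattice hF) (hvol ▸ hV)
  rwa [ncard_extremePoints_convexHull_image_ofLp, hvol] at hbound
end
end
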